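/- The real number 2/5 is the least element of the set of all real numbers c such that every finite cubic simple graph G satisfies γ_r(G) ≤ c·|V(G)|. -/

import Mathlib

/-- `S` is a restrained dominating set of `G`: every vertex not in `S` has a
neighbor in `S` (domination) and also a neighbor not in `S` (restraint). -/
def IsRestrainedDomSet {V : Type*} (G : SimpleGraph V) (S : Set V) : Prop :=
  (∀ v ∉ S, ∃ u ∈ S, G.Adj v u) ∧ (∀ v ∉ S, ∃ u ∉ S, G.Adj v u)

/-- The restrained domination number of a finite graph: the minimum cardinality
of a restrained dominating set. -/
noncomputable def restrainedDominationNumber {V : Type*} [Fintype V] (G : SimpleGraph V) : ℕ :=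
  sInf {n : ℕ | ∃ S : Set V, IsRestrainedDomSet G S ∧ S.ncard = n}

/-!
Call `S` restrained if every vertex outside `S` has a neighbour outside `S`, and let `U` be the set
of vertices which `S` does not dominate. A restrained `S` extends to a restrained dominating set
with at most `|S| + |U|` vertices: each `v ∈ U` is dealt with by adding `v` or a leaf at `v` of the
graph induced outside `S`. It thus suffices to find a restrained `S` with `5 (|S| + |U|) ≤ 2 n`.

Choose `S` to minimise `|S| + |U|`, then `|S|`, and finally to maximise the number of edges inside
`S`. Then no local exchange of vertices can improve `S`, and this determines the surroundings of an
undominated vertex well enough for a discharging argument. Every private neighbour of `u ∈ S` (a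
vertex outside `S` with no other neighbour in `S`) gives `4` to the budget of `u`, and every
neighbour of `u` in `S` takes `4` from it. Each undominated vertex receives `12` from these budgets,
partly through the private neighbours adjacent to it and partly through its leaves, and no budget is
overdrawn. Hence `3 |U|` is at most the number of private neighbours minus twice the number of edges
inside `S`, and counting the edges between `S` and its complement turns this into the bound.

The constant is attained by the Petersen graph, which has `10` vertices and restrained domination
number `4`.
-/

section Exchange

variable {V : Type*}

/-- The restraint half of restrained domination: no vertex outside `S` is isolated outside `S`. -/
def IsRestrained (G : SimpleGraph V) (S : Finset V) : Prop :=
  ∀ v ∉ S, ∃ u ∉ S, G.Adj v u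

/-- `v` and all its neighbours lie outside `S`. -/
def IsUndominated (G : SimpleGraph V) (S : Finset V) (v : V) : Prop :=
  v ∉ S ∧ ∀ u, G.Adj v u → u ∉ S

open Classical in
/-- The set of vertices that `S` fails to dominate. -/
noncomputable def undominated [Fintype V] (G : SimpleGraph V) (S : Finset V) : Finset V :=
  {v | IsUndominated G S v}

open Classical in
/-- The edges of `G` inside `S`, each counted in both directions. -/
noncomputable def innerPairs [Fintype V] (G : SimpleGraph V) (S : Finset V) : Finset (V × V) :=
  {p | p.1 ∈ S ∧ p.2 ∈ S ∧ G.Adj p.1 p.2}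

open Classical in
/-- The set obtained from `S` by adding the vertices of `A` and then deleting those of `R`. -/
noncomputable def exchange (S : Finset V) (A R : List V) : Finset V :=
  (S ∪ A.toFinset) \ R.toFinset

/-- The local conditions under which passing from `S` to `exchange S A R` keeps the set restrained,
dominates the vertices of `K`, and leaves at most the vertices of `N` newly undominated. Lists are
used so that concrete exchanges unfold into finitely many statements about single vertices. -/
structure IsExchange (G : SimpleGraph V) (S : Finset V) (A R K N : List V) : Prop where
  notMem_of_added : ∀ a ∈ A, a ∉ S
  mem_of_removed : ∀ r ∈ R, r ∈ S
  nodup_removed : R.Nodup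
  nodup_dominated : K.Nodup
  undominated_before : ∀ k ∈ K, k ∉ S ∧ ∀ u, G.Adj k u → u ∉ S
  dominated_after : ∀ k ∈ K, k ∈ A ∨ ∃ a ∈ A, G.Adj k a
  restrained_near_added : ∀ a ∈ A, ∀ t, G.Adj a t →
    t ∈ S ∨ t ∈ A ∨ ∃ z, G.Adj t z ∧ (z ∈ R ∨ (z ∉ S ∧ z ∉ A))
  restrained_removed : ∀ r ∈ R, ∃ z, G.Adj r z ∧ (z ∈ R ∨ (z ∉ S ∧ z ∉ A))
  dominated_removed : ∀ r ∈ R, r ∈ N ∨ ∃ z, G.Adj r z ∧ ((z ∈ S ∧ z ∉ R) ∨ z ∈ A)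
  dominated_near_removed : ∀ r ∈ R, ∀ t, G.Adj r t → t ∉ S → t ∉ A →
    t ∈ N ∨ ∃ z, G.Adj t z ∧ ((z ∈ S ∧ z ∉ R) ∨ z ∈ A)

/-- An exchange together with bookkeeping for the ordered adjacent pairs inside `S`: all those that
meet `R` are in `L`, and those of `P` are new. -/
structure IsPairExchange (G : SimpleGraph V) (S : Finset V) (A R K N : List V)
    (L P : List (V × V)) : Prop extends IsExchange G S A R K N where
  nodup_gained : P.Nodup
  adj_of_gained : ∀ p ∈ P, G.Adj p.1 p.2
  fst_or_snd_mem_of_gained : ∀ p ∈ P, p.1 ∈ A ∨ p.2 ∈ A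
  fst_mem_of_gained : ∀ p ∈ P, p.1 ∈ A ∨ (p.1 ∈ S ∧ p.1 ∉ R)
  snd_mem_of_gained : ∀ p ∈ P, p.2 ∈ A ∨ (p.2 ∈ S ∧ p.2 ∉ R)
  mem_lost : ∀ r ∈ R, ∀ z, G.Adj r z → z ∈ S → (r, z) ∈ L ∧ (z, r) ∈ L

variable {G : SimpleGraph V} {S : Finset V} {A R K N : List V} {L P : List (V × V)}

theorem mem_undominated [Fintype V] {v : V} : v ∈ undominated G S ↔ IsUndominated G S v := by
  simp [undominated]

theorem mem_innerPairs [Fintype V] {p : V × V} :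
    p ∈ innerPairs G S ↔ p.1 ∈ S ∧ p.2 ∈ S ∧ G.Adj p.1 p.2 := by
  simp [innerPairs]

theorem mem_exchange {v : V} : v ∈ exchange S A R ↔ (v ∈ S ∨ v ∈ A) ∧ v ∉ R := by
  simp [exchange]

theorem exists_adj_mem_of_not_isUndominated {v : V} (hv : v ∉ S) (h : ¬ IsUndominated G S v) :
    ∃ u ∈ S, G.Adj v u := by
  simp only [IsUndominated, hv, not_false_eq_true, true_and] at h
  push Not at h
  exact h.imp fun _ hu => hu.symm

namespace IsExchange

theorem notMem_removed_of_mem_added (h : IsExchange G S A R K N) {z : V} (hz : z ∈ A) : z ∉ R :=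
  fun hzR => h.notMem_of_added z hz (h.mem_of_removed z hzR)

theorem card_exchange_add_le (h : IsExchange G S A R K N) :
    (exchange S A R).card + R.length ≤ S.card + A.length := by
  classical
  have hsub : R.toFinset ⊆ S ∪ A.toFinset := fun r hr =>
    Finset.mem_union_left _ (h.mem_of_removed r (List.mem_toFinset.1 hr))
  have hcard : (exchange S A R).card + R.length = (S ∪ A.toFinset).card := by
    rw [← List.toFinset_card_of_nodup h.nodup_removed, ← Finset.card_sdiff_add_card_eq_card hsub]
    simp only [exchange]
  have := Finset.card_union_le S A.toFinset
  have := A.toFinset_card_le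
  omega

theorem isRestrained (h : IsExchange G S A R K N) (hS : IsRestrained G S) :
    IsRestrained G (exchange S A R) := by
  intro t ht
  rw [mem_exchange] at ht
  suffices hz : ∃ z, G.Adj t z ∧ (z ∈ R ∨ (z ∉ S ∧ z ∉ A)) by
    obtain ⟨z, htz, hz⟩ := hz
    exact ⟨z, by rw [mem_exchange]; tauto, htz⟩
  by_cases htR : t ∈ R
  · exact h.restrained_removed t htR
  have htSA : t ∉ S ∧ t ∉ A := by tauto
  obtain ⟨u, huS, htu⟩ := hS t htSA.1
  by_cases huA : u ∈ A
  · exact ((h.restrained_near_added u huA t htu.symm).resolve_left htSA.1).resolve_left htSA.2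
  · exact ⟨u, htu, Or.inr ⟨huS, huA⟩⟩

variable [Fintype V]

open Classical in
theorem undominated_exchange_subset (h : IsExchange G S A R K N) :
    undominated G (exchange S A R) ⊆ (undominated G S \ K.toFinset) ∪ N.toFinset := by
  intro t ht
  obtain ⟨htS', hnbr⟩ := mem_undominated.1 ht
  simp only [mem_exchange] at htS' hnbr
  simp only [Finset.mem_union, Finset.mem_sdiff, List.mem_toFinset, mem_undominated]
  have not_dominated : ¬ ∃ z, G.Adj t z ∧ ((z ∈ S ∧ z ∉ R) ∨ z ∈ A) := by
    rintro ⟨z, htz, hz⟩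
    have := hnbr z htz
    have := h.notMem_removed_of_mem_added (z := z)
    tauto
  by_cases htR : t ∈ R
  · exact Or.inr ((h.dominated_removed t htR).resolve_right not_dominated)
  have htSA : t ∉ S ∧ t ∉ A := by tauto
  by_cases hU : IsUndominated G S t
  · refine Or.inl ⟨hU, fun htK => ?_⟩
    obtain htA | ⟨a, ha, hta⟩ := h.dominated_after t htK
    exacts [htSA.2 htA, not_dominated ⟨a, hta, Or.inr ha⟩]
  · obtain ⟨u, huS, htu⟩ := exists_adj_mem_of_not_isUndominated htSA.1 hU
    have huR : u ∈ R := by_contra fun huR => not_dominated ⟨u, htu, Or.inl ⟨huS, huR⟩⟩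
    exact Or.inr ((h.dominated_near_removed u huR t htu.symm htSA.1 htSA.2).resolve_right
      not_dominated)

theorem card_undominated_exchange_add_le (h : IsExchange G S A R K N) :
    (undominated G (exchange S A R)).card + K.length ≤ (undominated G S).card + N.length := by
  classical
  have hK : K.toFinset ⊆ undominated G S := fun k hk =>
    mem_undominated.2 (h.undominated_before k (List.mem_toFinset.1 hk))
  have := Finset.card_le_card h.undominated_exchange_subset
  have := Finset.card_union_le (undominated G S \ K.toFinset) N.toFinset
  have := Finset.card_sdiff_add_card_eq_card hK
  have := List.toFinset_card_of_nodup h.nodup_dominated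
  have := N.toFinset_card_le
  omega

end IsExchange

theorem IsPairExchange.card_innerPairs_add_le [Fintype V]
    (h : IsPairExchange G S A R K N L P) :
    (innerPairs G S).card + P.length ≤ (innerPairs G (exchange S A R)).card + L.length := by
  classical
  have hsub : (innerPairs G S \ L.toFinset) ∪ P.toFinset ⊆ innerPairs G (exchange S A R) := by
    intro p hmem
    simp only [Finset.mem_union, Finset.mem_sdiff, List.mem_toFinset, mem_innerPairs,
      mem_exchange] at hmem ⊢
    obtain ⟨⟨h₁, h₂, hadj⟩, hL⟩ | hP := hmem
    · exact ⟨⟨Or.inl h₁, fun hR => hL (h.mem_lost _ hR _ hadj h₂).1⟩,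
        ⟨Or.inl h₂, fun hR => hL (h.mem_lost _ hR _ hadj.symm h₁).2⟩, hadj⟩
    · have := h.fst_mem_of_gained p hP
      have := h.snd_mem_of_gained p hP
      have := h.notMem_removed_of_mem_added (z := p.1)
      have := h.notMem_removed_of_mem_added (z := p.2)
      have := h.adj_of_gained p hP
      tauto
  have hdisj : Disjoint (innerPairs G S \ L.toFinset) P.toFinset := by
    rw [Finset.disjoint_left]
    intro p hS hP
    simp only [Finset.mem_sdiff, List.mem_toFinset, mem_innerPairs] at hS hP
    have := h.fst_or_snd_mem_of_gained p hP
    have := h.notMem_of_added p.1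
    have := h.notMem_of_added p.2
    tauto
  have hcard := Finset.card_le_card hsub
  rw [Finset.card_union_of_disjoint hdisj, List.toFinset_card_of_nodup h.nodup_gained] at hcard
  have := Finset.le_card_sdiff L.toFinset (innerPairs G S)
  have := L.toFinset_card_le
  omega

end Exchange

section Extremal

variable {V : Type*} {G : SimpleGraph V} {S : Finset V}

/-- `v` has exactly the three distinct neighbours `x`, `y` and `z`. -/
structure HasNeighbors (G : SimpleGraph V) (v x y z : V) : Prop where
  ne₁₂ : x ≠ y
  ne₁₃ : x ≠ z
  ne₂₃ : y ≠ z
  adj₁ : G.Adj v x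
  adj₂ : G.Adj v y
  adj₃ : G.Adj v z
  eq_or_eq_or_eq : ∀ t, G.Adj v t → t = x ∨ t = y ∨ t = z

/-- `b ∉ S` is a private neighbour of `k ∈ S`: it has no other neighbour in `S`. -/
structure IsPrivateNeighbor (G : SimpleGraph V) (S : Finset V) (k b : V) : Prop where
  center_mem : k ∈ S
  notMem : b ∉ S
  adj : G.Adj b k
  eq_of_adj : ∀ u, G.Adj b u → u ∈ S → u = k

/-- `y` is a leaf of the graph induced outside `S`, attached to `b`. -/
structure IsLeafAt (G : SimpleGraph V) (S : Finset V) (y b : V) : Prop where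
  notMem : y ∉ S
  base_notMem : b ∉ S
  adj : G.Adj y b
  eq_of_adj : ∀ t, G.Adj y t → t ∉ S → t = b

/-- No leaf of the graph induced outside `S` is attached to `b`. -/
def IsLeafless (G : SimpleGraph V) (S : Finset V) (b : V) : Prop :=
  ∀ t, G.Adj b t → t ∉ S → ∃ z, G.Adj t z ∧ z ∉ S ∧ z ≠ b

theorem IsLeafless.not_isLeafAt {b y : V} (h : IsLeafless G S b) : ¬ IsLeafAt G S y b := by
  intro hy
  obtain ⟨z, hyz, hz, hzb⟩ := h y hy.adj.symm hy.notMem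
  exact hzb (hy.eq_of_adj z hyz hz)

theorem exists_isLeafAt {b : V} (hb : b ∉ S) (h : ¬ IsLeafless G S b) : ∃ y, IsLeafAt G S y b := by
  simp only [IsLeafless] at h
  push Not at h
  obtain ⟨y, hby, hy, heq⟩ := h
  exact ⟨y, hy, hb, hby.symm, heq⟩

theorem HasNeighbors.swap {v x y z : V} (h : HasNeighbors G v x y z) : HasNeighbors G v x z y := by
  grind [HasNeighbors]

theorem HasNeighbors.rotate {v x y z : V} (h : HasNeighbors G v x y z) :
    HasNeighbors G v y z x := by
  grind [HasNeighbors]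

variable [Fintype V]

/-- What the exchange arguments minimise: first `|S| + |undominated|`, then `|S|`; the order dual
makes them finally maximise the number of edges inside `S`. -/
noncomputable def exchangeCost (G : SimpleGraph V) (S : Finset V) : ℕ ×ₗ ℕ ×ₗ ℕᵒᵈ :=
  toLex (S.card + (undominated G S).card,
    toLex (S.card, OrderDual.toDual (innerPairs G S).card))

/-- `G` is cubic and `S` is a restrained set of least cost. -/
structure IsExtremal (G : SimpleGraph V) (S : Finset V) : Prop where
  exists_hasNeighbors : ∀ v, ∃ x y z, HasNeighbors G v x y z
  isRestrained : IsRestrained G S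
  exchangeCost_le : ∀ S', IsRestrained G S' → exchangeCost G S ≤ exchangeCost G S'

theorem exchangeCost_lt_iff {S' : Finset V} :
    exchangeCost G S' < exchangeCost G S ↔
      S'.card + (undominated G S').card < S.card + (undominated G S).card ∨
      S'.card + (undominated G S').card = S.card + (undominated G S).card ∧
        (S'.card < S.card ∨
          S'.card = S.card ∧ (innerPairs G S).card < (innerPairs G S').card) := by
  simp [exchangeCost, Prod.Lex.toLex_lt_toLex]

theorem exists_isExtremal (hG : ∀ v, ∃ x y z, HasNeighbors G v x y z) :
    ∃ S, IsExtremal G S := by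
  classical
  obtain ⟨S, hS, hmin⟩ := Finset.exists_min_image {S : Finset V | IsRestrained G S}
    (exchangeCost G) ⟨Finset.univ, Finset.mem_filter.2 (by simp [IsRestrained])⟩
  simp only [Finset.mem_filter, Finset.mem_univ, true_and] at hS hmin
  exact ⟨S, hG, hS, hmin⟩

namespace IsExtremal

theorem exists_others (hS : IsExtremal G S) {v x : V} (hx : G.Adj v x) :
    ∃ y z, HasNeighbors G v x y z := by
  obtain ⟨a, b, d, h⟩ := hS.exists_hasNeighbors v
  obtain rfl | rfl | rfl := h.eq_or_eq_or_eq x hx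
  exacts [⟨b, d, h⟩, ⟨d, a, h.rotate⟩, ⟨a, b, h.rotate.rotate⟩]

theorem exists_third (hS : IsExtremal G S) {v x y : V} (hx : G.Adj v x) (hy : G.Adj v y)
    (hxy : x ≠ y := by grind [HasNeighbors, IsPrivateNeighbor, IsLeafAt, IsUndominated]) :
    ∃ z, HasNeighbors G v x y z := by
  obtain ⟨a, b, h⟩ := hS.exists_others hx
  obtain rfl | rfl | rfl := h.eq_or_eq_or_eq y hy
  exacts [absurd rfl hxy, ⟨b, h⟩, ⟨a, h.swap⟩]

theorem hasNeighbors (hS : IsExtremal G S) {v x y z : V} (hx : G.Adj v x) (hy : G.Adj v y)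
    (hz : G.Adj v z)
    (hxy : x ≠ y := by grind [HasNeighbors, IsPrivateNeighbor, IsLeafAt, IsUndominated])
    (hxz : x ≠ z := by grind [HasNeighbors, IsPrivateNeighbor, IsLeafAt, IsUndominated])
    (hyz : y ≠ z := by grind [HasNeighbors, IsPrivateNeighbor, IsLeafAt, IsUndominated]) :
    HasNeighbors G v x y z := by
  obtain ⟨a, h⟩ := hS.exists_third hx hy hxy
  obtain rfl | rfl | rfl := h.eq_or_eq_or_eq z hz
  exacts [absurd rfl hxz, absurd rfl hyz, h]

/-- The last argument is a finite verification, which its default value unfolds into one goal for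
each listed vertex and each neighbour of such a vertex. -/
theorem false_of_exchange (hS : IsExtremal G S) (A R K N : List V)
    (hlt : A.length + N.length < R.length + K.length ∨
      A.length + N.length = R.length + K.length ∧ A.length < R.length := by simp)
    (h : IsExchange G S A R K N := by
      constructor <;>
        simp only [List.mem_cons, List.not_mem_nil, or_false, forall_eq_or_imp, forall_eq,
          List.nodup_cons, List.nodup_nil, not_or, false_or, not_false_eq_true, and_true,
          true_and] <;>
        (repeat' apply And.intro) <;>
        grind (splits := 40) (ematch := 12) (instances := 6000) [cases eager HasNeighbors,
          cases eager IsPrivateNeighbor, cases eager IsLeafAt, IsUndominated, IsLeafless,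
          → SimpleGraph.Adj.symm, SimpleGraph.irrefl]) : False := by
  have := h.card_exchange_add_le
  have := h.card_undominated_exchange_add_le
  refine (hS.exchangeCost_le _ (h.isRestrained hS.isRestrained)).not_gt
    (exchangeCost_lt_iff.2 ?_)
  omega

theorem false_of_pair_exchange (hS : IsExtremal G S) (A R K N : List V) (L P : List (V × V))
    (heq : A.length + N.length = R.length + K.length ∧ A.length = R.length := by simp)
    (hlt : L.length < P.length := by simp)
    (h : IsPairExchange G S A R K N L P := by
      apply_rules [IsPairExchange.mk, IsExchange.mk] <;>
        simp only [List.mem_cons, List.not_mem_nil, or_false, forall_eq_or_imp, forall_eq,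
          List.nodup_cons, List.nodup_nil, not_or, false_or, not_false_eq_true, and_true,
          true_and] <;>
        (repeat' apply And.intro) <;>
        grind (splits := 40) (ematch := 12) (instances := 6000) [cases eager HasNeighbors,
          cases eager IsPrivateNeighbor, cases eager IsLeafAt, IsUndominated, IsLeafless,
          → SimpleGraph.Adj.symm, SimpleGraph.irrefl]) : False := by
  have := h.card_exchange_add_le
  have := h.card_undominated_exchange_add_le
  have := h.card_innerPairs_add_le
  refine (hS.exchangeCost_le _ (h.isRestrained hS.isRestrained)).not_gt
    (exchangeCost_lt_iff.2 ?_)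
  omega

end IsExtremal

end Extremal

section LocalStructure

variable {V : Type*} {G : SimpleGraph V} {S : Finset V}

/-- A vertex of `S` all of whose neighbours lie in `S`. -/
def IsCenter (G : SimpleGraph V) (S : Finset V) (u : V) : Prop :=
  u ∈ S ∧ ∀ t, G.Adj u t → t ∈ S

/-- A diamond `q` with top `w` and third neighbour `y`: exactly two of the neighbours of `q` are
private, and both are adjacent to the leafless undominated vertex `w`. -/
def IsDiamond (G : SimpleGraph V) (S : Finset V) (q w y : V) : Prop :=
  IsUndominated G S w ∧ IsLeafless G S w ∧ ∃ q₁ q₂, HasNeighbors G q y q₁ q₂ ∧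
    IsPrivateNeighbor G S q q₁ ∧ IsPrivateNeighbor G S q q₂ ∧ y ∉ S ∧
    ¬ IsPrivateNeighbor G S q y ∧ G.Adj q₁ w ∧ G.Adj q₂ w

/-- The neighbourhood of a diamond `q` with top `w` and third neighbour `y`: `q₁`, `q₂` are the
private neighbours of `q`, and `t₁`, `t₂`, `e` the remaining neighbours of `q₁`, `q₂`, `w`. -/
structure DiamondNeighborhood (G : SimpleGraph V) (S : Finset V)
    (q w y r q₁ q₂ t₁ t₂ e k e' : V) : Prop where
  hasNeighbors : HasNeighbors G q y q₁ q₂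
  mem : q ∈ S
  notMem_side : y ∉ S
  adj_side : G.Adj y r
  mem_side : r ∈ S
  ne_side : r ≠ q
  hasNeighbors₁ : HasNeighbors G q₁ q w t₁
  hasNeighbors₂ : HasNeighbors G q₂ q w t₂
  notMem₁ : q₁ ∉ S
  notMem₂ : q₂ ∉ S
  notMem₁' : t₁ ∉ S
  notMem₂' : t₂ ∉ S
  notMem_top : w ∉ S
  hasNeighbors_top : HasNeighbors G w q₁ q₂ e
  hasNeighbors_apex : HasNeighbors G e w k e'
  notMem_apex : e ∉ S
  mem_apex : k ∈ S
  notMem_apex' : e' ∉ S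

/-- Every leaf attached to `b` is the third neighbour of a diamond. Such a leaf is called dead, and
all other leaves live. -/
def IsQuiet (G : SimpleGraph V) (S : Finset V) (b : V) : Prop :=
  ∀ y, IsLeafAt G S y b → ∃ q w, IsDiamond G S q w y

theorem IsQuiet.isLeafless_or {b : V} (h : IsQuiet G S b) (hb : b ∉ S) :
    IsLeafless G S b ∨ ∃ y q w, IsLeafAt G S y b ∧ IsDiamond G S q w y := by
  by_cases hl : IsLeafless G S b
  · exact Or.inl hl
  · obtain ⟨y, hy⟩ := exists_isLeafAt hb hl
    obtain ⟨q, w, hD⟩ := h y hy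
    exact Or.inr ⟨y, q, w, hy, hD⟩

namespace IsExtremal

variable [Fintype V]

theorem exists_isPrivateNeighbor_pair (hS : IsExtremal G S) {u m x : V} (hu : u ∈ S) (hm : m ∈ S)
    (hx : x ∉ S) (hum : G.Adj u m) (hux : G.Adj u x) :
    ∃ b z, HasNeighbors G u m b z ∧ IsPrivateNeighbor G S u b ∧ IsPrivateNeighbor G S u z := by
  have exists_ne : ∀ b, ∃ z, z ≠ b ∧ IsPrivateNeighbor G S u z := by
    intro b
    by_contra! hcon
    have hdom : ∀ z, z ≠ b → z ∉ S → G.Adj u z → ∃ t, G.Adj z t ∧ t ∈ S ∧ t ≠ u := by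
      intro z hzb hz huz
      by_contra! hpriv
      exact hcon z hzb ⟨hu, hz, huz.symm, hpriv⟩
    exact hS.false_of_exchange [] [u] [] [b]
  obtain ⟨b, -, hb⟩ := exists_ne u
  obtain ⟨z, hzb, hz⟩ := exists_ne b
  exact ⟨b, z, hS.hasNeighbors hum hb.adj.symm hz.adj.symm, hb, hz⟩

theorem exists_isPrivateNeighbor (hS : IsExtremal G S) {u : V} (hu : u ∈ S)
    (hout : ∀ t, G.Adj u t → t ∉ S) : ∃ b, IsPrivateNeighbor G S u b := by
  by_contra! hcon
  have hdom : ∀ z, G.Adj u z → ∃ t, G.Adj z t ∧ t ∈ S ∧ t ≠ u := by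
    intro z huz
    by_contra! hpriv
    exact hcon z ⟨hu, hout z huz, huz.symm, hpriv⟩
  obtain ⟨x, y, z, hn⟩ := hS.exists_hasNeighbors u
  exact hS.false_of_exchange [] [u] [] [u]

theorem not_adj_of_isCenter (hS : IsExtremal G S) {u u' : V} (hu : IsCenter G S u)
    (hu' : IsCenter G S u') : ¬ G.Adj u u' := by
  intro h
  obtain ⟨hu, hnbr⟩ := hu
  obtain ⟨hu', hnbr'⟩ := hu'
  have hne := h.ne
  obtain ⟨x, y, hn⟩ := hS.exists_others h
  obtain ⟨x', y', hn'⟩ := hS.exists_others h.symm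
  exact hS.false_of_exchange [] [u, u'] [] []

theorem not_adj_of_isLeafless (hS : IsExtremal G S) {v v' : V} (hv : IsUndominated G S v)
    (hv' : IsUndominated G S v') (hl : IsLeafless G S v) : ¬ G.Adj v v' := by
  intro h
  have hne := h.ne
  exact hS.false_of_exchange [v] [] [v, v'] []

theorem eq_of_adj_isPrivateNeighbor (hS : IsExtremal G S) {k b w w' : V}
    (hb : IsPrivateNeighbor G S k b) (hw : IsUndominated G S w) (hw' : IsUndominated G S w')
    (hbw : G.Adj b w) (hbw' : G.Adj b w') : w = w' := by
  by_contra hne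
  have hn := hS.hasNeighbors hb.adj hbw hbw'
  obtain ⟨x, y, hx⟩ := hS.exists_others hbw.symm
  obtain ⟨x', y', hx'⟩ := hS.exists_others hbw'.symm
  exact hS.false_of_exchange [b] [] [w, w'] []

theorem eq_of_adj_isUndominated (hS : IsExtremal G S) {v w w' : V} (hv : IsUndominated G S v)
    (hw : IsUndominated G S w) (hw' : IsUndominated G S w') (hvw : G.Adj v w)
    (hvw' : G.Adj v w') : w = w' := by
  by_contra hne
  by_cases hl : IsLeafless G S v
  · exact hS.not_adj_of_isLeafless hv hw hl hvw
  obtain ⟨a, ha⟩ := exists_isLeafAt hv.1 hl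
  obtain ⟨q, r, hq⟩ := hS.exists_others ha.adj
  have hqr : q ∈ S ∧ r ∈ S := by grind [HasNeighbors, IsLeafAt]
  have hn := hS.hasNeighbors ha.adj.symm hvw hvw'
  obtain ⟨x, y, hx⟩ := hS.exists_others hvw.symm
  obtain ⟨x', y', hx'⟩ := hS.exists_others hvw'.symm
  exact hS.false_of_exchange [v, a] [] [v, w, w'] []

theorem eq_of_isUndominated_of_adj (hS : IsExtremal G S) {t w w' : V} (hw : IsUndominated G S w)
    (hw' : IsUndominated G S w') (htw : G.Adj t w) (htw' : G.Adj t w') : w = w' := by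
  by_contra hne
  by_cases htU : IsUndominated G S t
  · exact hne (hS.eq_of_adj_isUndominated htU hw hw' htw htw')
  obtain ⟨k, hk, htk⟩ := exists_adj_mem_of_not_isUndominated (hw.2 t htw.symm) htU
  have hn := hS.hasNeighbors htk htw htw'
  exact hne (hS.eq_of_adj_isPrivateNeighbor (k := k) (b := t)
    ⟨hk, hw.2 t htw.symm, htk, by grind [HasNeighbors, IsUndominated]⟩ hw hw' htw htw')

theorem separated_of_isLeafless (hS : IsExtremal G S) {w v : V} (hw : IsUndominated G S w)
    (hl : IsLeafless G S w) (hv : IsUndominated G S v) (hne : w ≠ v) :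
    ¬ G.Adj w v ∧ ¬ G.Adj v w ∧ ∀ t, G.Adj t w → ¬ G.Adj t v :=
  ⟨hS.not_adj_of_isLeafless hw hv hl, fun h => hS.not_adj_of_isLeafless hw hv hl h.symm,
    fun _ htw htv => hne (hS.eq_of_isUndominated_of_adj hw hv htw htv)⟩

theorem exists_hasNeighbors_of_isLeafAt (hS : IsExtremal G S) {y b : V} (hy : IsLeafAt G S y b) :
    ∃ q r, HasNeighbors G y b q r ∧ q ∈ S ∧ r ∈ S := by
  obtain ⟨q, r, hn⟩ := hS.exists_others hy.adj
  exact ⟨q, r, hn, by grind [HasNeighbors, IsLeafAt]⟩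

theorem exists_third_of_isLeafAt (hS : IsExtremal G S) {y b q : V} (hy : IsLeafAt G S y b)
    (hq : q ∈ S) (hyq : G.Adj y q) : ∃ r, HasNeighbors G y b q r ∧ r ∈ S := by
  obtain ⟨r, hr⟩ := hS.exists_third hy.adj hyq
  exact ⟨r, hr, by grind [HasNeighbors, IsLeafAt]⟩

theorem notMem_of_adj_of_isLeafAt (hS : IsExtremal G S) {y b q t : V} (hy : IsLeafAt G S y b)
    (hq : q ∈ S) (hyq : G.Adj y q) (hqt : G.Adj q t) : t ∉ S := by
  intro ht
  obtain ⟨r, hr, hrS⟩ := hS.exists_third_of_isLeafAt hy hq hyq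
  obtain ⟨x, z, hx, hpx, hpz⟩ := hS.exists_isPrivateNeighbor_pair hq ht hy.notMem hqt hyq.symm
  grind [HasNeighbors, IsPrivateNeighbor, IsLeafAt, SimpleGraph.adj_comm]

theorem exists_isPrivateNeighbor_of_isLeafAt (hS : IsExtremal G S) {y b q : V}
    (hy : IsLeafAt G S y b) (hq : q ∈ S) (hyq : G.Adj y q) :
    ∃ q₁ q₂, HasNeighbors G q y q₁ q₂ ∧ IsPrivateNeighbor G S q q₁ ∧ q₂ ∉ S := by
  have hout := fun t => hS.notMem_of_adj_of_isLeafAt (t := t) hy hq hyq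
  obtain ⟨q₁, h₁⟩ := hS.exists_isPrivateNeighbor hq hout
  obtain ⟨r, hr, hrS⟩ := hS.exists_third_of_isLeafAt hy hq hyq
  obtain ⟨q₂, hn⟩ := hS.exists_third hyq.symm h₁.adj.symm
  exact ⟨q₁, q₂, hn, h₁, hout _ hn.adj₃⟩

theorem exists_isPrivateNeighbor_pair_of_isLeafAt (hS : IsExtremal G S) {a v g : V}
    (hv : IsUndominated G S v) (ha : IsLeafAt G S a v) (hg : g ∈ S) (hag : G.Adj a g) :
    ∃ g₁ g₂, HasNeighbors G g a g₁ g₂ ∧ IsPrivateNeighbor G S g g₁ ∧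
      IsPrivateNeighbor G S g g₂ := by
  obtain ⟨g₁, g₂, hn, h₁, h₂⟩ := hS.exists_isPrivateNeighbor_of_isLeafAt ha hg hag
  refine ⟨g₁, g₂, hn, h₁, hg, h₂, hn.adj₃.symm, ?_⟩
  by_contra! hcon
  obtain ⟨u, hu⟩ := hcon
  obtain ⟨r, hr, hrS⟩ := hS.exists_third_of_isLeafAt ha hg hag
  obtain ⟨v₁, v₂, hvn⟩ := hS.exists_others ha.adj.symm
  have hout := fun t => hS.notMem_of_adj_of_isLeafAt (t := t) ha hg hag
  exact hS.false_of_pair_exchange [a] [g] [v] [g₁] [] [(a, r)]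

end IsExtremal

end LocalStructure

section Diamonds

variable {V : Type*} [Fintype V] {G : SimpleGraph V} {S : Finset V}

namespace IsExtremal

theorem not_isLeafless_of_adj_pair (hS : IsExtremal G S) {k m b b' w w' : V} (hm : m ∈ S)
    (hk : HasNeighbors G k m b b') (hb' : IsPrivateNeighbor G S k b')
    (hw : IsUndominated G S w) (hw' : IsUndominated G S w')
    (hbw : G.Adj b w) (hbw' : G.Adj b' w') (hl : IsLeafless G S w) : ¬ IsLeafless G S w' := by
  intro hl'
  by_cases hne : w = w'
  · subst hne
    exact hS.false_of_exchange [w] [k] [w] []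
  · have hsep := hS.separated_of_isLeafless hw hl hw' hne
    exact hS.false_of_exchange [w, w'] [k] [w, w'] []

theorem not_isLeafless_of_adj_pair_of_isLeafAt (hS : IsExtremal G S) {v a g b b' w w' : V}
    (hv : IsUndominated G S v) (ha : IsLeafAt G S a v) (hg : HasNeighbors G g a b b')
    (hb : IsPrivateNeighbor G S g b) (hb' : IsPrivateNeighbor G S g b')
    (hw : IsUndominated G S w) (hw' : IsUndominated G S w') (hbw : G.Adj b w)
    (hbw' : G.Adj b' w') (hl : IsLeafless G S w) : ¬ IsLeafless G S w' := by
  intro hl'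
  have hwv : w ≠ v := by rintro rfl; exact hl.not_isLeafAt ha
  have hwv' : w' ≠ v := by rintro rfl; exact hl'.not_isLeafAt ha
  have hadj := hS.not_adj_of_isLeafless hw hv hl
  have hadj' := hS.not_adj_of_isLeafless hw' hv hl'
  obtain ⟨q, hq, -⟩ := hS.exists_third_of_isLeafAt ha hb.center_mem hg.adj₁.symm
  obtain ⟨v₁, v₂, hvn⟩ := hS.exists_others ha.adj.symm
  by_cases hne : w = w'
  · subst hne
    exact hS.false_of_exchange [a, w] [g] [v, w] []
  · have hsep := hS.separated_of_isLeafless hw hl hw' hne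
    exact hS.false_of_exchange [a, w, w'] [g] [v, w, w'] []

theorem not_isLeafless_of_adj_isCenter (hS : IsExtremal G S) {k u b b' w : V}
    (hk : HasNeighbors G k u b b') (hu : IsCenter G S u)
    (hw : IsUndominated G S w) (hbw : G.Adj b w) :
    ¬ IsLeafless G S w := by
  intro hl
  obtain ⟨hu, hnbr⟩ := hu
  obtain ⟨u₁, u₂, hun⟩ := hS.exists_others hk.adj₁.symm
  exact hS.false_of_exchange [w] [k, u] [w] [k, b']

theorem not_isLeafless_base_of_adj_isCenter (hS : IsExtremal G S) {k u b b' v : V}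
    (hk : HasNeighbors G k u b b') (hu : IsCenter G S u) (hb : IsPrivateNeighbor G S k b)
    (hv : IsUndominated G S v) (hbv : G.Adj b v) :
    ¬ IsLeafless G S b := by
  intro hl
  obtain ⟨hu, hnbr⟩ := hu
  obtain ⟨u₁, u₂, hun⟩ := hS.exists_others hk.adj₁.symm
  exact hS.false_of_exchange [b] [k, u] [v] [b']

theorem exists_diamondNeighborhood (hS : IsExtremal G S) {q w y : V} (hD : IsDiamond G S q w y) :
    ∃ r q₁ q₂ t₁ t₂ e k e', DiamondNeighborhood G S q w y r q₁ q₂ t₁ t₂ e k e' := by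
  obtain ⟨hw, hl, q₁, q₂, hn, h₁, h₂, hy, hny, hw₁, hw₂⟩ := hD
  obtain ⟨r, hyr, hr, hrq⟩ : ∃ r, G.Adj y r ∧ r ∈ S ∧ r ≠ q := by
    by_contra! hcon
    exact hny ⟨h₁.center_mem, hy, hn.adj₁.symm, hcon⟩
  obtain ⟨t₁, ht₁⟩ := hS.exists_third h₁.adj hw₁
  obtain ⟨t₂, ht₂⟩ := hS.exists_third h₂.adj hw₂
  obtain ⟨e, he⟩ := hS.exists_third hw₁.symm hw₂.symm
  have heS : e ∉ S := hw.2 e he.adj₃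
  have heU : ¬ IsUndominated G S e := fun h => hS.not_adj_of_isLeafless hw h hl he.adj₃
  obtain ⟨k, hk, hek⟩ := exists_adj_mem_of_not_isUndominated heS heU
  obtain ⟨e', he'⟩ := hS.exists_third he.adj₃.symm hek
  obtain ⟨z, hez, hz, hzw⟩ := hl e he.adj₃ heS
  have he'S : e' ∉ S := by grind [HasNeighbors]
  refine ⟨r, q₁, q₂, t₁, t₂, e, k, e', hn, h₁.center_mem, hy, hyr, hr, hrq, ht₁, ht₂, h₁.notMem,
    h₂.notMem, ?_, ?_, hw.1, he, he', heS, hk, he'S⟩ <;>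
  grind [HasNeighbors, IsPrivateNeighbor]

theorem not_adj_top_of_adj_mem (hS : IsExtremal G S) {q w y k m b b' : V}
    (hD : IsDiamond G S q w y) (hm : m ∈ S) (hk : HasNeighbors G k m b b')
    (hb : IsPrivateNeighbor G S k b) (hb' : IsPrivateNeighbor G S k b') : ¬ G.Adj b w := by
  intro hbw
  obtain ⟨r, q₁, q₂, t₁, t₂, e, k', e', hd⟩ := hS.exists_diamondNeighborhood hD
  obtain ⟨hw, hl, -, -, -, -, -, -, hny, -⟩ := hD
  obtain rfl : b = e := by
    grind [DiamondNeighborhood, HasNeighbors, IsPrivateNeighbor, SimpleGraph.adj_comm]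
  obtain rfl : k' = k := hb.eq_of_adj _ hd.hasNeighbors_apex.adj₂ hd.mem_apex
  cases hd
  exact hS.false_of_exchange [w] [q, k'] [w] [q, b']

theorem not_adj_top_of_adj_isLeafAt (hS : IsExtremal G S) {q w y k v a b b' : V}
    (hD : IsDiamond G S q w y) (hv : IsUndominated G S v) (ha : IsLeafAt G S a v)
    (hk : HasNeighbors G k a b b') (hb : IsPrivateNeighbor G S k b)
    (hb' : IsPrivateNeighbor G S k b') : ¬ G.Adj b w := by
  intro hbw
  obtain ⟨r, q₁, q₂, t₁, t₂, e, k', e', hd⟩ := hS.exists_diamondNeighborhood hD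
  obtain ⟨hw, hl, q₃, q₄, hq, hp₃, hp₄, -, -, hw₃, hw₄⟩ := hD
  have hya : y ≠ a := by
    rintro rfl
    exact hS.not_isLeafless_of_adj_pair_of_isLeafAt hv ha hq hp₃ hp₄ hw hw hw₃ hw₄ hl hl
  have hwv : w ≠ v := by rintro rfl; exact hl.not_isLeafAt ha
  have hadj := hS.not_adj_of_isLeafless hw hv hl
  obtain ⟨x, hx, hxS⟩ := hS.exists_third_of_isLeafAt ha hb.center_mem hk.adj₁.symm
  obtain ⟨v₁, v₂, hvn⟩ := hS.exists_others ha.adj.symm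
  clear hq hp₃ hp₄ hw₃ hw₄
  obtain rfl : b = e := by
    grind [DiamondNeighborhood, HasNeighbors, IsPrivateNeighbor, SimpleGraph.adj_comm]
  obtain rfl : k' = k := hb.eq_of_adj _ hd.hasNeighbors_apex.adj₂ hd.mem_apex
  cases hd
  exact hS.false_of_pair_exchange [w, a] [q, k'] [w, v] [q, b'] [] [(a, x)]

theorem exists_diamondNeighborhood_of_isLeafAt (hS : IsExtremal G S) {b y q w : V}
    (hy : IsLeafAt G S y b) (hD : IsDiamond G S q w y) :
    ∃ r q₁ q₂ t₁ t₂ e k e', DiamondNeighborhood G S q w y r q₁ q₂ t₁ t₂ e k e' ∧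
      HasNeighbors G y b q r := by
  obtain ⟨r, q₁, q₂, t₁, t₂, e, k, e', hd⟩ := hS.exists_diamondNeighborhood hD
  exact ⟨r, q₁, q₂, t₁, t₂, e, k, e', hd, hS.hasNeighbors hy.adj hd.hasNeighbors.adj₁.symm
    hd.adj_side (by grind [IsLeafAt, DiamondNeighborhood])
    (by grind [IsLeafAt, DiamondNeighborhood]) hd.ne_side.symm⟩

theorem not_isDiamond_of_adj_isCenter (hS : IsExtremal G S) {k u b b' v y q w : V}
    (hk : HasNeighbors G k u b b') (hu : IsCenter G S u) (hb : IsPrivateNeighbor G S k b)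
    (hb' : IsPrivateNeighbor G S k b') (hv : IsUndominated G S v) (hbv : G.Adj b v)
    (hy : IsLeafAt G S y b) : ¬ IsDiamond G S q w y := by
  intro hD
  obtain ⟨r, q₁, q₂, t₁, t₂, e, k', e', hd, hyn⟩ := hS.exists_diamondNeighborhood_of_isLeafAt hy hD
  obtain ⟨hw, hl, -⟩ := hD
  have hwv : w ≠ v := by
    rintro rfl
    exact hS.not_isLeafless_of_adj_isCenter hk hu hw hbv hl
  have hsep := hS.separated_of_isLeafless hw hl hv hwv
  obtain ⟨hu, hnbr⟩ := hu
  obtain ⟨u₁, u₂, hun⟩ := hS.exists_others hk.adj₁.symm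
  obtain ⟨v₁, v₂, hvn⟩ := hS.exists_others hbv.symm
  have hyv : y ≠ v := by grind [DiamondNeighborhood, HasNeighbors, IsUndominated]
  have hbn := hS.hasNeighbors hb.adj hbv hy.adj.symm
  cases hd
  exact hS.false_of_exchange [b, y, w] [k, u, q] [v, w] [b']

theorem not_isQuiet_of_adj_isCenter (hS : IsExtremal G S) {k u b b' v : V}
    (hk : HasNeighbors G k u b b') (hu : IsCenter G S u) (hb : IsPrivateNeighbor G S k b)
    (hb' : IsPrivateNeighbor G S k b') (hv : IsUndominated G S v) (hbv : G.Adj b v) :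
    ¬ IsQuiet G S b := by
  intro hq
  obtain hl | ⟨y, q, w, hy, hD⟩ := hq.isLeafless_or hb.notMem
  · exact hS.not_isLeafless_base_of_adj_isCenter hk hu hb hv hbv hl
  · exact hS.not_isDiamond_of_adj_isCenter hk hu hb hb' hv hbv hy hD

end IsExtremal

end Diamonds

section Quiet

variable {V : Type*} {G : SimpleGraph V} {S : Finset V}

/-- `x ∉ S` is a neighbour of `r ∈ S` other than `q`. For `x` adjacent to `q` this says that `x` is
not a private neighbour of `q`. -/
structure IsSharedNeighbor (G : SimpleGraph V) (S : Finset V) (q r x : V) : Prop where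
  notMem : x ∉ S
  adj : G.Adj x r
  mem : r ∈ S
  ne : r ≠ q

/-- `q` has two private neighbours, `q₁` and `q₂`, which are adjacent to different leafless
undominated vertices, `w₁` and `w₂`; the third neighbour `x` of `q` is shared with `r`. -/
structure IsFork (G : SimpleGraph V) (S : Finset V) (q x q₁ q₂ r w₁ w₂ : V) : Prop where
  hasNeighbors : HasNeighbors G q x q₁ q₂
  isSharedNeighbor : IsSharedNeighbor G S q r x
  isPrivateNeighbor₁ : IsPrivateNeighbor G S q q₁
  isPrivateNeighbor₂ : IsPrivateNeighbor G S q q₂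
  isUndominated₁ : IsUndominated G S w₁
  isUndominated₂ : IsUndominated G S w₂
  isLeafless₁ : IsLeafless G S w₁
  isLeafless₂ : IsLeafless G S w₂
  adj₁ : G.Adj q₁ w₁
  adj₂ : G.Adj q₂ w₂
  ne : w₁ ≠ w₂

theorem IsFork.symm {q x q₁ q₂ r w₁ w₂ : V} (h : IsFork G S q x q₁ q₂ r w₁ w₂) :
    IsFork G S q x q₂ q₁ r w₂ w₁ where
  hasNeighbors := h.hasNeighbors.swap
  isSharedNeighbor := h.isSharedNeighbor
  isPrivateNeighbor₁ := h.isPrivateNeighbor₂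
  isPrivateNeighbor₂ := h.isPrivateNeighbor₁
  isUndominated₁ := h.isUndominated₂
  isUndominated₂ := h.isUndominated₁
  isLeafless₁ := h.isLeafless₂
  isLeafless₂ := h.isLeafless₁
  adj₁ := h.adj₂
  adj₂ := h.adj₁
  ne := h.ne.symm

namespace IsExtremal

variable [Fintype V]

theorem exists_third_of_isPrivateNeighbor (hS : IsExtremal G S) {k b w : V}
    (hb : IsPrivateNeighbor G S k b) (hw : IsUndominated G S w) (hbw : G.Adj b w) :
    ∃ z, HasNeighbors G b k w z :=
  hS.exists_third hb.adj hbw (by rintro rfl; exact hw.1 hb.center_mem)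

theorem hasNeighbors_of_isDiamond (hS : IsExtremal G S) {k b w y q w' : V}
    (hb : IsPrivateNeighbor G S k b) (hw : IsUndominated G S w) (hbw : G.Adj b w)
    (hy : IsLeafAt G S y b) (hD : IsDiamond G S q w' y) : HasNeighbors G b k w y :=
  hS.hasNeighbors hb.adj hbw hy.adj.symm
    (hxz := by rintro rfl; exact hy.notMem hb.center_mem)
    (hyz := by
      rintro rfl
      obtain ⟨-, -, q₁, q₂, hn, hq₁, -⟩ := hD
      exact hw.2 q hn.adj₁.symm hq₁.center_mem)

theorem not_isQuiet_of_isSharedNeighbor (hS : IsExtremal G S) {k b x x' w s s' : V}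
    (hk : HasNeighbors G k b x x') (hb : IsPrivateNeighbor G S k b)
    (hx : IsSharedNeighbor G S k s x) (hx' : IsSharedNeighbor G S k s' x')
    (hw : IsUndominated G S w) (hl : IsLeafless G S w) (hbw : G.Adj b w) :
    ¬ IsQuiet G S b := by
  intro hq
  obtain ⟨hxS, hxs, hs, hsk⟩ := hx
  obtain ⟨hxS', hxs', hs', hsk'⟩ := hx'
  obtain ⟨w₁, w₂, hwn⟩ := hS.exists_others hbw.symm
  obtain hbl | ⟨y, q, w', hy, hD⟩ := hq.isLeafless_or hb.notMem
  · exact hS.false_of_exchange [b] [k] [w] []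
  have hbn := hS.hasNeighbors_of_isDiamond hb hw hbw hy hD
  obtain ⟨r, q₁, q₂, t₁, t₂, e, k', e', hd, -⟩ := hS.exists_diamondNeighborhood_of_isLeafAt hy hD
  by_cases hww : w' = w
  · subst hww
    obtain rfl : e = b := by grind [DiamondNeighborhood, HasNeighbors, IsPrivateNeighbor]
    obtain rfl : k' = k := hb.eq_of_adj _ hd.hasNeighbors_apex.adj₂ hd.mem_apex
    clear hD
    cases hd
    by_cases hr : r = k'
    · subst hr
      exact hS.false_of_exchange [w', y] [q, r] [w'] []
    · exact hS.false_of_exchange [w'] [q, k'] [w'] [q, k']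
  · obtain ⟨hw', hl', -⟩ := hD
    have hsep := hS.separated_of_isLeafless hw' hl' hw hww
    cases hd
    exact hS.false_of_exchange [b, y, w'] [k, q] [w, w'] []

theorem not_isFork_of_isLeafless (hS : IsExtremal G S) {q x q₁ q₂ r w₁ w₂ : V}
    (hl₁ : IsLeafless G S q₁) (hl₂ : IsLeafless G S q₂) : ¬ IsFork G S q x q₁ q₂ r w₁ w₂ := by
  intro hf
  obtain ⟨c₁, hc₁⟩ :=
    hS.exists_third_of_isPrivateNeighbor hf.isPrivateNeighbor₁ hf.isUndominated₁ hf.adj₁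
  obtain ⟨c₂, hc₂⟩ :=
    hS.exists_third_of_isPrivateNeighbor hf.isPrivateNeighbor₂ hf.isUndominated₂ hf.adj₂
  obtain ⟨u₁, u₂, hu⟩ := hS.exists_others hf.adj₁.symm
  obtain ⟨u₃, u₄, hu'⟩ := hS.exists_others hf.adj₂.symm
  have hsep := hS.separated_of_isLeafless hf.isUndominated₁ hf.isLeafless₁ hf.isUndominated₂ hf.ne
  obtain ⟨hq, ⟨hx, hxr, hr, hrq⟩, h₁, h₂, hw₁, hw₂, hlw₁, hlw₂, ha₁, ha₂, hne⟩ := hf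
  by_cases ht : ∃ t, G.Adj q₁ t ∧ G.Adj q₂ t ∧ t ∉ S ∧
      ∀ z, G.Adj t z → z ∉ S → z = q₁ ∨ z = q₂
  · obtain ⟨t, ht⟩ := ht
    exact hS.false_of_exchange [q₁, w₂] [q] [w₁, w₂] []
  · exact hS.false_of_exchange [q₁, q₂] [q] [w₁, w₂] []

theorem not_isFork_of_isDiamond_of_ne (hS : IsExtremal G S) {q x q₁ q₂ r w₁ w₂ y q' w' : V}
    (hy : IsLeafAt G S y q₁) (hD : IsDiamond G S q' w' y) (hw' : w' ≠ w₁) :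
    ¬ IsFork G S q x q₁ q₂ r w₁ w₂ := by
  intro hf
  have hc₁ := hS.hasNeighbors_of_isDiamond hf.isPrivateNeighbor₁ hf.isUndominated₁ hf.adj₁ hy hD
  obtain ⟨c₂, hc₂⟩ :=
    hS.exists_third_of_isPrivateNeighbor hf.isPrivateNeighbor₂ hf.isUndominated₂ hf.adj₂
  obtain ⟨u₁, u₂, hu⟩ := hS.exists_others hf.adj₁.symm
  obtain ⟨u₃, u₄, hu'⟩ := hS.exists_others hf.adj₂.symm
  have hsep := hS.separated_of_isLeafless hf.isUndominated₁ hf.isLeafless₁ hf.isUndominated₂ hf.ne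
  obtain ⟨r', p₁, p₂, t₁, t₂, e, k, e', hd, -⟩ := hS.exists_diamondNeighborhood_of_isLeafAt hy hD
  obtain ⟨hwU', hl', -⟩ := hD
  have hsep₁ := hS.separated_of_isLeafless hwU' hl' hf.isUndominated₁ hw'
  obtain ⟨hq, ⟨hx, hxr, hr, hrq⟩, h₁, h₂, hw₁, hw₂, hlw₁, hlw₂, ha₁, ha₂, hne⟩ := hf
  cases hd
  by_cases hww : w' = w₂
  · subst hww
    clear hlw₁ hlw₂ hl' hu'
    exact hS.false_of_exchange [q₁, y, w'] [q, q'] [w₁, w'] []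
  · have hsep₂ := hS.separated_of_isLeafless hwU' hl' hw₂ hww
    clear hlw₁ hl'
    exact hS.false_of_exchange [q₁, y, w', w₂] [q, q'] [w₁, w₂, w'] []

theorem not_isFork_of_isDiamond_of_isLeafless (hS : IsExtremal G S)
    {q x q₁ q₂ r w₁ w₂ y q' : V} (hy : IsLeafAt G S y q₁) (hD : IsDiamond G S q' w₁ y)
    (hl₂ : IsLeafless G S q₂) : ¬ IsFork G S q x q₁ q₂ r w₁ w₂ := by
  intro hf
  have hc₁ := hS.hasNeighbors_of_isDiamond hf.isPrivateNeighbor₁ hf.isUndominated₁ hf.adj₁ hy hD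
  obtain ⟨c₂, hc₂⟩ :=
    hS.exists_third_of_isPrivateNeighbor hf.isPrivateNeighbor₂ hf.isUndominated₂ hf.adj₂
  obtain ⟨u₃, u₄, hu'⟩ := hS.exists_others hf.adj₂.symm
  have hsep := hS.separated_of_isLeafless hf.isUndominated₁ hf.isLeafless₁ hf.isUndominated₂ hf.ne
  obtain ⟨r', p₁, p₂, t₁, t₂, e, k, e', hd, hyn⟩ := hS.exists_diamondNeighborhood_of_isLeafAt hy hD
  clear hD
  obtain ⟨hq, ⟨hx, hxr, hr, hrq⟩, h₁, h₂, hw₁, hw₂, hlw₁, hlw₂, ha₁, ha₂, hne⟩ := hf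
  cases hd
  exact hS.false_of_exchange [w₁, y, q₂] [q, q'] [w₁, w₂] []

theorem not_isFork_of_isDiamond_of_isDiamond (hS : IsExtremal G S)
    {q x q₁ q₂ r w₁ w₂ y q' y' q'' : V} (hy : IsLeafAt G S y q₁) (hD : IsDiamond G S q' w₁ y)
    (hy' : IsLeafAt G S y' q₂) (hD' : IsDiamond G S q'' w₂ y') (hxy : x = y ∨ x ≠ y') :
    ¬ IsFork G S q x q₁ q₂ r w₁ w₂ := by
  intro hf
  have hc₁ := hS.hasNeighbors_of_isDiamond hf.isPrivateNeighbor₁ hf.isUndominated₁ hf.adj₁ hy hD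
  have hc₂ := hS.hasNeighbors_of_isDiamond hf.isPrivateNeighbor₂ hf.isUndominated₂ hf.adj₂ hy' hD'
  have hsep := hS.separated_of_isLeafless hf.isUndominated₁ hf.isLeafless₁ hf.isUndominated₂ hf.ne
  obtain ⟨r', p₁, p₂, t₁, t₂, e, k, e', hd, hyn⟩ := hS.exists_diamondNeighborhood_of_isLeafAt hy hD
  obtain ⟨r'', p₃, p₄, t₃, t₄, f, l, f', hd', hyn'⟩ :=
    hS.exists_diamondNeighborhood_of_isLeafAt hy' hD'
  clear hD hD'
  obtain ⟨hq, ⟨hx, hxr, hr, hrq⟩, h₁, h₂, hw₁, hw₂, -, -, ha₁, ha₂, hne⟩ := hf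
  cases hd
  cases hd'
  by_cases hxy' : x = y
  · subst hxy'
    exact hS.false_of_exchange [w₁, w₂, x] [q', q'', q] [w₁, w₂] [q'']
  · replace hxy := hxy.resolve_left hxy'
    exact hS.false_of_exchange [w₁, w₂] [q', q'', q] [w₁, w₂] [q', q'', q]

theorem not_isFork (hS : IsExtremal G S) {q x q₁ q₂ r w₁ w₂ : V} (hq₁ : IsQuiet G S q₁)
    (hq₂ : IsQuiet G S q₂) : ¬ IsFork G S q x q₁ q₂ r w₁ w₂ := by
  intro hf
  obtain hl₁ | ⟨y, q', w, hy, hD⟩ := hq₁.isLeafless_or hf.isPrivateNeighbor₁.notMem <;>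
  obtain hl₂ | ⟨y', q'', w', hy', hD'⟩ := hq₂.isLeafless_or hf.isPrivateNeighbor₂.notMem
  · exact hS.not_isFork_of_isLeafless hl₁ hl₂ hf
  · obtain rfl | hw' := eq_or_ne w' w₂
    · exact hS.not_isFork_of_isDiamond_of_isLeafless hy' hD' hl₁ hf.symm
    · exact hS.not_isFork_of_isDiamond_of_ne hy' hD' hw' hf.symm
  · obtain rfl | hw := eq_or_ne w w₁
    · exact hS.not_isFork_of_isDiamond_of_isLeafless hy hD hl₂ hf
    · exact hS.not_isFork_of_isDiamond_of_ne hy hD hw hf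
  · obtain rfl | hw' := eq_or_ne w' w₂
    · obtain rfl | hw := eq_or_ne w w₁
      · obtain hxy | hxy := eq_or_ne x y'
        · exact hS.not_isFork_of_isDiamond_of_isDiamond hy' hD' hy hD (Or.inl hxy) hf.symm
        · exact hS.not_isFork_of_isDiamond_of_isDiamond hy hD hy' hD' (Or.inr hxy) hf
      · exact hS.not_isFork_of_isDiamond_of_ne hy hD hw hf
    · exact hS.not_isFork_of_isDiamond_of_ne hy' hD' hw' hf.symm

end IsExtremal

end Quiet

section Special

variable {V : Type*} {G : SimpleGraph V} {S : Finset V}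

/-- `x ∉ S` is adjacent to `w` and `z` and to no other vertex outside `S`. -/
structure IsLink (G : SimpleGraph V) (S : Finset V) (x w z : V) : Prop where
  notMem : x ∉ S
  adj₁ : G.Adj x w
  adj₂ : G.Adj x z
  eq_or_eq : ∀ t, G.Adj x t → t ∉ S → t = w ∨ t = z

/-- Besides `m`, the vertex `k` has two private neighbours: `b`, adjacent to the leafless
undominated vertex `w`, and `z`, adjacent to the undominated vertex `v`, which has a leaf. -/
structure IsMixedPair (G : SimpleGraph V) (S : Finset V) (k m b z w v : V) : Prop where
  hasNeighbors : HasNeighbors G k m b z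
  isPrivateNeighbor₁ : IsPrivateNeighbor G S k b
  isPrivateNeighbor₂ : IsPrivateNeighbor G S k z
  isUndominated₁ : IsUndominated G S w
  isUndominated₂ : IsUndominated G S v
  isLeafless : IsLeafless G S w
  not_isLeafless : ¬ IsLeafless G S v
  adj₁ : G.Adj b w
  adj₂ : G.Adj z v

/-- The surroundings of a special vertex `x` with target `k`: the target has a mate `m ∈ S` and
forms a mixed pair with it, `x` links `w` to `z`, and `x` is a private neighbour of its owner
`o ≠ k`. -/
structure SpecialConfig (G : SimpleGraph V) (S : Finset V) (k x m b z w v o : V) : Prop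
    extends IsMixedPair G S k m b z w v where
  mate_mem : m ∈ S
  hasNeighbors₂ : HasNeighbors G z k v x
  hasNeighbors_special : HasNeighbors G x w z o
  isPrivateNeighbor_special : IsPrivateNeighbor G S o x
  isLeafless₂ : IsLeafless G S z
  isQuiet₁ : IsQuiet G S b
  owner_ne : o ≠ k

/-- `x` is a special vertex with target `k`. -/
def IsSpecial (G : SimpleGraph V) (S : Finset V) (k x : V) : Prop :=
  ∃ m b z w v o, SpecialConfig G S k x m b z w v o

theorem IsMixedPair.ne {k m b z w v : V} (h : IsMixedPair G S k m b z w v) : w ≠ v := by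
  rintro rfl
  exact h.not_isLeafless h.isLeafless

namespace IsExtremal

variable [Fintype V]

theorem separated_of_isMixedPair (hS : IsExtremal G S) {k m b z w v : V}
    (h : IsMixedPair G S k m b z w v) :
    ¬ G.Adj w v ∧ ¬ G.Adj v w ∧ ∀ t, G.Adj t w → ¬ G.Adj t v :=
  hS.separated_of_isLeafless h.isUndominated₁ h.isLeafless h.isUndominated₂ h.ne

theorem hasNeighbors_of_isLink (hS : IsExtremal G S) {k m b z w v x : V}
    (h : IsMixedPair G S k m b z w v) (hx : IsLink G S x w z) : HasNeighbors G z k v x :=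
  hS.hasNeighbors h.isPrivateNeighbor₂.adj h.adj₂ hx.adj₂.symm
    (by grind [IsMixedPair, IsUndominated, IsPrivateNeighbor])
    (by grind [IsMixedPair, IsLink, IsPrivateNeighbor])
    (by rintro rfl; exact (hS.separated_of_isMixedPair h).2.1 hx.adj₁)

theorem exists_isLink_of_isLeafless (hS : IsExtremal G S) {k m b z w v : V}
    (h : IsMixedPair G S k m b z w v)
    (hm : m ∈ S ∨ ∃ r, IsSharedNeighbor G S k r m)
    (hlz : IsLeafless G S z) : ∃ x, IsLink G S x w z ∧ ¬ G.Adj x k := by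
  by_contra! hcon
  have hlink : ∀ x, G.Adj x w → G.Adj x z → x ∉ S → ¬ G.Adj x k →
      ∃ t, G.Adj x t ∧ t ∉ S ∧ t ≠ w ∧ t ≠ z := by
    intro x hxw hxz hx hxk
    by_contra! ht
    exact hxk (hcon x ⟨hx, hxw, hxz, fun t hxt htS => or_iff_not_imp_left.2 (ht t hxt htS)⟩)
  have hsep := hS.separated_of_isMixedPair h
  obtain ⟨u₁, u₂, hu⟩ := hS.exists_others h.adj₁.symm
  obtain ⟨z', hzn⟩ :=
    hS.exists_third_of_isPrivateNeighbor h.isPrivateNeighbor₂ h.isUndominated₂ h.adj₂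
  obtain ⟨hk, hb, hz, hw, hv, hl, -, hbw, hzv⟩ := h
  clear hcon
  obtain hm | ⟨r, -, hmr, hr, hrk⟩ := hm
  · exact hS.false_of_exchange [w, z] [k] [w, v] []
  · exact hS.false_of_exchange [w, z] [k] [w, v] []

theorem top_eq_of_isLeafAt (hS : IsExtremal G S) {k m b z w v y q w' : V}
    (h : IsMixedPair G S k m b z w v)
    (hm : m ∈ S ∨ ∃ v' r, IsUndominated G S v' ∧ IsLeafAt G S m v' ∧ IsSharedNeighbor G S k r m)
    (hy : IsLeafAt G S y z) (hD : IsDiamond G S q w' y) : w' = w := by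
  by_contra hne
  have hsep := hS.separated_of_isMixedPair h
  obtain ⟨u₁, u₂, hu⟩ := hS.exists_others h.adj₁.symm
  obtain ⟨u₃, u₄, hu'⟩ := hS.exists_others h.adj₂.symm
  have hzn := hS.hasNeighbors_of_isDiamond h.isPrivateNeighbor₂ h.isUndominated₂ h.adj₂ hy hD
  obtain ⟨r', q₁, q₂, t₁, t₂, e, k', e', hd, -⟩ := hS.exists_diamondNeighborhood_of_isLeafAt hy hD
  obtain ⟨hwU', hwl', -⟩ := hD
  have hne' : w' ≠ v := by rintro rfl; exact h.not_isLeafless hwl'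
  obtain ⟨hk, hb, hz, hw, hv, hl, -, hbw, hzv⟩ := h
  have hsep₁ := hS.separated_of_isLeafless hwU' hwl' hw hne
  have hsep₂ := hS.separated_of_isLeafless hwU' hwl' hv hne'
  clear hwl'
  cases hd
  obtain hm | ⟨v', r, hv', hmv, hmS, hmr, hr, hrk⟩ := hm
  · exact hS.false_of_exchange [w, z, y, w'] [k, q] [w, v, w'] []
  · exact hS.false_of_exchange [w, z, y, w'] [k, q] [w, v, w'] []

theorem top_eq_of_isLink (hS : IsExtremal G S) {g a b z w v v' r x y q w' : V}
    (h : IsMixedPair G S g a b z w v) (hv' : IsUndominated G S v') (ha : IsLeafAt G S a v')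
    (har : IsSharedNeighbor G S g r a) (hx : IsLink G S x w z) (hy : IsLeafAt G S y b)
    (hD : IsDiamond G S q w' y) : w' = w := by
  by_contra hne
  have hsep := hS.separated_of_isMixedPair h
  obtain ⟨u₁, u₂, hu⟩ := hS.exists_others h.adj₂.symm
  have hbn := hS.hasNeighbors_of_isDiamond h.isPrivateNeighbor₁ h.isUndominated₁ h.adj₁ hy hD
  have hzn := hS.hasNeighbors_of_isLink h hx
  obtain ⟨r', q₁, q₂, t₁, t₂, e, k', e', hd, -⟩ := hS.exists_diamondNeighborhood_of_isLeafAt hy hD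
  obtain ⟨hwU', hwl', -⟩ := hD
  have hne' : w' ≠ v := by rintro rfl; exact h.not_isLeafless hwl'
  obtain ⟨hg, hb, hz, hw, hv, -, -, hbw, hzv⟩ := h
  have hsep₁ := hS.separated_of_isLeafless hwU' hwl' hw hne
  have hsep₂ := hS.separated_of_isLeafless hwU' hwl' hv hne'
  obtain ⟨hxS, hxw, -, hxn⟩ := hx
  obtain ⟨haS, har, hr, hrg⟩ := har
  clear hwl'
  cases hd
  exact hS.false_of_exchange [b, z, y, w'] [g, q] [w, v, w'] []

theorem not_isQuiet_of_isLeafAt (hS : IsExtremal G S) {g a b z w v v' : V}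
    (h : IsMixedPair G S g a b z w v) (hv' : IsUndominated G S v') (ha : IsLeafAt G S a v')
    (hqb : IsQuiet G S b) : ¬ IsQuiet G S z := by
  intro hqz
  have hnd : ∀ q y, ¬ IsDiamond G S q w y := fun q y hD =>
    hS.not_adj_top_of_adj_isLeafAt hD hv' ha h.hasNeighbors h.isPrivateNeighbor₁
      h.isPrivateNeighbor₂ h.adj₁
  obtain ⟨r, hr, hrS⟩ :=
    hS.exists_third_of_isLeafAt ha h.isPrivateNeighbor₁.center_mem h.hasNeighbors.adj₁.symm
  have har : IsSharedNeighbor G S g r a := ⟨ha.notMem, hr.adj₃, hrS, hr.ne₂₃.symm⟩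
  obtain hlz | ⟨y, q, w', hy, hD⟩ := hqz.isLeafless_or h.isPrivateNeighbor₂.notMem
  swap
  · obtain rfl := hS.top_eq_of_isLeafAt h (Or.inr ⟨v', r, hv', ha, har⟩) hy hD
    exact hnd q y hD
  obtain ⟨x, hx, -⟩ := hS.exists_isLink_of_isLeafless h (Or.inr ⟨r, har⟩) hlz
  obtain hbl | ⟨y, q, w', hy, hD⟩ := hqb.isLeafless_or h.isPrivateNeighbor₁.notMem
  swap
  · obtain rfl := hS.top_eq_of_isLink h hv' ha har hx hy hD
    exact hnd q y hD
  have hsep := hS.separated_of_isMixedPair h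
  obtain ⟨u₁, u₂, hu⟩ := hS.exists_others h.adj₁.symm
  obtain ⟨b', hbn⟩ :=
    hS.exists_third_of_isPrivateNeighbor h.isPrivateNeighbor₁ h.isUndominated₁ h.adj₁
  have hzn := hS.hasNeighbors_of_isLink h hx
  obtain ⟨hg, hb, hz, hw, hv, hl, -, hbw, hzv⟩ := h
  obtain ⟨hxS, hxw, hxz, hxn⟩ := hx
  obtain ⟨haS, har, -, hrg⟩ := har
  exact hS.false_of_exchange [b, z] [g] [w, v] []

theorem exists_isSpecial (hS : IsExtremal G S) {k m b z w v : V}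
    (h : IsMixedPair G S k m b z w v) (hm : m ∈ S) (hqb : IsQuiet G S b) (hqz : IsQuiet G S z) :
    ∃ x, IsSpecial G S k x := by
  have hlz : IsLeafless G S z := by
    obtain hlz | ⟨y, q, w', hy, hD⟩ := hqz.isLeafless_or h.isPrivateNeighbor₂.notMem
    · exact hlz
    · obtain rfl := hS.top_eq_of_isLeafAt h (Or.inl hm) hy hD
      exact absurd h.adj₁ (hS.not_adj_top_of_adj_mem hD hm h.hasNeighbors h.isPrivateNeighbor₁
        h.isPrivateNeighbor₂)
  obtain ⟨x, hlink, hxk⟩ := hS.exists_isLink_of_isLeafless h (Or.inl hm) hlz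
  have hzn := hS.hasNeighbors_of_isLink h hlink
  obtain ⟨hxS, hxw, hxz, hxn⟩ := hlink
  obtain ⟨o, hx⟩ := hS.exists_third hxw hxz (by
    rintro rfl
    exact h.isUndominated₁.2 _ h.isPrivateNeighbor₂.adj h.isPrivateNeighbor₂.center_mem)
  have ho : o ∈ S := by grind [HasNeighbors]
  have hwS := h.isUndominated₁.1
  have hzS := h.isPrivateNeighbor₂.notMem
  exact ⟨x, m, b, z, w, v, o, h, hm, hzn, hx, ⟨ho, hxS, hx.adj₃, by grind [HasNeighbors]⟩, hlz, hqb,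
    by rintro rfl; exact hxk hx.adj₃⟩

end IsExtremal

end Special

section SpecialOwner

variable {V : Type*} {G : SimpleGraph V} {S : Finset V}

namespace IsExtremal

variable [Fintype V]

theorem eq_of_isSpecial (hS : IsExtremal G S) {k k' x : V} (h : IsSpecial G S k x)
    (h' : IsSpecial G S k' x) : k = k' := by
  obtain ⟨m, b, z, w, v, o, h⟩ := h
  obtain ⟨m', b', z', w', v', o', h'⟩ := h'
  have hxn := h.hasNeighbors_special
  have hxn' := h'.hasNeighbors_special
  obtain rfl : w = w' :=
    hS.eq_of_isUndominated_of_adj h.isUndominated₁ h'.isUndominated₁ hxn.adj₁ hxn'.adj₁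
  have hz := h.isPrivateNeighbor₂
  have hz' := h'.isPrivateNeighbor₂
  have ho' := h'.isPrivateNeighbor_special.center_mem
  obtain rfl : z = z' := by grind [HasNeighbors, IsPrivateNeighbor]
  exact hz'.eq_of_adj k hz.adj hz.center_mem

theorem owner_eq_mate_of_adj_mem (hS : IsExtremal G S) {k x m b z w v o t x₁ : V}
    (h : SpecialConfig G S k x m b z w v o) (ho : HasNeighbors G o t x x₁) (ht : t ∈ S) :
    o = m := by
  by_contra hne
  have hsep := hS.separated_of_isMixedPair h.toIsMixedPair
  obtain ⟨u₁, u₂, hu⟩ := hS.exists_others h.adj₁.symm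
  obtain ⟨⟨hk, hb, hz, hw, hv, hl, -, hbw, hzv⟩, hm, hzn, hxn, hx, hlz, -, hok⟩ := h
  exact hS.false_of_exchange [w, z] [k, o] [w, v] [x₁]

theorem not_isSharedNeighbor_of_owner (hS : IsExtremal G S) {k x m b z w v o x₁ n s : V}
    (h : SpecialConfig G S k x m b z w v o) (ho : HasNeighbors G o x x₁ n) (hx₁ : x₁ ∉ S) :
    ¬ IsSharedNeighbor G S o s n := by
  rintro ⟨hn, hns, hs, hso⟩
  obtain ⟨⟨hk, hb, hz, hw, hv, -, -, hbw, hzv⟩, hm, hzn, hxn, hx, hlz, -, hok⟩ := h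
  exact hS.false_of_exchange [x] [k, o] [w] [b, x₁]

theorem owner_eq_mate_or (hS : IsExtremal G S) {k x m b z w v o : V}
    (h : SpecialConfig G S k x m b z w v o) :
    o = m ∨ ∃ x₁ x₂, HasNeighbors G o x x₁ x₂ ∧ IsPrivateNeighbor G S o x₁ ∧
      IsPrivateNeighbor G S o x₂ := by
  have hx := h.isPrivateNeighbor_special
  by_cases hout : ∃ t, G.Adj o t ∧ t ∈ S
  · obtain ⟨t, hot, ht⟩ := hout
    obtain ⟨b', z', hn, hb', hz'⟩ :=
      hS.exists_isPrivateNeighbor_pair hx.center_mem ht hx.notMem hot hx.adj.symm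
    left
    obtain rfl | rfl | rfl := hn.eq_or_eq_or_eq x hx.adj.symm
    · exact absurd ht hx.notMem
    · exact hS.owner_eq_mate_of_adj_mem h hn ht
    · exact hS.owner_eq_mate_of_adj_mem h hn.swap ht
  · push Not at hout
    obtain ⟨x₁, x₂, hn⟩ := hS.exists_others hx.adj.symm
    have hx₁ := hout x₁ hn.adj₂
    have hx₂ := hout x₂ hn.adj₃
    refine Or.inr ⟨x₁, x₂, hn, ⟨hx.center_mem, hx₁, hn.adj₂.symm, fun s hadj hs => ?_⟩,
      ⟨hx.center_mem, hx₂, hn.adj₃.symm, fun s hadj hs => ?_⟩⟩ <;> by_contra hso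
    · exact hS.not_isSharedNeighbor_of_owner h hn.swap hx₂ ⟨hx₁, hadj, hs, hso⟩
    · exact hS.not_isSharedNeighbor_of_owner h hn hx₁ ⟨hx₂, hadj, hs, hso⟩

theorem separated_of_specialConfig (hS : IsExtremal G S) {k x m b z w v o q y w' : V}
    (h : SpecialConfig G S k x m b z w v o) (hD : IsDiamond G S q w' y) :
    (¬ G.Adj w' w ∧ ¬ G.Adj w w' ∧ ∀ t, G.Adj t w' → ¬ G.Adj t w) ∧
      ¬ G.Adj w' v ∧ ¬ G.Adj v w' ∧ ∀ t, G.Adj t w' → ¬ G.Adj t v := by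
  refine ⟨hS.separated_of_isLeafless hD.1 hD.2.1 h.isUndominated₁ ?_,
    hS.separated_of_isLeafless hD.1 hD.2.1 h.isUndominated₂ ?_⟩ <;> rintro rfl
  · exact hS.not_adj_top_of_adj_mem hD h.mate_mem h.hasNeighbors h.isPrivateNeighbor₁
      h.isPrivateNeighbor₂ h.adj₁
  · exact h.not_isLeafless hD.2.1

theorem not_isDiamond_of_isLeafAt_sibling (hS : IsExtremal G S) {k x m b z w v x' y q w' : V}
    (h : SpecialConfig G S k x m b z w v m) (hm : HasNeighbors G m k x x')
    (hx' : IsPrivateNeighbor G S m x') (hy : IsLeafAt G S y b) : ¬ IsDiamond G S q w' y := by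
  intro hD
  have hsep := hS.separated_of_isMixedPair h.toIsMixedPair
  have hsep' := hS.separated_of_specialConfig h hD
  obtain ⟨u₁, u₂, hu⟩ := hS.exists_others h.adj₁.symm
  obtain ⟨u₃, u₄, hu'⟩ := hS.exists_others h.adj₂.symm
  have hbn := hS.hasNeighbors_of_isDiamond h.isPrivateNeighbor₁ h.isUndominated₁ h.adj₁ hy hD
  obtain ⟨r', q₁, q₂, t₁, t₂, e, k', e', hd, -⟩ := hS.exists_diamondNeighborhood_of_isLeafAt hy hD
  obtain ⟨hw', -⟩ := hD
  obtain ⟨⟨hk, hb, hz, hw, hv, -, -, hbw, hzv⟩, hmS, hzn, hxn, hx, -, -, -⟩ := h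
  cases hd
  exact hS.false_of_exchange [x, z, y, w'] [k, m, q] [w, v, w'] [x']

theorem not_isDiamond_of_isLeafAt_mate (hS : IsExtremal G S) {k x m b z w v x' y q w' : V}
    (h : SpecialConfig G S k x m b z w v m) (hm : HasNeighbors G m k x x')
    (hx' : IsPrivateNeighbor G S m x') (hy : IsLeafAt G S y x') : ¬ IsDiamond G S q w' y := by
  intro hD
  have hsep := hS.separated_of_isMixedPair h.toIsMixedPair
  have hsep' := hS.separated_of_specialConfig h hD
  obtain ⟨u₁, u₂, hu⟩ := hS.exists_others h.adj₁.symm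
  obtain ⟨u₃, u₄, hu'⟩ := hS.exists_others h.adj₂.symm
  obtain ⟨p₁, p₂, hxn'⟩ := hS.exists_others hx'.adj
  obtain ⟨r', q₁, q₂, t₁, t₂, e, k', e', hd, -⟩ := hS.exists_diamondNeighborhood_of_isLeafAt hy hD
  obtain ⟨hw', -⟩ := hD
  obtain ⟨⟨hk, -, hz, hw, hv, -, -, hbw, hzv⟩, hmS, hzn, hxn, hx, -, -, -⟩ := h
  cases hd
  exact hS.false_of_exchange [x, z, y, w'] [k, m, q] [w, v, w'] [b]

theorem not_isLeafless_of_mate (hS : IsExtremal G S) {k x m b z w v x' : V}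
    (h : SpecialConfig G S k x m b z w v m) (hm : HasNeighbors G m k x x')
    (hx' : IsPrivateNeighbor G S m x') (hlb : IsLeafless G S b) : ¬ IsLeafless G S x' := by
  intro hlx'
  have hsep := hS.separated_of_isMixedPair h.toIsMixedPair
  have hx'w : ¬ G.Adj x' w := fun hadj =>
    hS.not_isLeafless_of_adj_pair h.isPrivateNeighbor₁.center_mem hm hx' h.isUndominated₁
      h.isUndominated₁ h.hasNeighbors_special.adj₁ hadj h.isLeafless h.isLeafless
  obtain ⟨u₁, u₂, hu⟩ := hS.exists_others h.adj₁.symm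
  obtain ⟨u₃, u₄, hu'⟩ := hS.exists_others h.adj₂.symm
  obtain ⟨p₁, p₂, hxn'⟩ := hS.exists_others hx'.adj
  obtain ⟨t, hbn⟩ :=
    hS.exists_third_of_isPrivateNeighbor h.isPrivateNeighbor₁ h.isUndominated₁ h.adj₁
  obtain ⟨⟨hk, hb, hz, hw, hv, hl, -, hbw, hzv⟩, hmS, hzn, hxn, hx, hlz, -, -⟩ := h
  by_cases ht : IsLink G S t b x'
  · obtain ⟨htS, htb, htx', htn⟩ := ht
    exact hS.false_of_exchange [x, z, t] [k, m] [w, v] []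
  · have ht' : G.Adj t x' → t ∉ S → ∃ s, G.Adj t s ∧ s ∉ S ∧ s ≠ b ∧ s ≠ x' := by
      intro htx' htS
      by_contra! hcon
      exact ht ⟨htS, hbn.adj₃.symm, htx', fun s hs hsS => or_iff_not_imp_left.2 (hcon s hs hsS)⟩
    clear ht hl hlz
    exact hS.false_of_exchange [b, z, x'] [k, m] [w, v] []

theorem not_isQuiet_of_mate (hS : IsExtremal G S) {k x m b z w v x' : V}
    (h : SpecialConfig G S k x m b z w v m) (hm : HasNeighbors G m k x x')
    (hx' : IsPrivateNeighbor G S m x') : ¬ IsQuiet G S x' := by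
  intro hq
  obtain hlx' | ⟨y, q, w', hy, hD⟩ := hq.isLeafless_or hx'.notMem
  · obtain hlb | ⟨y, q, w', hy, hD⟩ := h.isQuiet₁.isLeafless_or h.isPrivateNeighbor₁.notMem
    · exact hS.not_isLeafless_of_mate h hm hx' hlb hlx'
    · exact hS.not_isDiamond_of_isLeafAt_sibling h hm hx' hy hD
  · exact hS.not_isDiamond_of_isLeafAt_mate h hm hx' hy hD

theorem eq_of_isLeafAt_mate (hS : IsExtremal G S) {k x m b z w v x' v' y q : V}
    (h : SpecialConfig G S k x m b z w v m) (hm : HasNeighbors G m k x x')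
    (hx' : IsPrivateNeighbor G S m x') (hv' : IsUndominated G S v') (hadj : G.Adj x' v')
    (hy : IsLeafAt G S y x') (hq : q ∈ S) (hyq : G.Adj y q) : v' = v := by
  by_contra hne
  have hl' : ¬ IsLeafless G S v' :=
    hS.not_isLeafless_of_adj_pair h.isPrivateNeighbor₁.center_mem hm hx' h.isUndominated₁ hv'
      h.hasNeighbors_special.adj₁ hadj h.isLeafless
  have hwv' : w ≠ v' := by rintro rfl; exact hl' h.isLeafless
  have hsep := hS.separated_of_isMixedPair h.toIsMixedPair
  have hsep' := hS.separated_of_isLeafless h.isUndominated₁ h.isLeafless hv' hwv'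
  have hvv' : ∀ t, G.Adj t v → ¬ G.Adj t v' := fun t htv htv' =>
    hne (hS.eq_of_isUndominated_of_adj hv' h.isUndominated₂ htv' htv)
  obtain ⟨u₁, u₂, hu⟩ := hS.exists_others h.adj₁.symm
  obtain ⟨u₅, u₆, hu''⟩ := hS.exists_others hadj.symm
  have hx'n := hS.hasNeighbors hx'.adj hadj hy.adj.symm
    (hyz := by rintro rfl; exact hv'.2 _ hyq hq)
  obtain ⟨⟨hk, hb, hz, hw, hv, hl, -, hbw, hzv⟩, hmS, hzn, hxn, hx, hlz, -, -⟩ := h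
  clear hl'
  exact hS.false_of_exchange [w, z, x', y] [k, m] [w, v, v'] []

theorem exists_isPrivateNeighbor_pair_of_mate (hS : IsExtremal G S)
    {k x m b z w v x' v' y q : V}
    (h : SpecialConfig G S k x m b z w v m) (hm : HasNeighbors G m k x x')
    (hx' : IsPrivateNeighbor G S m x') (hv' : IsUndominated G S v') (hadj : G.Adj x' v')
    (hy : IsLeafAt G S y x') (hq : q ∈ S) (hyq : G.Adj y q) :
    ∃ q₁ q₂, HasNeighbors G q y q₁ q₂ ∧ IsPrivateNeighbor G S q q₁ ∧
      IsPrivateNeighbor G S q q₂ := by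
  obtain rfl := hS.eq_of_isLeafAt_mate h hm hx' hv' hadj hy hq hyq
  obtain ⟨q₁, q₂, hn, h₁, h₂⟩ := hS.exists_isPrivateNeighbor_of_isLeafAt hy hq hyq
  refine ⟨q₁, q₂, hn, h₁, hq, h₂, hn.adj₃.symm, ?_⟩
  by_contra! hs
  obtain ⟨s, hq₂s, hs, hsq⟩ := hs
  have hsep := hS.separated_of_isMixedPair h.toIsMixedPair
  obtain ⟨u₁, u₂, hu⟩ := hS.exists_others h.adj₁.symm
  obtain ⟨u₃, u₄, hu'⟩ := hS.exists_others h.adj₂.symm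
  obtain ⟨r, hr, hrS⟩ := hS.exists_third_of_isLeafAt hy hq hyq
  have hx'n := hS.hasNeighbors hx'.adj hadj hy.adj.symm
    (hyz := by rintro rfl; exact hv'.2 _ hyq hq)
  have hout := fun t => hS.notMem_of_adj_of_isLeafAt (t := t) hy hq hyq
  obtain ⟨⟨hk, hb, hz, hw, -, -, -, hbw, hzv⟩, hmS, hzn, hxn, hx, -, -, -⟩ := h
  exact hS.false_of_pair_exchange [x, z, y] [k, m, q] [w, v'] [b, q₁] [(k, m), (m, k)]
    [(x, z), (z, x), (y, r), (r, y)]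

end IsExtremal

end SpecialOwner

section SharedOwner

variable {V : Type*} {G : SimpleGraph V} {S : Finset V}

namespace IsExtremal

variable [Fintype V]

theorem not_isLeafless_of_owner_of_adj (hS : IsExtremal G S) {k x m b z w v o x₁ x₂ w₂ : V}
    (h : SpecialConfig G S k x m b z w v o) (ho : HasNeighbors G o x x₁ x₂)
    (hx₁ : IsPrivateNeighbor G S o x₁) (hx₂ : IsPrivateNeighbor G S o x₂)
    (hadj₁ : G.Adj x₁ w) (hw₂ : IsUndominated G S w₂) (hadj₂ : G.Adj x₂ w₂) :
    ¬ IsLeafless G S w₂ := by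
  intro hl₂
  obtain ⟨u₁, u₂, hu⟩ := hS.exists_others h.adj₁.symm
  obtain ⟨u₃, u₄, hu'⟩ := hS.exists_others hadj₂.symm
  have hsep := hS.separated_of_isLeafless h.isUndominated₁ h.isLeafless hw₂
  obtain ⟨⟨hk, hb, hz, hw, hv, hl, -, hbw, hzv⟩, hmS, hzn, hxn, hx, -, -, hok⟩ := h
  obtain rfl | hne := eq_or_ne w w₂
  · clear hl hl₂ hsep
    grind (splits := 20) [cases eager HasNeighbors, cases eager IsPrivateNeighbor,
      → SimpleGraph.Adj.symm]
  · specialize hsep hne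
    exact hS.false_of_exchange [x, w, w₂] [k, o] [w, w₂] []

theorem not_isLeafless_of_owner (hS : IsExtremal G S) {k x m b z w v o x₁ x₂ w₁ w₂ : V}
    (h : SpecialConfig G S k x m b z w v o) (ho : HasNeighbors G o x x₁ x₂)
    (hx₁ : IsPrivateNeighbor G S o x₁) (hx₂ : IsPrivateNeighbor G S o x₂)
    (hw₁ : IsUndominated G S w₁) (hl₁ : IsLeafless G S w₁) (hw₂ : IsUndominated G S w₂)
    (hadj₁ : G.Adj x₁ w₁) (hadj₂ : G.Adj x₂ w₂) : ¬ IsLeafless G S w₂ := by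
  intro hl₂
  obtain rfl | h₁ := eq_or_ne w w₁
  · exact hS.not_isLeafless_of_owner_of_adj h ho hx₁ hx₂ hadj₁ hw₂ hadj₂ hl₂
  obtain rfl | h₂ := eq_or_ne w w₂
  · exact hS.not_isLeafless_of_owner_of_adj h ho.swap hx₂ hx₁ hadj₂ hw₁ hadj₁ hl₁
  obtain ⟨u₁, u₂, hu⟩ := hS.exists_others h.adj₁.symm
  obtain ⟨u₃, u₄, hu'⟩ := hS.exists_others hadj₁.symm
  obtain ⟨u₅, u₆, hu''⟩ := hS.exists_others hadj₂.symm
  have hsep₁ := hS.separated_of_isLeafless h.isUndominated₁ h.isLeafless hw₁ h₁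
  have hsep₂ := hS.separated_of_isLeafless h.isUndominated₁ h.isLeafless hw₂ h₂
  obtain ⟨⟨hk, hb, hz, hw, hv, hl, -, hbw, hzv⟩, hmS, hzn, hxn, hx, -, -, hok⟩ := h
  obtain rfl | h₁₂ := eq_or_ne w₁ w₂
  · clear hl hl₂ hsep₂
    exact hS.false_of_exchange [x, w₁] [k, o] [w, w₁] [b]
  · have hsep₁₂ := hS.separated_of_isLeafless hw₁ hl₁ hw₂ h₁₂
    clear hl
    exact hS.false_of_exchange [x, w₁, w₂] [k, o] [w, w₁, w₂] [b]

theorem ne_of_specialConfig_of_specialConfig (hS : IsExtremal G S)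
    {k x m b z w v o k' x' m' b' z' w' v' : V} (h : SpecialConfig G S k x m b z w v o)
    (h' : SpecialConfig G S k' x' m' b' z' w' v' o) (hne : x ≠ x') : w ≠ w' := by
  rintro rfl
  obtain ⟨u₁, u₂, hu⟩ := hS.exists_others h.adj₁.symm
  have hb := h.isPrivateNeighbor₁
  have hb' := h'.isPrivateNeighbor₁
  have hx := h.isPrivateNeighbor_special
  have hx' := h'.isPrivateNeighbor_special
  have hbx' : b ≠ x' := by
    rintro rfl
    exact h.owner_ne (hb.eq_of_adj o hx'.adj hx'.center_mem)
  have hb'x : b' ≠ x := by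
    rintro rfl
    exact h'.owner_ne (hb'.eq_of_adj o hx.adj hx.center_mem)
  have hbb' : b ≠ b' := by
    rintro rfl
    obtain rfl := hb'.eq_of_adj k hb.adj hb.center_mem
    obtain rfl : z = z' := by
      have hz := h'.hasNeighbors.eq_or_eq_or_eq z h.hasNeighbors.adj₃
      have hzm : z ≠ m' := fun hzm => h.isPrivateNeighbor₂.notMem (hzm ▸ h'.mate_mem)
      exact (hz.resolve_left hzm).resolve_left h.hasNeighbors.ne₂₃.symm
    obtain hk | rfl | hxx := h.hasNeighbors₂.eq_or_eq_or_eq x' h'.hasNeighbors₂.adj₃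
    · exact hx'.notMem (hk ▸ hb.center_mem)
    · exact h.isUndominated₂.2 o hx'.adj hx'.center_mem
    · exact hne hxx.symm
  have hwb' := hu.eq_or_eq_or_eq b' h'.adj₁.symm
  have hwx := hu.eq_or_eq_or_eq x h.hasNeighbors_special.adj₁.symm
  have hwx' := hu.eq_or_eq_or_eq x' h'.hasNeighbors_special.adj₁.symm
  have hbx : b ≠ x := by
    rintro rfl
    exact h.owner_ne (hb.eq_of_adj o hx.adj hx.center_mem)
  have hb'x' : b' ≠ x' := by
    rintro rfl
    exact h'.owner_ne (hb'.eq_of_adj o hx'.adj hx'.center_mem)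
  grind

theorem exists_isLink_of_owner (hS : IsExtremal G S) {k x m b z w v o x' x₂ w' v' : V}
    (h : SpecialConfig G S k x m b z w v o) (ho : HasNeighbors G o x x' x₂)
    (hx' : IsPrivateNeighbor G S o x') (hx₂ : IsPrivateNeighbor G S o x₂)
    (hw' : IsUndominated G S w') (hl' : IsLeafless G S w') (hadj : G.Adj x' w') (hne : w ≠ w')
    (hv' : IsUndominated G S v') (hlv' : ¬ IsLeafless G S v') (hadj₂ : G.Adj x₂ v')
    (hl₂ : IsLeafless G S x₂) : ∃ t, IsLink G S t w' x₂ := by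
  by_contra! hcon
  have hlink : ∀ t, G.Adj t w' → G.Adj t x₂ → t ∉ S →
      ∃ u, G.Adj t u ∧ u ∉ S ∧ u ≠ w' ∧ u ≠ x₂ := by
    intro t htw ht₂ ht
    by_contra! hu
    exact hcon t ⟨ht, htw, ht₂, fun u htu huS => or_iff_not_imp_left.2 (hu u htu huS)⟩
  have hwv' : w ≠ v' := by rintro rfl; exact hlv' h.isLeafless
  have hw'v' : w' ≠ v' := by rintro rfl; exact hlv' hl'
  have hsep := hS.separated_of_isLeafless h.isUndominated₁ h.isLeafless hw' hne
  have hsep₁ := hS.separated_of_isLeafless h.isUndominated₁ h.isLeafless hv' hwv'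
  have hsep₂ := hS.separated_of_isLeafless hw' hl' hv' hw'v'
  obtain ⟨u₁, u₂, hu⟩ := hS.exists_others h.adj₁.symm
  obtain ⟨u₃, u₄, hu'⟩ := hS.exists_others hadj.symm
  obtain ⟨x₃, hx₃⟩ := hS.exists_third_of_isPrivateNeighbor hx₂ hv' hadj₂
  obtain ⟨⟨hk, -, hz, hw, -, -, -, hbw, -⟩, hmS, hzn, hxn, hx, -, -, hok⟩ := h
  clear hcon hlv'
  exact hS.false_of_exchange [x, w', x₂] [k, o] [w, w', v'] [b]

set_option maxHeartbeats 1000000 in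
-- an exchange with five added and four newly dominated vertices
theorem top_eq_of_owner (hS : IsExtremal G S) {k x m b z w v o x' x₂ w' v' y q w'' : V}
    (h : SpecialConfig G S k x m b z w v o) (ho : HasNeighbors G o x x' x₂)
    (hx' : IsPrivateNeighbor G S o x') (hx₂ : IsPrivateNeighbor G S o x₂)
    (hw' : IsUndominated G S w') (hl' : IsLeafless G S w') (hadj : G.Adj x' w') (hne : w ≠ w')
    (hv' : IsUndominated G S v') (hlv' : ¬ IsLeafless G S v') (hadj₂ : G.Adj x₂ v')
    (hy : IsLeafAt G S y x₂) (hD : IsDiamond G S q w'' y) : w'' = w' := by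
  by_contra hne'
  have hwv' : w ≠ v' := by rintro rfl; exact hlv' h.isLeafless
  have hw'v' : w' ≠ v' := by rintro rfl; exact hlv' hl'
  have hw''v' : w'' ≠ v' := by rintro rfl; exact hlv' hD.2.1
  have hsep := hS.separated_of_isLeafless h.isUndominated₁ h.isLeafless hw' hne
  have hsep₁ := hS.separated_of_isLeafless h.isUndominated₁ h.isLeafless hv' hwv'
  have hsep₂ := hS.separated_of_isLeafless hw' hl' hv' hw'v'
  have hsep₃ := (hS.separated_of_specialConfig h hD).1
  have hsep₄ := hS.separated_of_isLeafless hD.1 hD.2.1 hv' hw''v'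
  have hsep₅ := hS.separated_of_isLeafless hD.1 hD.2.1 hw' hne'
  obtain ⟨u₁, u₂, hu⟩ := hS.exists_others h.adj₁.symm
  obtain ⟨u₃, u₄, hu'⟩ := hS.exists_others hadj.symm
  obtain ⟨u₅, u₆, hu''⟩ := hS.exists_others hadj₂.symm
  have hx₃ := hS.hasNeighbors_of_isDiamond hx₂ hv' hadj₂ hy hD
  obtain ⟨r', q₁, q₂, t₁, t₂, e, k', e', hd, -⟩ := hS.exists_diamondNeighborhood_of_isLeafAt hy hD
  obtain ⟨hw'', -⟩ := hD
  obtain ⟨⟨hk, hb, hz, hw, -, -, -, hbw, -⟩, hmS, hzn, hxn, hx, -, -, hok⟩ := h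
  cases hd
  clear hlv'
  exact hS.false_of_exchange [x, w', x₂, y, w''] [k, o, q] [w, w', v', w''] [b]

theorem not_isQuiet_of_owner (hS : IsExtremal G S)
    {k x m b z w v o k' x' m' b' z' w' v' x₂ v'' : V} (h : SpecialConfig G S k x m b z w v o)
    (h' : SpecialConfig G S k' x' m' b' z' w' v' o) (ho : HasNeighbors G o x x' x₂)
    (hx₂ : IsPrivateNeighbor G S o x₂) (hv'' : IsUndominated G S v'')
    (hlv'' : ¬ IsLeafless G S v'') (hadj : G.Adj x₂ v'') : ¬ IsQuiet G S x₂ := by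
  intro hq
  have hne := hS.ne_of_specialConfig_of_specialConfig h h' ho.ne₁₂
  have hw' := h'.isUndominated₁
  obtain hl₂ | ⟨y, q, w'', hy, hD⟩ := hq.isLeafless_or hx₂.notMem
  swap
  · obtain rfl := hS.top_eq_of_owner h ho h'.isPrivateNeighbor_special hx₂ hw' h'.isLeafless
      h'.hasNeighbors_special.adj₁ hne hv'' hlv'' hadj hy hD
    exact hS.not_adj_top_of_adj_mem hD h'.mate_mem h'.hasNeighbors h'.isPrivateNeighbor₁
      h'.isPrivateNeighbor₂ h'.adj₁
  have hw := h.isUndominated₁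
  obtain ⟨t', ht'⟩ := hS.exists_isLink_of_owner h ho h'.isPrivateNeighbor_special hx₂ hw'
    h'.isLeafless h'.hasNeighbors_special.adj₁ hne hv'' hlv'' hadj hl₂
  have ho' : HasNeighbors G o x' x x₂ := by grind [HasNeighbors]
  obtain ⟨t, ht⟩ := hS.exists_isLink_of_owner h' ho' h.isPrivateNeighbor_special hx₂ hw
    h.isLeafless h.hasNeighbors_special.adj₁ hne.symm hv'' hlv'' hadj hl₂
  obtain ⟨x₃, hx₃⟩ := hS.exists_third_of_isPrivateNeighbor hx₂ hv'' hadj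
  have eq_x₃ : ∀ u s, IsUndominated G S u → IsLeafless G S u → IsLink G S s u x₂ → s = x₃ := by
    intro u s hu hlu hs
    obtain rfl | rfl | rfl := hx₃.eq_or_eq_or_eq s hs.adj₂.symm
    · exact absurd hx₂.center_mem hs.notMem
    · exact absurd hs.adj₁.symm (hS.not_adj_of_isLeafless hu hv'' hlu)
    · rfl
  obtain rfl := eq_x₃ w t hw h.isLeafless ht
  obtain rfl := eq_x₃ w' t' hw' h'.isLeafless ht'
  exact hne (hS.eq_of_isUndominated_of_adj hw hw' ht.adj₁ ht'.adj₁)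

end IsExtremal

end SharedOwner

section UndominatedEdge

variable {V : Type*} {G : SimpleGraph V} {S : Finset V}

/-- An edge `v v'` between undominated vertices, seen from `v`: besides `v'`, the vertex `v` has a
leaf `a`, next to `g` and `h` in `S`, and a neighbour `b` that is no leaf. The vertices `h₁` and
`h₂` are private neighbours of `h`. -/
structure IsUndominatedEdge (G : SimpleGraph V) (S : Finset V) (v a v' b g h h₁ h₂ : V) :
    Prop where
  isUndominated₁ : IsUndominated G S v
  isUndominated₂ : IsUndominated G S v'
  hasNeighbors : HasNeighbors G v a v' b
  isLeafAt : IsLeafAt G S a v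
  hasNeighbors_leaf : HasNeighbors G a v g h
  mem : g ∈ S
  hasNeighbors_support : HasNeighbors G h a h₁ h₂
  isPrivateNeighbor₁ : IsPrivateNeighbor G S h h₁
  isPrivateNeighbor₂ : IsPrivateNeighbor G S h h₂
  not_isLeafAt : ¬ IsLeafAt G S b v

theorem IsUndominatedEdge.swap {v a v' b g h h₁ h₂ : V}
    (he : IsUndominatedEdge G S v a v' b g h h₁ h₂) :
    IsUndominatedEdge G S v a v' b g h h₂ h₁ where
  __ := he
  hasNeighbors_support := he.hasNeighbors_support.swap
  isPrivateNeighbor₁ := he.isPrivateNeighbor₂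
  isPrivateNeighbor₂ := he.isPrivateNeighbor₁

theorem IsUndominatedEdge.exists_adj {v a v' b g h h₁ h₂ : V}
    (he : IsUndominatedEdge G S v a v' b g h h₁ h₂) : ∃ s ∉ S, G.Adj b s ∧ s ≠ v := by
  by_contra! hcon
  exact he.not_isLeafAt ⟨he.isUndominated₁.2 b he.hasNeighbors.adj₃, he.isUndominated₁.1,
    he.hasNeighbors.adj₃.symm, fun s hbs hs => hcon s hs hbs⟩

namespace IsExtremal

variable [Fintype V]

theorem not_isLeafless_of_isUndominatedEdge (hS : IsExtremal G S) {v a v' b g h h₁ h₂ : V}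
    (he : IsUndominatedEdge G S v a v' b g h h₁ h₂) : ¬ IsLeafless G S v' := fun hl =>
  hS.not_adj_of_isLeafless he.isUndominated₂ he.isUndominated₁ hl he.hasNeighbors.adj₂.symm

theorem separated_of_isUndominatedEdge (hS : IsExtremal G S) {v a v' b g h h₁ h₂ w : V}
    (he : IsUndominatedEdge G S v a v' b g h h₁ h₂) (hw : IsUndominated G S w)
    (hl : IsLeafless G S w) :
    (w ≠ v ∧ ¬ G.Adj w v ∧ ¬ G.Adj v w ∧ ∀ t, G.Adj t w → ¬ G.Adj t v) ∧
      w ≠ v' ∧ ¬ G.Adj w v' ∧ ¬ G.Adj v' w ∧ ∀ t, G.Adj t w → ¬ G.Adj t v' := by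
  have hwv : w ≠ v := by rintro rfl; exact hl.not_isLeafAt he.isLeafAt
  have hwv' : w ≠ v' := by rintro rfl; exact hS.not_isLeafless_of_isUndominatedEdge he hl
  exact ⟨⟨hwv, hS.separated_of_isLeafless hw hl he.isUndominated₁ hwv⟩,
    hwv', hS.separated_of_isLeafless hw hl he.isUndominated₂ hwv'⟩

theorem not_isDiamond_of_isUndominatedEdge (hS : IsExtremal G S) {v a v' b g h h₁ h₂ w q y : V}
    (he : IsUndominatedEdge G S v a v' b g h h₁ h₂) (hadj : G.Adj h₁ w) :
    ¬ IsDiamond G S q w y := fun hD =>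
  hS.not_adj_top_of_adj_isLeafAt hD he.isUndominated₁ he.isLeafAt he.hasNeighbors_support
    he.isPrivateNeighbor₁ he.isPrivateNeighbor₂ hadj

theorem not_isDiamond_of_isLeafAt_support (hS : IsExtremal G S) {v a v' b g h h₁ h₂ w y q w' : V}
    (he : IsUndominatedEdge G S v a v' b g h h₁ h₂) (hw : IsUndominated G S w)
    (hadj : G.Adj h₁ w) (hwv : w ≠ v) (hwv' : w ≠ v') (hy : IsLeafAt G S y h₁) :
    ¬ IsDiamond G S q w' y := by
  intro hD
  have hne : w' ≠ w := by rintro rfl; exact hS.not_isDiamond_of_isUndominatedEdge he hadj hD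
  have hsep₁ : ∀ t, G.Adj t w → ¬ G.Adj t v' := fun t htw htv =>
    hwv' (hS.eq_of_isUndominated_of_adj hw he.isUndominated₂ htw htv)
  have hsep := hS.separated_of_isLeafless hD.1 hD.2.1 hw hne
  have hsep' := hS.separated_of_isUndominatedEdge he hD.1 hD.2.1
  obtain ⟨u₁, u₂, hu⟩ := hS.exists_others hadj.symm
  obtain ⟨u₃, u₄, hu'⟩ := hS.exists_others he.hasNeighbors.adj₂.symm
  have hn := hS.hasNeighbors_of_isDiamond he.isPrivateNeighbor₁ hw hadj hy hD
  obtain ⟨r', q₁, q₂, t₁, t₂, e, k', e', hd, -⟩ := hS.exists_diamondNeighborhood_of_isLeafAt hy hD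
  obtain ⟨hw', -⟩ := hD
  obtain ⟨s, hs, hbs, hsv⟩ := he.exists_adj
  obtain ⟨hv, hv', hvn, ha, han, -, hhn, hh₁, hh₂, -⟩ := he
  cases hd
  exact hS.false_of_exchange [v, h₁, y, w'] [h, q] [v, v', w, w'] [h₂]

theorem isLink_of_isQuiet (hS : IsExtremal G S) {v a v' b g h h₁ h₂ w : V}
    (he : IsUndominatedEdge G S v a v' b g h h₁ h₂) (hw : IsUndominated G S w)
    (hadj : G.Adj h₁ w) (hwv : w ≠ v) (hwv' : w ≠ v') (hq : IsQuiet G S h₁) :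
    IsLink G S b v h₁ := by
  obtain hl | ⟨y, q, w', hy, hD⟩ := hq.isLeafless_or he.isPrivateNeighbor₁.notMem
  swap
  · exact absurd hD (hS.not_isDiamond_of_isLeafAt_support he hw hadj hwv hwv' hy)
  by_contra hcon
  have hlink : ¬ (G.Adj b h₁ ∧ ∀ t, G.Adj b t → t ∉ S → t = v ∨ t = h₁) := fun ⟨hbh, heq⟩ =>
    hcon ⟨he.isUndominated₁.2 b he.hasNeighbors.adj₃, he.hasNeighbors.adj₃.symm, hbh, heq⟩
  have hsep : ∀ t, G.Adj t w → ¬ G.Adj t v' := fun t htw htv =>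
    hwv' (hS.eq_of_isUndominated_of_adj hw he.isUndominated₂ htw htv)
  obtain ⟨u₃, u₄, hu'⟩ := hS.exists_others he.hasNeighbors.adj₂.symm
  obtain ⟨z, hn⟩ := hS.exists_third_of_isPrivateNeighbor he.isPrivateNeighbor₁ hw hadj
  obtain ⟨s, hs, hbs, hsv⟩ := he.exists_adj
  obtain ⟨hv, hv', hvn, -, han, -, hhn, hh₁, hh₂, -⟩ := he
  clear hcon
  exact hS.false_of_exchange [v, h₁] [h] [v, v', w] [h₂]

theorem not_isQuiet_of_adj_support (hS : IsExtremal G S) {v a v' g h h₁ h₂ : V}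
    (he : IsUndominatedEdge G S v a v' h₂ g h h₁ h₂) : ¬ IsQuiet G S h₁ := by
  intro hq
  have hsep : ∀ t, G.Adj t v → ¬ G.Adj t v' := fun t htv htv' =>
    he.hasNeighbors.adj₂.ne
      (hS.eq_of_isUndominated_of_adj he.isUndominated₁ he.isUndominated₂ htv htv')
  obtain ⟨u₃, u₄, hu'⟩ := hS.exists_others he.hasNeighbors.adj₂.symm
  obtain hl | ⟨y, q, w', hy, hD⟩ := hq.isLeafless_or he.isPrivateNeighbor₁.notMem
  · obtain ⟨z₂, z₃, hn⟩ := hS.exists_others he.isPrivateNeighbor₁.adj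
    obtain ⟨hv, hv', hvn, -, han, -, hhn, hh₁, hh₂, -⟩ := he
    clear hq
    exact hS.false_of_exchange [v, h₁] [h] [v, v'] []
  · have hnd : ¬ G.Adj h₁ w' := fun hadj => hS.not_isDiamond_of_isUndominatedEdge he hadj hD
    have hsep' := hS.separated_of_isUndominatedEdge he hD.1 hD.2.1
    obtain ⟨z₃, hn⟩ := hS.exists_third he.isPrivateNeighbor₁.adj hy.adj.symm
      (ne_of_mem_of_not_mem he.isPrivateNeighbor₁.center_mem hy.notMem)
    obtain ⟨r', q₁, q₂, t₁, t₂, e, k', e', hd, -⟩ :=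
      hS.exists_diamondNeighborhood_of_isLeafAt hy hD
    obtain ⟨hw', -⟩ := hD
    obtain ⟨hv, hv', hvn, -, han, -, hhn, hh₁, hh₂, -⟩ := he
    cases hd
    clear hq
    exact hS.false_of_exchange [v, y, w'] [h, q] [v, v', w'] [h]

theorem not_isLeafless_of_adj_support (hS : IsExtremal G S) {v a v' g h h₁ h₂ w : V}
    (he : IsUndominatedEdge G S v a v' h₂ g h h₁ h₂) (hw : IsUndominated G S w)
    (hadj : G.Adj h₁ w) : ¬ IsLeafless G S w := by
  intro hl
  have hsep := hS.separated_of_isUndominatedEdge he hw hl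
  obtain ⟨u₃, u₄, hu'⟩ := hS.exists_others he.hasNeighbors.adj₂.symm
  obtain ⟨u₁, u₂, hu⟩ := hS.exists_others hadj.symm
  obtain ⟨hv, hv', hvn, -, han, -, hhn, -, hh₂, -⟩ := he
  exact hS.false_of_exchange [v, w] [h] [v, v', w] [h]

theorem exists_isPrivateNeighbor_pair_of_support (hS : IsExtremal G S)
    {v a v' b g h h₁ h₂ w y q : V} (he : IsUndominatedEdge G S v a v' b g h h₁ h₂)
    (hw : IsUndominated G S w) (hl : IsLeafless G S w) (hadj : G.Adj h₁ w) (hadj' : G.Adj h₂ v')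
    (hq : IsQuiet G S h₂) (hy : IsLeafAt G S y h₁) (hqS : q ∈ S) (hyq : G.Adj y q) :
    ∃ q₁ q₂, HasNeighbors G q y q₁ q₂ ∧ IsPrivateNeighbor G S q q₁ ∧
      IsPrivateNeighbor G S q q₂ := by
  have hmix : IsMixedPair G S h a h₁ h₂ w v' :=
    ⟨he.hasNeighbors_support, he.isPrivateNeighbor₁, he.isPrivateNeighbor₂, hw, he.isUndominated₂,
      hl, hS.not_isLeafless_of_isUndominatedEdge he, hadj, hadj'⟩
  have hag : IsSharedNeighbor G S h g a :=
    ⟨he.isLeafAt.notMem, he.hasNeighbors_leaf.adj₂, he.mem, he.hasNeighbors_leaf.ne₂₃⟩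
  have hlh : IsLeafless G S h₂ := by
    obtain hlh | ⟨y', q', w', hy', hD⟩ := hq.isLeafless_or he.isPrivateNeighbor₂.notMem
    · exact hlh
    · obtain rfl := hS.top_eq_of_isLeafAt hmix
        (Or.inr ⟨v, g, he.isUndominated₁, he.isLeafAt, hag⟩) hy' hD
      exact absurd hD (hS.not_isDiamond_of_isUndominatedEdge he hadj)
  obtain ⟨x, hx, -⟩ := hS.exists_isLink_of_isLeafless hmix (Or.inr ⟨g, hag⟩) hlh
  obtain ⟨q₁, q₂, hqn, hq₁, hq₂⟩ := hS.exists_isPrivateNeighbor_of_isLeafAt hy hqS hyq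
  refine ⟨q₁, q₂, hqn, hq₁, hqS, hq₂, hqn.adj₃.symm, ?_⟩
  by_contra! hcon
  obtain ⟨s, hs⟩ := hcon
  have hout := fun t => hS.notMem_of_adj_of_isLeafAt (t := t) hy hqS hyq
  obtain ⟨r, hr, hrS⟩ := hS.exists_third_of_isLeafAt hy hqS hyq
  have hqa : ¬ G.Adj a q := by
    intro hqa
    obtain ⟨g₁, g₂, hgn, hg₁, hg₂⟩ :=
      hS.exists_isPrivateNeighbor_pair_of_isLeafAt he.isUndominated₁ he.isLeafAt hqS hqa
    grind [HasNeighbors, IsPrivateNeighbor, IsLeafAt]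
  have hn := hS.hasNeighbors he.isPrivateNeighbor₁.adj hadj hy.adj.symm
    (ne_of_mem_of_not_mem he.isPrivateNeighbor₁.center_mem hw.1)
    (ne_of_mem_of_not_mem he.isPrivateNeighbor₁.center_mem hy.notMem)
    (by rintro rfl; exact hw.2 q hyq hqS)
  have hn' := hS.hasNeighbors_of_isLink hmix hx
  obtain ⟨u₃, u₄, hu'⟩ := hS.exists_others hadj'.symm
  obtain ⟨u₁, u₂, hu⟩ := hS.exists_others hadj.symm
  have hsep := (hS.separated_of_isUndominatedEdge he hw hl).2
  have hout' := fun t => hS.notMem_of_adj_of_isLeafAt (t := t) he.isLeafAt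
    he.isPrivateNeighbor₁.center_mem he.hasNeighbors_leaf.adj₃
  obtain ⟨hxS, hxw, hxh, hxn⟩ := hx
  obtain ⟨-, hv', -, -, han, hg, hhn, hh₁, hh₂, -⟩ := he
  clear hq hmix hlh
  exact hS.false_of_pair_exchange [h₂, y] [h, q] [v'] [q₁] [] [(y, r)]

end IsExtremal

end UndominatedEdge

section Weights

variable {V : Type*} {G : SimpleGraph V} {S : Finset V}

/-- `b` is a private neighbour of some vertex. -/
def IsPrivate (G : SimpleGraph V) (S : Finset V) (b : V) : Prop :=
  ∃ u, IsPrivateNeighbor G S u b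

/-- `y` is a live leaf at the private neighbour `b`, that is, a leaf which is not the third
neighbour of a diamond. -/
structure IsLiveLeaf (G : SimpleGraph V) (S : Finset V) (y b : V) : Prop where
  isLeafAt : IsLeafAt G S y b
  isPrivate : IsPrivate G S b
  not_isDiamond : ∀ q w, ¬ IsDiamond G S q w y

open Classical in
/-- What an undominated vertex demands from each of its private neighbours. -/
noncomputable def demand (G : SimpleGraph V) (S : Finset V) (v : V) : ℤ :=
  if IsLeafless G S v then 4 else if ∃! a, IsLeafAt G S a v then 2 else 0

open Classical in
/-- What a vertex gains from being special. -/
noncomputable def surcharge (G : SimpleGraph V) (S : Finset V) (x : V) : ℤ :=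
  if ∃ k, IsSpecial G S k x then 2 else 0

open Classical in
/-- The number of neighbours of `u` in `S`. -/
noncomputable def innerDegree (G : SimpleGraph V) (S : Finset V) (u : V) : ℤ :=
  ∑ t ∈ S with G.Adj u t, 1

section Counts

variable [Fintype V]

open Classical in
/-- The number of private neighbours of `u`. -/
noncomputable def privateCount (G : SimpleGraph V) (S : Finset V) (u : V) : ℤ :=
  ∑ b with IsPrivateNeighbor G S u b, 1

open Classical in
/-- The number of neighbours of `v` which are private neighbours of some vertex. -/
noncomputable def privateDegree (G : SimpleGraph V) (S : Finset V) (v : V) : ℤ :=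
  ∑ b with G.Adj v b ∧ IsPrivate G S b, 1

open Classical in
/-- The total demand made on `b`. -/
noncomputable def demandAt (G : SimpleGraph V) (S : Finset V) (b : V) : ℤ :=
  ∑ v with IsUndominated G S v ∧ G.Adj b v, demand G S v

open Classical in
/-- What the neighbours of a live leaf `y` in `S` pay through `y`: each one pays the number of its
private neighbours. -/
noncomputable def leafRelief (G : SimpleGraph V) (S : Finset V) (y : V) : ℤ :=
  ∑ q ∈ S with G.Adj y q, privateCount G S q

open Classical in
/-- What `b` receives through the live leaves attached to it. -/
noncomputable def relief (G : SimpleGraph V) (S : Finset V) (b : V) : ℤ :=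
  ∑ y with IsLiveLeaf G S y b, leafRelief G S y

/-- The demand made on `b` that is not covered by the relief. -/
noncomputable def netDemand (G : SimpleGraph V) (S : Finset V) (b : V) : ℤ :=
  demandAt G S b - relief G S b

/-- What a private neighbour `b` costs its owner. -/
noncomputable def load (G : SimpleGraph V) (S : Finset V) (b : V) : ℤ :=
  netDemand G S b + surcharge G S b

open Classical in
/-- What `u` pays through the live leaves adjacent to it. -/
noncomputable def reliefPaid (G : SimpleGraph V) (S : Finset V) (u : V) : ℤ :=
  ∑ y with G.Adj u y ∧ ∃ b, IsLiveLeaf G S y b, privateCount G S u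

open Classical in
/-- What `k` receives from the special vertices with target `k`; their owners pay for it. -/
noncomputable def refund (G : SimpleGraph V) (S : Finset V) (k : V) : ℤ :=
  ∑ x with IsSpecial G S k x, 2

open Classical in
/-- The total that `u ∈ S` has to pay. -/
noncomputable def charge (G : SimpleGraph V) (S : Finset V) (u : V) : ℤ :=
  ∑ b with IsPrivateNeighbor G S u b, load G S b + reliefPaid G S u - refund G S u

open Classical in
/-- The net amount that `u ∈ S` pays when every center gets `4` from each of its neighbours. -/
noncomputable def centerFlow (G : SimpleGraph V) (S : Finset V) (u : V) : ℤ :=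
  ∑ t with G.Adj u t ∧ IsCenter G S t, 4 - if IsCenter G S u then 12 else 0

/-- What is left of the budget of `u ∈ S` after all payments. -/
noncomputable def slack (G : SimpleGraph V) (S : Finset V) (u : V) : ℤ :=
  4 * (privateCount G S u - innerDegree G S u) - charge G S u - centerFlow G S u

end Counts

theorem surcharge_eq_two {k x : V} (h : IsSpecial G S k x) : surcharge G S x = 2 :=
  if_pos ⟨k, h⟩

theorem surcharge_eq_zero {x : V} (h : ¬ ∃ k, IsSpecial G S k x) : surcharge G S x = 0 :=
  if_neg h

theorem IsPrivateNeighbor.exists_isLiveLeaf {k b : V} (hb : IsPrivateNeighbor G S k b)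
    (hq : ¬ IsQuiet G S b) : ∃ y, IsLiveLeaf G S y b := by
  unfold IsQuiet at hq
  push Not at hq
  obtain ⟨y, hy, hD⟩ := hq
  exact ⟨y, hy, ⟨k, hb⟩, hD⟩

theorem IsSpecial.isPrivate {k x : V} (h : IsSpecial G S k x) : IsPrivate G S x := by
  obtain ⟨m, b, z, w, v, o, hd⟩ := h
  exact ⟨o, hd.isPrivateNeighbor_special⟩

theorem IsSpecial.exists_isLeafless_adj {k x : V} (h : IsSpecial G S k x) :
    ∃ w, IsUndominated G S w ∧ IsLeafless G S w ∧ G.Adj x w := by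
  obtain ⟨m, b, z, w, v, o, hd⟩ := h
  exact ⟨w, hd.isUndominated₁, hd.isLeafless, hd.hasNeighbors_special.adj₁⟩

namespace HasNeighbors

variable {u x y z : V}

open Classical in
theorem sum_eq {s : Finset V} (h : HasNeighbors G u x y z) (hs : ∀ t ∈ s, G.Adj u t)
    (f : V → ℤ) : ∑ t ∈ s, f t =
      (if x ∈ s then f x else 0) + (if y ∈ s then f y else 0) + if z ∈ s then f z else 0 := by
  have hsub : s = ({x, y, z} : Finset V).filter (· ∈ s) := by
    ext t
    simp only [Finset.mem_filter, Finset.mem_insert, Finset.mem_singleton]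
    exact ⟨fun ht => ⟨h.eq_or_eq_or_eq t (hs t ht), ht⟩, And.right⟩
  conv_lhs => rw [hsub]
  rw [Finset.sum_filter, Finset.sum_insert (by simp [h.ne₁₂, h.ne₁₃]),
    Finset.sum_insert (by simp [h.ne₂₃]), Finset.sum_singleton, add_assoc]

open Classical in
theorem innerDegree_eq (h : HasNeighbors G u x y z) : innerDegree G S u =
    (if x ∈ S then 1 else 0) + (if y ∈ S then 1 else 0) + if z ∈ S then 1 else 0 := by
  rw [innerDegree, h.sum_eq fun t ht => (Finset.mem_filter.1 ht).2]
  simp only [Finset.mem_filter, h.adj₁, h.adj₂, h.adj₃, and_true]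

variable [Fintype V]

open Classical in
theorem sum_isPrivateNeighbor (h : HasNeighbors G u x y z) (f : V → ℤ) :
    ∑ b with IsPrivateNeighbor G S u b, f b =
      (if IsPrivateNeighbor G S u x then f x else 0) +
        (if IsPrivateNeighbor G S u y then f y else 0) +
          if IsPrivateNeighbor G S u z then f z else 0 := by
  rw [h.sum_eq fun t ht => (Finset.mem_filter.1 ht).2.adj.symm]
  simp only [Finset.mem_filter, Finset.mem_univ, true_and]

open Classical in
theorem privateDegree_eq (h : HasNeighbors G u x y z) : privateDegree G S u =
    (if IsPrivate G S x then 1 else 0) + (if IsPrivate G S y then 1 else 0) +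
      if IsPrivate G S z then 1 else 0 := by
  rw [privateDegree, h.sum_eq fun t ht => (Finset.mem_filter.1 ht).2.1]
  simp only [Finset.mem_filter, Finset.mem_univ, h.adj₁, h.adj₂, h.adj₃, true_and]

open Classical in
theorem leafRelief_eq (h : HasNeighbors G u x y z) : leafRelief G S u =
    (if x ∈ S then privateCount G S x else 0) + (if y ∈ S then privateCount G S y else 0) +
      if z ∈ S then privateCount G S z else 0 := by
  rw [leafRelief, h.sum_eq fun t ht => (Finset.mem_filter.1 ht).2]
  simp only [Finset.mem_filter, h.adj₁, h.adj₂, h.adj₃, and_true]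

open Classical in
theorem reliefPaid_eq (h : HasNeighbors G u x y z) : reliefPaid G S u =
    (if ∃ b, IsLiveLeaf G S x b then privateCount G S u else 0) +
      (if ∃ b, IsLiveLeaf G S y b then privateCount G S u else 0) +
        if ∃ b, IsLiveLeaf G S z b then privateCount G S u else 0 := by
  rw [reliefPaid, h.sum_eq fun t ht => (Finset.mem_filter.1 ht).2.1]
  simp only [Finset.mem_filter, Finset.mem_univ, h.adj₁, h.adj₂, h.adj₃, true_and]

open Classical in
theorem centerFlow_eq (h : HasNeighbors G u x y z) : centerFlow G S u =
    (if IsCenter G S x then 4 else 0) + (if IsCenter G S y then 4 else 0) +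
      (if IsCenter G S z then 4 else 0) - if IsCenter G S u then 12 else 0 := by
  rw [centerFlow, h.sum_eq fun t ht => (Finset.mem_filter.1 ht).2.1]
  simp only [Finset.mem_filter, Finset.mem_univ, h.adj₁, h.adj₂, h.adj₃, true_and]

theorem one_le_privateCount (h : HasNeighbors G u x y z) (hy : IsPrivateNeighbor G S u y) :
    1 ≤ privateCount G S u := by
  rw [privateCount, h.sum_isPrivateNeighbor, if_pos hy]
  split_ifs <;> norm_num

theorem two_le_privateCount (h : HasNeighbors G u x y z) (hy : IsPrivateNeighbor G S u y)
    (hz : IsPrivateNeighbor G S u z) : 2 ≤ privateCount G S u := by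
  rw [privateCount, h.sum_isPrivateNeighbor, if_pos hy, if_pos hz]
  split_ifs <;> norm_num

end HasNeighbors

variable [Fintype V]

theorem privateCount_nonneg (u : V) : 0 ≤ privateCount G S u :=
  Finset.sum_nonneg fun _ _ => zero_le_one

theorem leafRelief_nonneg (y : V) : 0 ≤ leafRelief G S y :=
  Finset.sum_nonneg fun _ _ => privateCount_nonneg _

theorem relief_nonneg (b : V) : 0 ≤ relief G S b :=
  Finset.sum_nonneg fun _ _ => leafRelief_nonneg _

theorem refund_nonneg (k : V) : 0 ≤ refund G S k :=
  Finset.sum_nonneg fun _ _ => zero_le_two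

open Classical in
theorem two_le_refund {k x : V} (h : IsSpecial G S k x) : 2 ≤ refund G S k :=
  Finset.single_le_sum (f := fun _ => (2 : ℤ)) (fun _ _ => zero_le_two)
    (Finset.mem_filter.2 ⟨Finset.mem_univ x, h⟩)

open Classical in
theorem IsLiveLeaf.leafRelief_le_relief {y b : V} (h : IsLiveLeaf G S y b) :
    leafRelief G S y ≤ relief G S b :=
  Finset.single_le_sum (fun _ _ => leafRelief_nonneg _)
    (Finset.mem_filter.2 ⟨Finset.mem_univ y, h⟩)

namespace IsExtremal

open Classical in
theorem demandAt_eq_demand (hS : IsExtremal G S) {b v : V} (hv : IsUndominated G S v)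
    (hbv : G.Adj b v) : demandAt G S b = demand G S v := by
  have hsingle : ({t | IsUndominated G S t ∧ G.Adj b t} : Finset V) = {v} := by
    ext t
    simp only [Finset.mem_filter, Finset.mem_univ, true_and, Finset.mem_singleton]
    refine ⟨fun ht => hS.eq_of_isUndominated_of_adj ht.1 hv ht.2 hbv, ?_⟩
    rintro rfl
    exact ⟨hv, hbv⟩
  rw [demandAt, hsingle, Finset.sum_singleton]

theorem demandAt_eq_four (hS : IsExtremal G S) {b w : V} (hw : IsUndominated G S w)
    (hl : IsLeafless G S w) (hbw : G.Adj b w) : demandAt G S b = 4 := by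
  rw [hS.demandAt_eq_demand hw hbw, demand, if_pos hl]

open Classical in
theorem demandAt_cases (hS : IsExtremal G S) (b : V) : demandAt G S b = 0 ∨
    (demandAt G S b = 2 ∧ ∃ v, IsUndominated G S v ∧ ¬ IsLeafless G S v ∧ G.Adj b v) ∨
    (demandAt G S b = 4 ∧ ∃ w, IsUndominated G S w ∧ IsLeafless G S w ∧ G.Adj b w) := by
  by_cases h : ∃ v, IsUndominated G S v ∧ G.Adj b v
  · obtain ⟨v, hv, hbv⟩ := h
    rw [hS.demandAt_eq_demand hv hbv, demand]
    split_ifs with hl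
    · exact Or.inr (Or.inr ⟨rfl, v, hv, hl, hbv⟩)
    · exact Or.inr (Or.inl ⟨rfl, v, hv, hl, hbv⟩)
    · exact Or.inl rfl
  · exact Or.inl (Finset.sum_eq_zero fun v hv => absurd ⟨v, (Finset.mem_filter.1 hv).2⟩ h)

theorem exists_isLeafless_of_demandAt_eq_four (hS : IsExtremal G S) {b : V}
    (h : demandAt G S b = 4) : ∃ w, IsUndominated G S w ∧ IsLeafless G S w ∧ G.Adj b w := by
  rcases hS.demandAt_cases b with h' | ⟨h', -⟩ | ⟨-, hw⟩
  · omega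
  · omega
  · exact hw

theorem demandAt_eq_four_of_isSpecial (hS : IsExtremal G S) {k x : V} (h : IsSpecial G S k x) :
    demandAt G S x = 4 := by
  obtain ⟨w, hw, hl, hxw⟩ := h.exists_isLeafless_adj
  exact hS.demandAt_eq_four hw hl hxw

theorem demandAt_le_two (hS : IsExtremal G S) {b : V} (h : demandAt G S b ≠ 4) :
    demandAt G S b ≤ 2 := by
  rcases hS.demandAt_cases b with h' | ⟨h', -⟩ | ⟨h', -⟩ <;> omega

theorem demandAt_le_four (hS : IsExtremal G S) (b : V) : demandAt G S b ≤ 4 := by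
  rcases hS.demandAt_cases b with h | ⟨h, -⟩ | ⟨h, -⟩ <;> omega

theorem not_isLeafAt_of_isPrivateNeighbor (hS : IsExtremal G S) {k b v : V}
    (hb : IsPrivateNeighbor G S k b) : ¬ IsLeafAt G S b v := by
  intro hl
  obtain ⟨q, r, hn, hq, hr⟩ := hS.exists_hasNeighbors_of_isLeafAt hl
  exact hn.ne₂₃ ((hb.eq_of_adj q hn.adj₂ hq).trans (hb.eq_of_adj r hn.adj₃ hr).symm)

theorem not_isLiveLeaf_of_isPrivateNeighbor (hS : IsExtremal G S) {k b : V}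
    (hb : IsPrivateNeighbor G S k b) : ¬ ∃ v, IsLiveLeaf G S b v :=
  fun ⟨_, hv⟩ => hS.not_isLeafAt_of_isPrivateNeighbor hb hv.isLeafAt

theorem two_le_relief (hS : IsExtremal G S) {k b : V} (hb : IsPrivateNeighbor G S k b)
    (hq : ¬ IsQuiet G S b) : 2 ≤ relief G S b := by
  have one_le {y q : V} (hy : IsLeafAt G S y b) (hqS : q ∈ S) (hyq : G.Adj y q) :
      1 ≤ privateCount G S q := by
    obtain ⟨q₁, q₂, hn, hq₁, -⟩ := hS.exists_isPrivateNeighbor_of_isLeafAt hy hqS hyq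
    exact hn.one_le_privateCount hq₁
  obtain ⟨y, hy⟩ := hb.exists_isLiveLeaf hq
  obtain ⟨q, r, hn, hqS, hrS⟩ := hS.exists_hasNeighbors_of_isLeafAt hy.isLeafAt
  refine le_trans ?_ hy.leafRelief_le_relief
  rw [hn.leafRelief_eq, if_neg hb.notMem, if_pos hqS, if_pos hrS]
  linarith [one_le hy.isLeafAt hqS hn.adj₂, one_le hy.isLeafAt hrS hn.adj₃]

theorem four_le_relief (hS : IsExtremal G S) {k b : V} (hb : IsPrivateNeighbor G S k b)
    (hq : ¬ IsQuiet G S b) (hpair : ∀ y q, IsLeafAt G S y b → q ∈ S → G.Adj y q →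
      ∃ q₁ q₂, HasNeighbors G q y q₁ q₂ ∧ IsPrivateNeighbor G S q q₁ ∧
        IsPrivateNeighbor G S q q₂) : 4 ≤ relief G S b := by
  have two_le {y q : V} (hy : IsLeafAt G S y b) (hqS : q ∈ S) (hyq : G.Adj y q) :
      2 ≤ privateCount G S q := by
    obtain ⟨q₁, q₂, hn, hq₁, hq₂⟩ := hpair y q hy hqS hyq
    exact hn.two_le_privateCount hq₁ hq₂
  obtain ⟨y, hy⟩ := hb.exists_isLiveLeaf hq
  obtain ⟨q, r, hn, hqS, hrS⟩ := hS.exists_hasNeighbors_of_isLeafAt hy.isLeafAt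
  refine le_trans ?_ hy.leafRelief_le_relief
  rw [hn.leafRelief_eq, if_neg hb.notMem, if_pos hqS, if_pos hrS]
  linarith [two_le hy.isLeafAt hqS hn.adj₂, two_le hy.isLeafAt hrS hn.adj₃]

end IsExtremal

end Weights

section LocalBounds

variable {V : Type*} {G : SimpleGraph V} {S : Finset V}

theorem exists_isSharedNeighbor {u t : V} (hu : u ∈ S) (ht : t ∉ S) (hut : G.Adj u t)
    (hp : ¬ IsPrivateNeighbor G S u t) : ∃ s, IsSharedNeighbor G S u s t := by
  by_contra! hs
  refine hp ⟨hu, ht, hut.symm, fun s hts hsS => ?_⟩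
  by_contra hne
  exact hs s ⟨ht, hts, hsS, hne⟩

variable [Fintype V]

theorem netDemand_le_demandAt (b : V) : netDemand G S b ≤ demandAt G S b :=
  sub_le_self _ (relief_nonneg b)

theorem load_eq_netDemand {b : V} (h : ¬ ∃ k, IsSpecial G S k b) :
    load G S b = netDemand G S b := by
  rw [load, surcharge_eq_zero h, add_zero]

open Classical in
theorem HasNeighbors.charge_le {u x y z : V} (h : HasNeighbors G u x y z) : charge G S u ≤
    (if IsPrivateNeighbor G S u x then load G S x else 0) +
      (if IsPrivateNeighbor G S u y then load G S y else 0) +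
        (if IsPrivateNeighbor G S u z then load G S z else 0) + reliefPaid G S u := by
  rw [charge, h.sum_isPrivateNeighbor]
  exact sub_le_self _ (refund_nonneg u)

namespace IsExtremal

theorem netDemand_le_of_not_isQuiet (hS : IsExtremal G S) {k b : V}
    (hb : IsPrivateNeighbor G S k b) (hq : ¬ IsQuiet G S b) :
    netDemand G S b ≤ demandAt G S b - 2 :=
  sub_le_sub_left (hS.two_le_relief hb hq) _

theorem exists_specialConfig_of_isPrivateNeighbor (hS : IsExtremal G S) {k x u : V}
    (h : IsSpecial G S k x) (hu : IsPrivateNeighbor G S u x) :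
    ∃ m b z w v, SpecialConfig G S k x m b z w v u ∧ (u = m ∨ ∃ x₁ x₂, HasNeighbors G u x x₁ x₂ ∧
      IsPrivateNeighbor G S u x₁ ∧ IsPrivateNeighbor G S u x₂) := by
  obtain ⟨m, b, z, w, v, o, hd⟩ := h
  obtain rfl : o = u := hu.eq_of_adj o hd.isPrivateNeighbor_special.adj
    hd.isPrivateNeighbor_special.center_mem
  exact ⟨m, b, z, w, v, hd, hS.owner_eq_mate_or hd⟩

theorem exists_specialConfig_of_adj_mem (hS : IsExtremal G S) {k x u m x' : V}
    (h : IsSpecial G S k x) (hn : HasNeighbors G u m x x') (hm : m ∈ S)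
    (hx : IsPrivateNeighbor G S u x) (hx' : x' ∉ S) :
    k = m ∧ ∃ b z w v, SpecialConfig G S m x u b z w v u := by
  obtain ⟨m', b, z, w, v, hd, rfl | ⟨x₁, x₂, hn', hx₁, hx₂⟩⟩ :=
    hS.exists_specialConfig_of_isPrivateNeighbor h hx
  · obtain rfl : k = m := by
      rcases hn.eq_or_eq_or_eq k hd.hasNeighbors.adj₁.symm with rfl | rfl | rfl
      · rfl
      · exact absurd hd.isPrivateNeighbor₁.center_mem hx.notMem
      · exact absurd hd.isPrivateNeighbor₁.center_mem hx'
    exact ⟨rfl, b, z, w, v, hd⟩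
  · rcases hn'.eq_or_eq_or_eq m hn.adj₁ with rfl | rfl | rfl
    · exact absurd hm hx.notMem
    · exact absurd hm hx₁.notMem
    · exact absurd hm hx₂.notMem

theorem not_isSpecial_of_not_isPrivateNeighbor (hS : IsExtremal G S) {u x t : V}
    (hout : ∀ t, G.Adj u t → t ∉ S) (hut : G.Adj u t) (hp : ¬ IsPrivateNeighbor G S u t)
    (hx : IsPrivateNeighbor G S u x) : ¬ ∃ k, IsSpecial G S k x := by
  rintro ⟨k, hk⟩
  obtain ⟨m, b, z, w, v, hd, rfl | ⟨x₁, x₂, hn, hx₁, hx₂⟩⟩ :=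
    hS.exists_specialConfig_of_isPrivateNeighbor hk hx
  · exact hout k hd.hasNeighbors.adj₁.symm hd.isPrivateNeighbor₁.center_mem
  · rcases hn.eq_or_eq_or_eq t hut with rfl | rfl | rfl
    exacts [hp hx, hp hx₁, hp hx₂]

theorem load_nonpos_of_adj_isCenter (hS : IsExtremal G S) {u m b z : V}
    (hn : HasNeighbors G u m b z) (hm : IsCenter G S m) (hb : IsPrivateNeighbor G S u b)
    (hz : IsPrivateNeighbor G S u z) : load G S b ≤ 0 := by
  have hs : ¬ ∃ k, IsSpecial G S k b := by
    rintro ⟨k, hk⟩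
    obtain ⟨-, b', z', w, v, hd⟩ := hS.exists_specialConfig_of_adj_mem hk hn hm.1 hb hz.notMem
    exact hd.isPrivateNeighbor₁.notMem (hm.2 b' hd.hasNeighbors.adj₂)
  rw [load_eq_netDemand hs]
  rcases hS.demandAt_cases b with h | ⟨h, v, hv, -, hbv⟩ | ⟨-, w, hw, hl, hbw⟩
  · exact (netDemand_le_demandAt b).trans h.le
  · have := hS.netDemand_le_of_not_isQuiet hb
      (hS.not_isQuiet_of_adj_isCenter hn hm hb hz hv hbv)
    omega
  · exact absurd hl (hS.not_isLeafless_of_adj_isCenter hn hm hw hbw)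

theorem demandAt_ne_four_of_pair (hS : IsExtremal G S) {u m b z : V} (hn : HasNeighbors G u m b z)
    (hm : m ∈ S) (hz : IsPrivateNeighbor G S u z) (h : demandAt G S b = 4) :
    demandAt G S z ≠ 4 := by
  intro h'
  obtain ⟨w, hw, hl, hbw⟩ := hS.exists_isLeafless_of_demandAt_eq_four h
  obtain ⟨w', hw', hl', hzw'⟩ := hS.exists_isLeafless_of_demandAt_eq_four h'
  exact hS.not_isLeafless_of_adj_pair hm hn hz hw hw' hbw hzw' hl hl'

theorem load_add_load_le_of_isSpecial (hS : IsExtremal G S) {u m b z k : V}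
    (hn : HasNeighbors G u m b z) (hm : m ∈ S) (hb : IsPrivateNeighbor G S u b)
    (hz : IsPrivateNeighbor G S u z) (hk : IsSpecial G S k b) :
    load G S b + load G S z ≤ 4 := by
  obtain ⟨rfl, b', z', w, v, hd⟩ := hS.exists_specialConfig_of_adj_mem hk hn hm hb hz.notMem
  have hdb := hS.demandAt_eq_four_of_isSpecial hk
  have hdz := hS.demandAt_ne_four_of_pair hn hm hz hdb
  have hsz : ¬ ∃ k', IsSpecial G S k' z :=
    fun ⟨k', hk'⟩ => hdz (hS.demandAt_eq_four_of_isSpecial hk')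
  have hqz := hS.not_isQuiet_of_mate hd hn hz
  have hz_le : netDemand G S z ≤ -2 := by
    rcases hS.demandAt_cases z with h | ⟨h, v', hv', -, hzv'⟩ | ⟨h, -⟩
    · linarith [hS.netDemand_le_of_not_isQuiet hz hqz]
    · have := hS.four_le_relief hz hqz fun y q hy hq hyq =>
        hS.exists_isPrivateNeighbor_pair_of_mate hd hn hz hv' hzv' hy hq hyq
      rw [netDemand]
      omega
    · exact absurd h hdz
  rw [load_eq_netDemand hsz, load, surcharge_eq_two hk]
  linarith [netDemand_le_demandAt (G := G) (S := S) b]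

theorem netDemand_add_netDemand_le_of_eq_four (hS : IsExtremal G S) {u m b z : V}
    (hn : HasNeighbors G u m b z) (hm : m ∈ S) (hb : IsPrivateNeighbor G S u b)
    (hz : IsPrivateNeighbor G S u z) (h : demandAt G S b = 4) :
    netDemand G S b + netDemand G S z - refund G S u ≤ 4 := by
  have hle := netDemand_le_demandAt (G := G) (S := S)
  rcases hS.demandAt_cases z with h' | ⟨h', v, hv, hlv, hzv⟩ | ⟨h', -⟩
  · linarith [hle b, hle z, refund_nonneg (G := G) (S := S) u]
  · by_cases hqb : IsQuiet G S b
    · by_cases hqz : IsQuiet G S z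
      · obtain ⟨w, hw, hl, hbw⟩ := hS.exists_isLeafless_of_demandAt_eq_four h
        obtain ⟨x, hx⟩ := hS.exists_isSpecial ⟨hn, hb, hz, hw, hv, hl, hlv, hbw, hzv⟩ hm hqb hqz
        linarith [hle b, hle z, two_le_refund hx]
      · linarith [hle b, hS.netDemand_le_of_not_isQuiet hz hqz,
          refund_nonneg (G := G) (S := S) u]
    · linarith [hle z, hS.netDemand_le_of_not_isQuiet hb hqb, refund_nonneg (G := G) (S := S) u]
  · exact absurd h' (hS.demandAt_ne_four_of_pair hn hm hz h)

theorem load_add_load_sub_refund_le (hS : IsExtremal G S) {u m b z : V}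
    (hn : HasNeighbors G u m b z) (hm : m ∈ S) (hb : IsPrivateNeighbor G S u b)
    (hz : IsPrivateNeighbor G S u z) : load G S b + load G S z - refund G S u ≤ 4 := by
  have hrefund := refund_nonneg (G := G) (S := S) u
  by_cases hsb : ∃ k, IsSpecial G S k b
  · linarith [hS.load_add_load_le_of_isSpecial hn hm hb hz hsb.choose_spec]
  by_cases hsz : ∃ k, IsSpecial G S k z
  · linarith [hS.load_add_load_le_of_isSpecial hn.swap hm hz hb hsz.choose_spec]
  rw [load_eq_netDemand hsb, load_eq_netDemand hsz]
  by_cases hdb : demandAt G S b = 4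
  · exact hS.netDemand_add_netDemand_le_of_eq_four hn hm hb hz hdb
  by_cases hdz : demandAt G S z = 4
  · linarith [hS.netDemand_add_netDemand_le_of_eq_four hn.swap hm hz hb hdz]
  have hle := netDemand_le_demandAt (G := G) (S := S)
  linarith [hle b, hle z, hS.demandAt_le_two hdb, hS.demandAt_le_two hdz]

theorem slack_nonneg_of_isCenter (hS : IsExtremal G S) {u : V} (hu : IsCenter G S u) :
    0 ≤ slack G S u := by
  obtain ⟨x, y, z, hn⟩ := hS.exists_hasNeighbors u
  have hp {t : V} (ht : G.Adj u t) : ¬ IsPrivateNeighbor G S u t := fun h => h.notMem (hu.2 t ht)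
  have hl {t : V} (ht : G.Adj u t) : ¬ ∃ b, IsLiveLeaf G S t b :=
    fun ⟨_, h⟩ => h.isLeafAt.notMem (hu.2 t ht)
  have hc {t : V} (ht : G.Adj u t) : ¬ IsCenter G S t := fun h => hS.not_adj_of_isCenter hu h ht
  have hcharge := hn.charge_le (S := S)
  rw [slack, privateCount, hn.sum_isPrivateNeighbor, hn.innerDegree_eq, hn.centerFlow_eq]
  simp only [hn.reliefPaid_eq, hp hn.adj₁, hp hn.adj₂, hp hn.adj₃, hl hn.adj₁, hl hn.adj₂,
    hl hn.adj₃, hc hn.adj₁, hc hn.adj₂, hc hn.adj₃, hu, hu.2 x hn.adj₁, hu.2 y hn.adj₂,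
    hu.2 z hn.adj₃, if_true, if_false] at hcharge ⊢
  linarith

theorem slack_nonneg_of_adj_mem (hS : IsExtremal G S) {u m x : V} (hu : u ∈ S) (hm : m ∈ S)
    (hx : x ∉ S) (hum : G.Adj u m) (hux : G.Adj u x) : 0 ≤ slack G S u := by
  obtain ⟨b, z, hn, hb, hz⟩ := hS.exists_isPrivateNeighbor_pair hu hm hx hum hux
  have hpm : ¬ IsPrivateNeighbor G S u m := fun h => h.notMem hm
  have hlm : ¬ ∃ b, IsLiveLeaf G S m b := fun ⟨_, h⟩ => h.isLeafAt.notMem hm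
  have hcu : ¬ IsCenter G S u := fun h => hx (h.2 x hux)
  have hc {t : V} (ht : t ∉ S) : ¬ IsCenter G S t := fun h => ht h.1
  rw [slack, charge, privateCount, hn.sum_isPrivateNeighbor, hn.sum_isPrivateNeighbor,
    hn.innerDegree_eq, hn.reliefPaid_eq, hn.centerFlow_eq]
  simp only [hpm, hlm, hcu, hc hb.notMem, hc hz.notMem, hb, hz, hm, hb.notMem, hz.notMem,
    hS.not_isLiveLeaf_of_isPrivateNeighbor hb, hS.not_isLiveLeaf_of_isPrivateNeighbor hz,
    if_true, if_false]
  split_ifs with hcm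
  · linarith [hS.load_nonpos_of_adj_isCenter hn hcm hb hz,
      hS.load_nonpos_of_adj_isCenter hn.swap hcm hz hb, refund_nonneg (G := G) (S := S) u]
  · linarith [hS.load_add_load_sub_refund_le hn hm hb hz]

theorem slack_eq_of_forall_adj_notMem (hS : IsExtremal G S) {u : V}
    (hout : ∀ t, G.Adj u t → t ∉ S) :
    slack G S u = 4 * privateCount G S u - charge G S u := by
  obtain ⟨x, y, z, hn⟩ := hS.exists_hasNeighbors u
  have hc {t : V} (ht : G.Adj u t) : ¬ IsCenter G S t := fun h => hout t ht h.1
  have hcu : ¬ IsCenter G S u := fun h => hout x hn.adj₁ (h.2 x hn.adj₁)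
  rw [slack, hn.innerDegree_eq, hn.centerFlow_eq]
  simp only [hc hn.adj₁, hc hn.adj₂, hc hn.adj₃, hcu, hout x hn.adj₁, hout y hn.adj₂,
    hout z hn.adj₃, if_false]
  ring

theorem slack_nonneg_of_one_isPrivateNeighbor (hS : IsExtremal G S) {u b x x' : V} (hu : u ∈ S)
    (hout : ∀ t, G.Adj u t → t ∉ S) (hn : HasNeighbors G u b x x')
    (hb : IsPrivateNeighbor G S u b) (hx : ¬ IsPrivateNeighbor G S u x)
    (hx' : ¬ IsPrivateNeighbor G S u x') : 0 ≤ slack G S u := by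
  obtain ⟨s, hs⟩ := exists_isSharedNeighbor hu (hout x hn.adj₂) hn.adj₂ hx
  obtain ⟨s', hs'⟩ := exists_isSharedNeighbor hu (hout x' hn.adj₃) hn.adj₃ hx'
  have hload : load G S b ≤ 2 := by
    rw [load_eq_netDemand (hS.not_isSpecial_of_not_isPrivateNeighbor hout hn.adj₂ hx hb)]
    by_cases h : demandAt G S b = 4
    · obtain ⟨w, hw, hl, hbw⟩ := hS.exists_isLeafless_of_demandAt_eq_four h
      linarith [hS.netDemand_le_of_not_isQuiet hb
        (hS.not_isQuiet_of_isSharedNeighbor hn hb hs hs' hw hl hbw)]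
    · exact (netDemand_le_demandAt b).trans (hS.demandAt_le_two h)
  have hcharge := hn.charge_le (S := S)
  rw [hS.slack_eq_of_forall_adj_notMem hout]
  simp only [hn.reliefPaid_eq, privateCount, hn.sum_isPrivateNeighbor, hb, hx, hx',
    hS.not_isLiveLeaf_of_isPrivateNeighbor hb, if_true, if_false] at hcharge ⊢
  split_ifs at hcharge <;> linarith

theorem netDemand_le_two_of_demandAt_ne_four (hS : IsExtremal G S) {b : V}
    (h : demandAt G S b ≠ 4) : netDemand G S b ≤ 2 :=
  (netDemand_le_demandAt b).trans (hS.demandAt_le_two h)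

theorem netDemand_le_two_of_not_isQuiet (hS : IsExtremal G S) {k b : V}
    (hb : IsPrivateNeighbor G S k b) (hq : ¬ IsQuiet G S b) : netDemand G S b ≤ 2 := by
  linarith [hS.netDemand_le_of_not_isQuiet hb hq, hS.demandAt_le_four b]

theorem netDemand_le_four (hS : IsExtremal G S) (b : V) : netDemand G S b ≤ 4 :=
  (netDemand_le_demandAt b).trans (hS.demandAt_le_four b)

/-- Otherwise `u` would be the center of a fork, or a diamond with third neighbour `x`. -/
theorem netDemand_le_two_or_of_isLiveLeaf (hS : IsExtremal G S) {u x b z y : V} (hu : u ∈ S)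
    (hn : HasNeighbors G u x b z) (hx : ¬ IsPrivateNeighbor G S u x)
    (hb : IsPrivateNeighbor G S u b) (hz : IsPrivateNeighbor G S u z)
    (hy : IsLiveLeaf G S x y) : netDemand G S b ≤ 2 ∨ netDemand G S z ≤ 2 := by
  by_cases hdb : demandAt G S b = 4
  swap
  · exact Or.inl (hS.netDemand_le_two_of_demandAt_ne_four hdb)
  by_cases hdz : demandAt G S z = 4
  swap
  · exact Or.inr (hS.netDemand_le_two_of_demandAt_ne_four hdz)
  by_cases hqb : IsQuiet G S b
  swap
  · exact Or.inl (hS.netDemand_le_two_of_not_isQuiet hb hqb)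
  by_cases hqz : IsQuiet G S z
  swap
  · exact Or.inr (hS.netDemand_le_two_of_not_isQuiet hz hqz)
  obtain ⟨s, hs⟩ := exists_isSharedNeighbor hu hy.isLeafAt.notMem hn.adj₁ hx
  obtain ⟨w, hw, hl, hbw⟩ := hS.exists_isLeafless_of_demandAt_eq_four hdb
  obtain ⟨w', hw', hl', hzw'⟩ := hS.exists_isLeafless_of_demandAt_eq_four hdz
  have hne : w ≠ w' := by
    rintro rfl
    exact hy.not_isDiamond u w ⟨hw, hl, b, z, hn, hb, hz, hs.notMem, hx, hbw, hzw'⟩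
  exact absurd ⟨hn, hs, hb, hz, hw, hw', hl, hl', hbw, hzw', hne⟩ (hS.not_isFork hqb hqz)

theorem slack_nonneg_of_two_isPrivateNeighbor (hS : IsExtremal G S) {u x b z : V} (hu : u ∈ S)
    (hout : ∀ t, G.Adj u t → t ∉ S) (hn : HasNeighbors G u x b z)
    (hb : IsPrivateNeighbor G S u b) (hz : IsPrivateNeighbor G S u z)
    (hx : ¬ IsPrivateNeighbor G S u x) : 0 ≤ slack G S u := by
  have hcharge := hn.charge_le (S := S)
  rw [hS.slack_eq_of_forall_adj_notMem hout]
  simp only [hn.reliefPaid_eq, privateCount, hn.sum_isPrivateNeighbor, hb, hx, hz,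
    hS.not_isLiveLeaf_of_isPrivateNeighbor hb, hS.not_isLiveLeaf_of_isPrivateNeighbor hz,
    load_eq_netDemand (hS.not_isSpecial_of_not_isPrivateNeighbor hout hn.adj₁ hx hb),
    load_eq_netDemand (hS.not_isSpecial_of_not_isPrivateNeighbor hout hn.adj₁ hx hz),
    if_true, if_false] at hcharge ⊢
  have hb_le := hS.netDemand_le_four b
  have hz_le := hS.netDemand_le_four z
  split_ifs at hcharge with hlive
  · obtain ⟨y, hy⟩ := hlive
    rcases hS.netDemand_le_two_or_of_isLiveLeaf hu hn hx hb hz hy with h | h <;> linarith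
  · linarith

theorem load_le_two (hS : IsExtremal G S) {b : V} (h : demandAt G S b ≠ 4) : load G S b ≤ 2 := by
  rw [load_eq_netDemand fun ⟨k, hk⟩ => h (hS.demandAt_eq_four_of_isSpecial hk)]
  exact hS.netDemand_le_two_of_demandAt_ne_four h

theorem load_le_four (hS : IsExtremal G S) {b : V} (h : ¬ ∃ k, IsSpecial G S k b) :
    load G S b ≤ 4 :=
  (load_eq_netDemand h).trans_le (hS.netDemand_le_four b)

theorem load_le_six (hS : IsExtremal G S) (b : V) : load G S b ≤ 6 := by
  by_cases h : ∃ k, IsSpecial G S k b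
  · rw [load, surcharge_eq_two h.choose_spec]
    linarith [hS.netDemand_le_four b]
  · linarith [hS.load_le_four h]

theorem load_nonpos_of_isSpecial_of_isSpecial (hS : IsExtremal G S) {u x y z k k' : V}
    (hn : HasNeighbors G u x y z) (hx : IsPrivateNeighbor G S u x)
    (hy : IsPrivateNeighbor G S u y) (hz : IsPrivateNeighbor G S u z) (hk : IsSpecial G S k x)
    (hk' : IsSpecial G S k' y) (hdz : demandAt G S z ≠ 4) : load G S z ≤ 0 := by
  rw [load_eq_netDemand fun ⟨k, hk⟩ => hdz (hS.demandAt_eq_four_of_isSpecial hk)]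
  rcases hS.demandAt_cases z with h | ⟨h, v, hv, hlv, hzv⟩ | ⟨h, -⟩
  · exact (netDemand_le_demandAt z).trans h.le
  · obtain ⟨_, _, _, _, _, hd, -⟩ := hS.exists_specialConfig_of_isPrivateNeighbor hk hx
    obtain ⟨_, _, _, _, _, hd', -⟩ := hS.exists_specialConfig_of_isPrivateNeighbor hk' hy
    linarith [hS.netDemand_le_of_not_isQuiet hz
      (hS.not_isQuiet_of_owner hd hd' hn hz hv hlv hzv)]
  · exact absurd h hdz

theorem load_add_load_add_load_le_of_ne_four (hS : IsExtremal G S) {u x y z k : V}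
    (hn : HasNeighbors G u x y z) (hx : IsPrivateNeighbor G S u x)
    (hy : IsPrivateNeighbor G S u y) (hz : IsPrivateNeighbor G S u z) (hk : IsSpecial G S k x)
    (hdz : demandAt G S z ≠ 4) : load G S x + load G S y + load G S z ≤ 12 := by
  by_cases hsy : ∃ k', IsSpecial G S k' y
  · obtain ⟨k', hk'⟩ := hsy
    linarith [hS.load_le_six x, hS.load_le_six y,
      hS.load_nonpos_of_isSpecial_of_isSpecial hn hx hy hz hk hk' hdz]
  · linarith [hS.load_le_six x, hS.load_le_four hsy, hS.load_le_two hdz]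

theorem load_add_load_add_load_le (hS : IsExtremal G S) {u x y z k : V}
    (hn : HasNeighbors G u x y z) (hx : IsPrivateNeighbor G S u x)
    (hy : IsPrivateNeighbor G S u y) (hz : IsPrivateNeighbor G S u z) (hk : IsSpecial G S k x) :
    load G S x + load G S y + load G S z ≤ 12 := by
  by_cases hdz : demandAt G S z = 4
  · by_cases hdy : demandAt G S y = 4
    · obtain ⟨_, _, _, _, _, hd, -⟩ := hS.exists_specialConfig_of_isPrivateNeighbor hk hx
      obtain ⟨w, hw, hl, hyw⟩ := hS.exists_isLeafless_of_demandAt_eq_four hdy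
      obtain ⟨w', hw', hl', hzw'⟩ := hS.exists_isLeafless_of_demandAt_eq_four hdz
      exact absurd hl' (hS.not_isLeafless_of_owner hd hn hy hz hw hl hw' hyw hzw')
    · linarith [hS.load_add_load_add_load_le_of_ne_four hn.swap hx hz hy hk hdy]
  · exact hS.load_add_load_add_load_le_of_ne_four hn hx hy hz hk hdz

theorem slack_nonneg_of_three_isPrivateNeighbor (hS : IsExtremal G S) {u x y z : V}
    (hout : ∀ t, G.Adj u t → t ∉ S) (hn : HasNeighbors G u x y z)
    (hx : IsPrivateNeighbor G S u x) (hy : IsPrivateNeighbor G S u y)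
    (hz : IsPrivateNeighbor G S u z) : 0 ≤ slack G S u := by
  have hcharge := hn.charge_le (S := S)
  rw [hS.slack_eq_of_forall_adj_notMem hout]
  simp only [hn.reliefPaid_eq, privateCount, hn.sum_isPrivateNeighbor, hx, hy, hz,
    hS.not_isLiveLeaf_of_isPrivateNeighbor hx, hS.not_isLiveLeaf_of_isPrivateNeighbor hy,
    hS.not_isLiveLeaf_of_isPrivateNeighbor hz, if_true, if_false] at hcharge ⊢
  suffices load G S x + load G S y + load G S z ≤ 12 by linarith
  by_cases hsx : ∃ k, IsSpecial G S k x
  · exact hS.load_add_load_add_load_le hn hx hy hz hsx.choose_spec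
  by_cases hsy : ∃ k, IsSpecial G S k y
  · linarith [hS.load_add_load_add_load_le hn.rotate hy hz hx hsy.choose_spec]
  by_cases hsz : ∃ k, IsSpecial G S k z
  · linarith [hS.load_add_load_add_load_le hn.rotate.rotate hz hx hy hsz.choose_spec]
  linarith [hS.load_le_four hsx, hS.load_le_four hsy, hS.load_le_four hsz]

theorem slack_nonneg (hS : IsExtremal G S) {u : V} (hu : u ∈ S) : 0 ≤ slack G S u := by
  by_cases hout : ∀ t, G.Adj u t → t ∉ S
  · obtain ⟨b, hb⟩ := hS.exists_isPrivateNeighbor hu hout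
    obtain ⟨x, y, hn⟩ := hS.exists_others hb.adj.symm
    by_cases hx : IsPrivateNeighbor G S u x <;> by_cases hy : IsPrivateNeighbor G S u y
    · exact hS.slack_nonneg_of_three_isPrivateNeighbor hout hn hb hx hy
    · exact hS.slack_nonneg_of_two_isPrivateNeighbor hu hout hn.rotate.rotate hb hx hy
    · exact hS.slack_nonneg_of_two_isPrivateNeighbor hu hout hn.rotate hy hb hx
    · exact hS.slack_nonneg_of_one_isPrivateNeighbor hu hout hn hb hx hy
  · push Not at hout
    obtain ⟨m, hum, hm⟩ := hout
    by_cases hc : IsCenter G S u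
    · exact hS.slack_nonneg_of_isCenter hc
    · obtain ⟨x, hux, hx⟩ : ∃ x, G.Adj u x ∧ x ∉ S := by
        by_contra! h
        exact hc ⟨hu, h⟩
      exact hS.slack_nonneg_of_adj_mem hu hm hx hum hux

end IsExtremal

end LocalBounds

section LeafSupports

variable {V : Type*} {G : SimpleGraph V} {S : Finset V}

/-- `g ∈ S` supports the undominated vertex `v`, that is, `g` is adjacent to a leaf at `v`. -/
structure IsLeafSupport (G : SimpleGraph V) (S : Finset V) (v g : V) : Prop where
  isUndominated : IsUndominated G S v
  mem : g ∈ S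
  exists_isLeafAt : ∃ a, IsLeafAt G S a v ∧ G.Adj a g

theorem not_isLink_of_isLink {v b g h x y : V} (hv : IsUndominated G S v)
    (hne : g ≠ h) (hx : IsPrivateNeighbor G S g x) (hy : IsPrivateNeighbor G S h y)
    (hbx : IsLink G S b v x) : ¬ IsLink G S b v y := by
  intro hby
  rcases hby.eq_or_eq x hbx.adj₂ hx.notMem with rfl | rfl
  · exact hv.2 g hx.adj hx.center_mem
  · exact hne (hy.eq_of_adj g hx.adj hx.center_mem)

theorem IsUndominated.ne_of_isPrivateNeighbor {v h x : V} (hv : IsUndominated G S v)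
    (hx : IsPrivateNeighbor G S h x) : x ≠ v := by
  rintro rfl
  exact hv.2 h hx.adj hx.center_mem

variable [Fintype V]

namespace IsExtremal

theorem not_isPrivateNeighbor_of_isLeafAt (hS : IsExtremal G S) {k a v : V}
    (ha : IsLeafAt G S a v) : ¬ IsPrivateNeighbor G S k a :=
  fun h => hS.not_isLeafAt_of_isPrivateNeighbor h ha

theorem eq_of_isPrivateNeighbor_support (hS : IsExtremal G S) {v a v' b g h h₁ h₂ x : V}
    (he : IsUndominatedEdge G S v a v' b g h h₁ h₂) (hx : IsPrivateNeighbor G S h x)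
    (hxv : G.Adj x v) : x = b := by
  rcases he.hasNeighbors.eq_or_eq_or_eq x hxv.symm with rfl | rfl | rfl
  · exact absurd hx (hS.not_isPrivateNeighbor_of_isLeafAt he.isLeafAt)
  · exact absurd rfl (he.isUndominated₂.ne_of_isPrivateNeighbor hx)
  · rfl

theorem not_adj_of_adj_support (hS : IsExtremal G S) {v a v' b g h h₁ h₂ : V}
    (he : IsUndominatedEdge G S v a v' b g h h₁ h₂) (hl : ¬ IsLeafless G S v')
    (hadj : G.Adj h₁ v') : ¬ G.Adj h₂ v' := by
  intro hadj'
  have hn : HasNeighbors G v' v h₁ h₂ := hS.hasNeighbors he.hasNeighbors.adj₂.symm hadj.symm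
    hadj'.symm (he.isUndominated₁.ne_of_isPrivateNeighbor he.isPrivateNeighbor₁).symm
    (he.isUndominated₁.ne_of_isPrivateNeighbor he.isPrivateNeighbor₂).symm
    he.hasNeighbors_support.ne₂₃
  obtain ⟨y, hy⟩ := exists_isLeafAt he.isUndominated₂.1 hl
  rcases hn.eq_or_eq_or_eq y hy.adj.symm with rfl | rfl | rfl
  · exact he.hasNeighbors.ne₁₂ (hy.eq_of_adj a he.hasNeighbors.adj₁ he.isLeafAt.notMem)
  · exact hS.not_isLeafAt_of_isPrivateNeighbor he.isPrivateNeighbor₁ hy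
  · exact hS.not_isLeafAt_of_isPrivateNeighbor he.isPrivateNeighbor₂ hy

theorem exists_isUndominated_of_netDemand_pos (hS : IsExtremal G S) {k b : V}
    (hb : IsPrivateNeighbor G S k b) (h₄ : demandAt G S b ≠ 4) (hpos : 0 < netDemand G S b) :
    IsQuiet G S b ∧ ∃ v, IsUndominated G S v ∧ ¬ IsLeafless G S v ∧ G.Adj b v := by
  rcases hS.demandAt_cases b with h | ⟨h, hv⟩ | ⟨h, -⟩
  · linarith [netDemand_le_demandAt (G := G) (S := S) b]
  · refine ⟨?_, hv⟩
    by_contra hq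
    linarith [hS.netDemand_le_of_not_isQuiet hb hq]
  · exact absurd h h₄

theorem demandAt_ne_four_of_isLeafAt (hS : IsExtremal G S) {v a g g₁ g₂ : V}
    (hv : IsUndominated G S v) (ha : IsLeafAt G S a v) (hn : HasNeighbors G g a g₁ g₂)
    (h₁ : IsPrivateNeighbor G S g g₁) (h₂ : IsPrivateNeighbor G S g g₂)
    (h : demandAt G S g₁ = 4) : demandAt G S g₂ ≠ 4 := by
  intro h'
  obtain ⟨w, hw, hl, hadj⟩ := hS.exists_isLeafless_of_demandAt_eq_four h
  obtain ⟨w', hw', hl', hadj'⟩ := hS.exists_isLeafless_of_demandAt_eq_four h'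
  exact hS.not_isLeafless_of_adj_pair_of_isLeafAt hv ha hn h₁ h₂ hw hw' hadj hadj' hl hl'

theorem netDemand_add_netDemand_le_of_isLeafAt_of_eq_four (hS : IsExtremal G S)
    {v a g g₁ g₂ : V} (hv : IsUndominated G S v) (ha : IsLeafAt G S a v)
    (hn : HasNeighbors G g a g₁ g₂) (h₁ : IsPrivateNeighbor G S g g₁)
    (h₂ : IsPrivateNeighbor G S g g₂) (h : demandAt G S g₁ = 4) :
    netDemand G S g₁ + netDemand G S g₂ ≤ 4 := by
  have h' := hS.demandAt_ne_four_of_isLeafAt hv ha hn h₁ h₂ h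
  have hle := hS.netDemand_le_two_of_demandAt_ne_four h'
  by_cases hq : IsQuiet G S g₁
  · rcases le_or_gt (netDemand G S g₂) 0 with hpos | hpos
    · linarith [hS.netDemand_le_four g₁]
    · obtain ⟨hq', v', hv', hlv', hadj'⟩ := hS.exists_isUndominated_of_netDemand_pos h₂ h' hpos
      obtain ⟨w, hw, hl, hadj⟩ := hS.exists_isLeafless_of_demandAt_eq_four h
      exact absurd hq'
        (hS.not_isQuiet_of_isLeafAt ⟨hn, h₁, h₂, hw, hv', hl, hlv', hadj, hadj'⟩ hv ha hq)
  · linarith [hS.netDemand_le_two_of_not_isQuiet h₁ hq]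

theorem netDemand_add_netDemand_le_of_isLeafAt (hS : IsExtremal G S) {v a g g₁ g₂ : V}
    (hv : IsUndominated G S v) (ha : IsLeafAt G S a v) (hn : HasNeighbors G g a g₁ g₂)
    (h₁ : IsPrivateNeighbor G S g g₁) (h₂ : IsPrivateNeighbor G S g g₂) :
    netDemand G S g₁ + netDemand G S g₂ ≤ 4 := by
  by_cases h : demandAt G S g₁ = 4
  · exact hS.netDemand_add_netDemand_le_of_isLeafAt_of_eq_four hv ha hn h₁ h₂ h
  by_cases h' : demandAt G S g₂ = 4
  · linarith [hS.netDemand_add_netDemand_le_of_isLeafAt_of_eq_four hv ha hn.swap h₂ h₁ h']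
  linarith [hS.netDemand_le_two_of_demandAt_ne_four h, hS.netDemand_le_two_of_demandAt_ne_four h']

theorem netDemand_add_netDemand_le_or_of_eq_four (hS : IsExtremal G S) {v a v' b g h h₁ h₂ : V}
    (he : IsUndominatedEdge G S v a v' b g h h₁ h₂) (h₄ : demandAt G S h₁ = 4) :
    netDemand G S h₁ + netDemand G S h₂ ≤ 2 ∨ IsLink G S b v h₁ ∨
      IsLink G S b v h₂ := by
  obtain ⟨w, hw, hl, hadj⟩ := hS.exists_isLeafless_of_demandAt_eq_four h₄
  obtain ⟨⟨hwv, -⟩, hwv', -⟩ := hS.separated_of_isUndominatedEdge he hw hl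
  by_cases hq : IsQuiet G S h₁
  · exact Or.inr (Or.inl (hS.isLink_of_isQuiet he hw hadj hwv hwv' hq))
  have hle := hS.netDemand_le_two_of_not_isQuiet he.isPrivateNeighbor₁ hq
  rcases le_or_gt (netDemand G S h₂) 0 with hpos | hpos
  · exact Or.inl (by linarith)
  have h₄' := hS.demandAt_ne_four_of_isLeafAt he.isUndominated₁ he.isLeafAt
    he.hasNeighbors_support he.isPrivateNeighbor₁ he.isPrivateNeighbor₂ h₄
  obtain ⟨hq', u, hu, -, hadj'⟩ :=
    hS.exists_isUndominated_of_netDemand_pos he.isPrivateNeighbor₂ h₄' hpos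
  by_cases huv : u = v
  · subst huv
    obtain rfl := hS.eq_of_isPrivateNeighbor_support he he.isPrivateNeighbor₂ hadj'
    exact absurd hl (hS.not_isLeafless_of_adj_support he hw hadj)
  by_cases huv' : u = v'
  · subst huv'
    have := hS.four_le_relief he.isPrivateNeighbor₁ hq fun y q hy hqS hyq =>
      hS.exists_isPrivateNeighbor_pair_of_support he hw hl hadj hadj' hq' hy hqS hyq
    left
    rw [netDemand, h₄]
    linarith [hS.netDemand_le_two_of_demandAt_ne_four h₄']
  · exact Or.inr (Or.inr (hS.isLink_of_isQuiet he.swap hu hadj' huv huv' hq'))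

theorem netDemand_add_netDemand_le_or_of_ne_four (hS : IsExtremal G S) {v a v' b g h h₁ h₂ : V}
    (he : IsUndominatedEdge G S v a v' b g h h₁ h₂) (h₄ : demandAt G S h₁ ≠ 4)
    (h₄' : demandAt G S h₂ ≠ 4) :
    netDemand G S h₁ + netDemand G S h₂ ≤ 2 ∨ IsLink G S b v h₁ ∨
      IsLink G S b v h₂ := by
  have hle := hS.netDemand_le_two_of_demandAt_ne_four h₄
  have hle' := hS.netDemand_le_two_of_demandAt_ne_four h₄'
  rcases le_or_gt (netDemand G S h₁) 0 with hpos | hpos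
  · exact Or.inl (by linarith)
  rcases le_or_gt (netDemand G S h₂) 0 with hpos' | hpos'
  · exact Or.inl (by linarith)
  obtain ⟨hq, w, hw, hlw, hadj⟩ :=
    hS.exists_isUndominated_of_netDemand_pos he.isPrivateNeighbor₁ h₄ hpos
  obtain ⟨hq', u, hu, -, hadj'⟩ :=
    hS.exists_isUndominated_of_netDemand_pos he.isPrivateNeighbor₂ h₄' hpos'
  by_cases hwv : w = v
  · subst hwv
    obtain rfl := hS.eq_of_isPrivateNeighbor_support he he.isPrivateNeighbor₁ hadj
    exact absurd hq' (hS.not_isQuiet_of_adj_support he.swap)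
  by_cases huv : u = v
  · subst huv
    obtain rfl := hS.eq_of_isPrivateNeighbor_support he he.isPrivateNeighbor₂ hadj'
    exact absurd hq (hS.not_isQuiet_of_adj_support he)
  by_cases hwv' : w = v'
  · subst hwv'
    have huv' : u ≠ w := by
      rintro rfl
      exact hS.not_adj_of_adj_support he hlw hadj hadj'
    exact Or.inr (Or.inr (hS.isLink_of_isQuiet he.swap hu hadj' huv huv' hq'))
  · exact Or.inr (Or.inl (hS.isLink_of_isQuiet he hw hadj hwv hwv' hq))

theorem netDemand_add_netDemand_le_or (hS : IsExtremal G S) {v a v' b g h h₁ h₂ : V}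
    (he : IsUndominatedEdge G S v a v' b g h h₁ h₂) :
    netDemand G S h₁ + netDemand G S h₂ ≤ 2 ∨ IsLink G S b v h₁ ∨
      IsLink G S b v h₂ := by
  by_cases h₄ : demandAt G S h₁ = 4
  · exact hS.netDemand_add_netDemand_le_or_of_eq_four he h₄
  by_cases h₄' : demandAt G S h₂ = 4
  · rw [add_comm, or_comm (a := IsLink G S b v h₁)]
    exact hS.netDemand_add_netDemand_le_or_of_eq_four he.swap h₄'
  · exact hS.netDemand_add_netDemand_le_or_of_ne_four he h₄ h₄'

theorem eight_sub_netDemand_le_slack (hS : IsExtremal G S) {v a g g₁ g₂ : V}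
    (hv : IsUndominated G S v) (ha : IsLeafAt G S a v) (hg : g ∈ S)
    (hn : HasNeighbors G g a g₁ g₂) (h₁ : IsPrivateNeighbor G S g g₁)
    (h₂ : IsPrivateNeighbor G S g g₂) :
    8 - (netDemand G S g₁ + netDemand G S g₂) ≤ slack G S g := by
  have hout : ∀ t, G.Adj g t → t ∉ S := fun t => hS.notMem_of_adj_of_isLeafAt ha hg hn.adj₁.symm
  have hpa : ¬ IsPrivateNeighbor G S g a := hS.not_isPrivateNeighbor_of_isLeafAt ha
  have hla : ¬ ∃ b, IsLiveLeaf G S a b := by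
    rintro ⟨b, hb, ⟨k, hk⟩, -⟩
    obtain rfl : b = v := ha.eq_of_adj b hb.adj hk.notMem
    exact hv.2 k hk.adj hk.center_mem
  have hcharge := hn.charge_le (S := S)
  rw [hS.slack_eq_of_forall_adj_notMem hout]
  simp only [hn.reliefPaid_eq, privateCount, hn.sum_isPrivateNeighbor, hpa, h₁, h₂, hla,
    hS.not_isLiveLeaf_of_isPrivateNeighbor h₁, hS.not_isLiveLeaf_of_isPrivateNeighbor h₂,
    load_eq_netDemand (hS.not_isSpecial_of_not_isPrivateNeighbor hout hn.adj₁ hpa h₁),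
    load_eq_netDemand (hS.not_isSpecial_of_not_isPrivateNeighbor hout hn.adj₁ hpa h₂),
    if_true, if_false] at hcharge ⊢
  linarith

theorem four_le_slack (hS : IsExtremal G S) {v g : V} (h : IsLeafSupport G S v g) :
    4 ≤ slack G S g := by
  obtain ⟨hv, hg, a, ha, hag⟩ := h
  obtain ⟨g₁, g₂, hn, h₁, h₂⟩ := hS.exists_isPrivateNeighbor_pair_of_isLeafAt hv ha hg hag
  linarith [hS.eight_sub_netDemand_le_slack hv ha hg hn h₁ h₂,
    hS.netDemand_add_netDemand_le_of_isLeafAt hv ha hn h₁ h₂]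

theorem ten_le_slack_add_slack (hS : IsExtremal G S) {v a v' b g h : V}
    (hv : IsUndominated G S v) (hv' : IsUndominated G S v') (hn : HasNeighbors G v a v' b)
    (ha : IsLeafAt G S a v) (hb : ¬ IsLeafAt G S b v) (hna : HasNeighbors G a v g h)
    (hg : g ∈ S) (hh : h ∈ S) : 10 ≤ slack G S g + slack G S h := by
  obtain ⟨g₁, g₂, hng, hg₁, hg₂⟩ := hS.exists_isPrivateNeighbor_pair_of_isLeafAt hv ha hg hna.adj₂
  obtain ⟨h₁, h₂, hnh, hh₁, hh₂⟩ := hS.exists_isPrivateNeighbor_pair_of_isLeafAt hv ha hh hna.adj₃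
  have hg_slack := hS.eight_sub_netDemand_le_slack hv ha hg hng hg₁ hg₂
  have hh_slack := hS.eight_sub_netDemand_le_slack hv ha hh hnh hh₁ hh₂
  have hg_le := hS.netDemand_add_netDemand_le_of_isLeafAt hv ha hng hg₁ hg₂
  have hh_le := hS.netDemand_add_netDemand_le_of_isLeafAt hv ha hnh hh₁ hh₂
  have not_both {x y : V} (hx : IsPrivateNeighbor G S g x) (hy : IsPrivateNeighbor G S h y) :
      IsLink G S b v x → ¬ IsLink G S b v y :=
    not_isLink_of_isLink hv hna.ne₂₃ hx hy
  rcases hS.netDemand_add_netDemand_le_or ⟨hv, hv', hn, ha, hna, hg, hnh, hh₁, hh₂, hb⟩ with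
    hh_le' | hh_link
  · linarith
  rcases hS.netDemand_add_netDemand_le_or ⟨hv, hv', hn, ha, hna.swap, hh, hng, hg₁, hg₂, hb⟩ with
    hg_le' | hg_link
  · linarith
  have := not_both hg₁ hh₁
  have := not_both hg₁ hh₂
  have := not_both hg₂ hh₁
  have := not_both hg₂ hh₂
  tauto

theorem isPrivate_of_adj_isUndominated (hS : IsExtremal G S) {v t : V}
    (hv : IsUndominated G S v) (hvt : G.Adj v t) (ht : ¬ IsUndominated G S t)
    (hl : ¬ IsLeafAt G S t v) : IsPrivate G S t := by
  have htS : t ∉ S := hv.2 t hvt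
  obtain ⟨u, htu, hu⟩ : ∃ u, G.Adj t u ∧ u ∈ S := by
    by_contra! h
    exact ht ⟨htS, h⟩
  obtain ⟨z, htz, hz, hzv⟩ : ∃ z, G.Adj t z ∧ z ∉ S ∧ z ≠ v := by
    by_contra! h
    exact hl ⟨htS, hv.1, hvt.symm, h⟩
  have hn : HasNeighbors G t v u z := hS.hasNeighbors hvt.symm htu htz
    (by rintro rfl; exact hv.1 hu) hzv.symm (by rintro rfl; exact hz hu)
  refine ⟨u, hu, htS, htu, fun r htr hr => ?_⟩
  rcases hn.eq_or_eq_or_eq r htr with rfl | rfl | rfl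
  · exact absurd hr hv.1
  · rfl
  · exact absurd hr hz

open Classical in
theorem sum_slack_le (hS : IsExtremal G S) {v : V} {s : Finset V}
    (hs : ∀ g ∈ s, IsLeafSupport G S v g) :
    ∑ g ∈ s, slack G S g ≤ ∑ g with IsLeafSupport G S v g, slack G S g :=
  Finset.sum_le_sum_of_subset_of_nonneg
    (fun g hg => Finset.mem_filter.2 ⟨Finset.mem_univ g, hs g hg⟩)
    fun _ hg _ => hS.slack_nonneg (Finset.mem_filter.1 hg).2.mem

theorem demand_mul_privateDegree_eq_of_isLeafless (hS : IsExtremal G S) {v : V}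
    (hv : IsUndominated G S v) (hl : IsLeafless G S v) :
    demand G S v * privateDegree G S v = 12 := by
  obtain ⟨x, y, z, hn⟩ := hS.exists_hasNeighbors v
  have hp {t : V} (hvt : G.Adj v t) : IsPrivate G S t := hS.isPrivate_of_adj_isUndominated hv hvt
    (fun ht => hS.not_adj_of_isLeafless hv ht hl hvt) hl.not_isLeafAt
  rw [demand, if_pos hl, hn.privateDegree_eq, if_pos (hp hn.adj₁), if_pos (hp hn.adj₂),
    if_pos (hp hn.adj₃)]
  norm_num

open Classical in
theorem twelve_le_of_existsUnique_isLeafAt (hS : IsExtremal G S) {v : V}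
    (hv : IsUndominated G S v) (hl : ¬ IsLeafless G S v) (ha : ∃! a, IsLeafAt G S a v) :
    12 ≤ demand G S v * privateDegree G S v +
      ∑ g with IsLeafSupport G S v g, slack G S g := by
  rw [demand, if_neg hl, if_pos ha]
  obtain ⟨a, ha, huniq⟩ := ha
  obtain ⟨g, h, hna, hg, hh⟩ := hS.exists_hasNeighbors_of_isLeafAt ha
  have hg_supp : IsLeafSupport G S v g := ⟨hv, hg, a, ha, hna.adj₂⟩
  have hh_supp : IsLeafSupport G S v h := ⟨hv, hh, a, ha, hna.adj₃⟩
  have hsum := hS.sum_slack_le (v := v) (s := {g, h}) (by simp [hg_supp, hh_supp])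
  rw [Finset.sum_pair hna.ne₂₃] at hsum
  obtain ⟨x, y, hn⟩ := hS.exists_others ha.adj.symm
  have hlx : ¬ IsLeafAt G S x v := fun hx => hn.ne₁₂ (huniq x hx).symm
  have hly : ¬ IsLeafAt G S y v := fun hy => hn.ne₁₃ (huniq y hy).symm
  have hpx (hx : ¬ IsUndominated G S x) := hS.isPrivate_of_adj_isUndominated hv hn.adj₂ hx hlx
  have hpy (hy : ¬ IsUndominated G S y) := hS.isPrivate_of_adj_isUndominated hv hn.adj₃ hy hly
  rw [hn.privateDegree_eq]
  by_cases hx : IsUndominated G S x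
  · have hy : ¬ IsUndominated G S y := fun hy =>
      hn.ne₂₃ (hS.eq_of_adj_isUndominated hv hx hy hn.adj₂ hn.adj₃)
    have := hS.ten_le_slack_add_slack hv hx hn ha hly hna hg hh
    rw [if_pos (hpy hy)]
    split_ifs <;> linarith
  by_cases hy : IsUndominated G S y
  · have := hS.ten_le_slack_add_slack hv hy hn.swap ha hlx hna hg hh
    rw [if_pos (hpx hx)]
    split_ifs <;> linarith
  · rw [if_pos (hpx hx), if_pos (hpy hy)]
    split_ifs <;> linarith [hS.four_le_slack hg_supp, hS.four_le_slack hh_supp]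

theorem ne_of_isLeafAt_of_isLeafAt (hS : IsExtremal G S) {v a a' g g' : V}
    (hv : IsUndominated G S v) (ha : IsLeafAt G S a v) (ha' : IsLeafAt G S a' v) (hne : a' ≠ a)
    (hg : g ∈ S) (hag : G.Adj a g) (hag' : G.Adj a' g') : g' ≠ g := by
  rintro rfl
  obtain ⟨g₁, g₂, hn, h₁, h₂⟩ := hS.exists_isPrivateNeighbor_pair_of_isLeafAt hv ha hg hag
  rcases hn.eq_or_eq_or_eq a' hag'.symm with rfl | rfl | rfl
  · exact hne rfl
  · exact hS.not_isPrivateNeighbor_of_isLeafAt ha' h₁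
  · exact hS.not_isPrivateNeighbor_of_isLeafAt ha' h₂

open Classical in
theorem twelve_le_of_isLeafAt_of_isLeafAt (hS : IsExtremal G S) {v a a' : V}
    (hv : IsUndominated G S v) (ha : IsLeafAt G S a v) (ha' : IsLeafAt G S a' v) (hne : a' ≠ a) :
    12 ≤ ∑ g with IsLeafSupport G S v g, slack G S g := by
  obtain ⟨g, h, hna, hg, hh⟩ := hS.exists_hasNeighbors_of_isLeafAt ha
  obtain ⟨g', _, hna', hg', -⟩ := hS.exists_hasNeighbors_of_isLeafAt ha'
  have hg_supp : IsLeafSupport G S v g := ⟨hv, hg, a, ha, hna.adj₂⟩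
  have hh_supp : IsLeafSupport G S v h := ⟨hv, hh, a, ha, hna.adj₃⟩
  have hg'_supp : IsLeafSupport G S v g' := ⟨hv, hg', a', ha', hna'.adj₂⟩
  have hg'g := hS.ne_of_isLeafAt_of_isLeafAt hv ha ha' hne hg hna.adj₂ hna'.adj₂
  have hg'h := hS.ne_of_isLeafAt_of_isLeafAt hv ha ha' hne hh hna.adj₃ hna'.adj₂
  have hsum := hS.sum_slack_le (v := v) (s := {g', g, h}) (by simp [hg_supp, hh_supp, hg'_supp])
  rw [Finset.sum_insert (by simp [hg'g, hg'h]), Finset.sum_pair hna.ne₂₃] at hsum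
  linarith [hS.four_le_slack hg_supp, hS.four_le_slack hh_supp, hS.four_le_slack hg'_supp]

open Classical in
theorem twelve_le_demand_mul_privateDegree_add (hS : IsExtremal G S) {v : V}
    (hv : IsUndominated G S v) : 12 ≤ demand G S v * privateDegree G S v +
      ∑ g with IsLeafSupport G S v g, slack G S g := by
  by_cases hl : IsLeafless G S v
  · rw [hS.demand_mul_privateDegree_eq_of_isLeafless hv hl]
    linarith [hS.sum_slack_le (v := v) (s := ∅) (by simp), Finset.sum_empty (f := slack G S)]
  by_cases hu : ∃! a, IsLeafAt G S a v
  · exact hS.twelve_le_of_existsUnique_isLeafAt hv hl hu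
  rw [demand, if_neg hl, if_neg hu, zero_mul, zero_add]
  obtain ⟨a, ha⟩ := exists_isLeafAt hv.1 hl
  obtain ⟨a', ha', hne⟩ : ∃ a', IsLeafAt G S a' v ∧ a' ≠ a := by
    by_contra! h
    exact hu ⟨a, ha, h⟩
  exact hS.twelve_le_of_isLeafAt_of_isLeafAt hv ha ha' hne

end IsExtremal

end LeafSupports

section Discharging

variable {V : Type*} {G : SimpleGraph V} {S : Finset V}

theorem sum_sum_filter_eq {α β M : Type*} [Fintype β] [AddCommMonoid M] {s : Finset α}
    {R : α → β → Prop} {Q : β → Prop} [∀ a, DecidablePred (R a)] [DecidablePred Q]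
    (hs : ∀ a b, R a b → a ∈ s) (hR : ∀ a a' b, R a b → R a' b → a = a')
    (hQ : ∀ b, Q b ↔ ∃ a, R a b) (f : β → M) :
    ∑ a ∈ s, ∑ b with R a b, f b = ∑ b with Q b, f b := by
  classical
  rw [← Finset.sum_biUnion fun a _ a' _ hne =>
    Finset.disjoint_filter.2 fun b _ h h' => hne (hR a a' b h h')]
  congr 1
  ext b
  simp only [Finset.mem_biUnion, Finset.mem_filter, Finset.mem_univ, true_and, hQ]
  exact ⟨fun ⟨a, _, h⟩ => ⟨a, h⟩, fun ⟨a, h⟩ => ⟨a, hs a b h, h⟩⟩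

theorem IsPrivateNeighbor.eq {u u' b : V} (h : IsPrivateNeighbor G S u b)
    (h' : IsPrivateNeighbor G S u' b) : u = u' :=
  h'.eq_of_adj u h.adj h.center_mem

theorem IsLeafAt.eq {y b b' : V} (h : IsLeafAt G S y b) (h' : IsLeafAt G S y b') : b = b' :=
  h'.eq_of_adj b h.adj h.base_notMem

theorem IsSpecial.target_mem {k x : V} (h : IsSpecial G S k x) : k ∈ S := by
  obtain ⟨m, b, z, w, v, o, hd⟩ := h
  exact hd.isPrivateNeighbor₁.center_mem

variable [Fintype V]

open Classical in
theorem sum_sum_isPrivateNeighbor (f : V → ℤ) :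
    ∑ u ∈ S, ∑ b with IsPrivateNeighbor G S u b, f b = ∑ b with IsPrivate G S b, f b :=
  sum_sum_filter_eq (R := IsPrivateNeighbor G S) (Q := IsPrivate G S) (fun _ _ h => h.center_mem)
    (fun _ _ _ h h' => h.eq h') (fun _ => Iff.rfl) f

open Classical in
theorem sum_demandAt : ∑ b with IsPrivate G S b, demandAt G S b =
    ∑ v ∈ undominated G S, demand G S v * privateDegree G S v := by
  simp only [demandAt, privateDegree, Finset.mul_sum, mul_one]
  refine Finset.sum_comm' fun b v => ?_
  simp only [Finset.mem_filter, Finset.mem_univ, true_and, mem_undominated, G.adj_comm b v]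
  tauto

open Classical in
theorem sum_relief : ∑ b with IsPrivate G S b, relief G S b = ∑ u ∈ S, reliefPaid G S u := by
  have hleaf : ∑ b with IsPrivate G S b, ∑ y with IsLiveLeaf G S y b, leafRelief G S y =
      ∑ y with ∃ b, IsLiveLeaf G S y b, leafRelief G S y :=
    sum_sum_filter_eq (R := fun b y => IsLiveLeaf G S y b) (Q := fun y => ∃ b, IsLiveLeaf G S y b)
      (fun b _ h => Finset.mem_filter.2 ⟨Finset.mem_univ b, h.isPrivate⟩)
      (fun _ _ _ h h' => h.isLeafAt.eq h'.isLeafAt) (fun _ => Iff.rfl) (leafRelief G S)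
  simp only [relief]
  rw [hleaf]
  simp only [leafRelief, reliefPaid]
  refine Finset.sum_comm' fun y u => ?_
  simp only [Finset.mem_filter, Finset.mem_univ, true_and, G.adj_comm y u]
  tauto

namespace IsExtremal

open Classical in
theorem sum_refund (hS : IsExtremal G S) :
    ∑ u ∈ S, refund G S u = ∑ b with IsPrivate G S b, surcharge G S b := by
  calc ∑ k ∈ S, ∑ x with IsSpecial G S k x, (2 : ℤ) = ∑ x with ∃ k, IsSpecial G S k x, 2 :=
        sum_sum_filter_eq (R := IsSpecial G S) (Q := fun x => ∃ k, IsSpecial G S k x)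
          (fun _ _ h => h.target_mem) (fun _ _ _ h h' => hS.eq_of_isSpecial h h')
          (fun _ => Iff.rfl) fun _ => 2
    _ = ∑ x with ∃ k, IsSpecial G S k x, surcharge G S x := by
        refine Finset.sum_congr rfl fun x hx => ?_
        obtain ⟨k, hk⟩ := (Finset.mem_filter.1 hx).2
        exact (surcharge_eq_two hk).symm
    _ = ∑ b with IsPrivate G S b, surcharge G S b := by
        refine Finset.sum_subset (fun x hx => ?_) fun x _ hx => surcharge_eq_zero fun h =>
          hx (Finset.mem_filter.2 ⟨Finset.mem_univ x, h⟩)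
        obtain ⟨k, hk⟩ := (Finset.mem_filter.1 hx).2
        exact Finset.mem_filter.2 ⟨Finset.mem_univ x, hk.isPrivate⟩

theorem sum_charge (hS : IsExtremal G S) :
    ∑ u ∈ S, charge G S u = ∑ v ∈ undominated G S, demand G S v * privateDegree G S v := by
  simp only [charge, Finset.sum_sub_distrib, Finset.sum_add_distrib, sum_sum_isPrivateNeighbor,
    load, netDemand, hS.sum_refund, sum_relief, sum_demandAt]
  ring

open Classical in
theorem sum_adj_const (hS : IsExtremal G S) (u : V) (c : ℤ) : ∑ t with G.Adj u t, c = 3 * c := by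
  obtain ⟨x, y, z, hn⟩ := hS.exists_hasNeighbors u
  rw [hn.sum_eq fun t ht => (Finset.mem_filter.1 ht).2]
  simp only [Finset.mem_filter, Finset.mem_univ, hn.adj₁, hn.adj₂, hn.adj₃, and_true, if_true]
  ring

open Classical in
theorem sum_centerFlow (hS : IsExtremal G S) : ∑ u ∈ S, centerFlow G S u = 0 := by
  have hreceived : ∑ u ∈ S, ∑ t with G.Adj u t ∧ IsCenter G S t, (4 : ℤ) =
      ∑ t ∈ S with IsCenter G S t, ∑ u with G.Adj t u, 4 := by
    refine Finset.sum_comm' fun u t => ?_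
    simp only [Finset.mem_filter, Finset.mem_univ, true_and, G.adj_comm u t]
    exact ⟨fun ⟨_, h, hc⟩ => ⟨h, hc.1, hc⟩, fun ⟨h, _, hc⟩ => ⟨hc.2 u h, h, hc⟩⟩
  simp only [centerFlow, Finset.sum_sub_distrib, hreceived, hS.sum_adj_const, ← Finset.sum_filter]
  norm_num

theorem eq_of_isLeafSupport (hS : IsExtremal G S) {v v' g : V} (h : IsLeafSupport G S v g)
    (h' : IsLeafSupport G S v' g) : v = v' := by
  obtain ⟨hv, hg, a, ha, hag⟩ := h
  obtain ⟨-, -, a', ha', hag'⟩ := h'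
  obtain ⟨g₁, g₂, hn, h₁, h₂⟩ := hS.exists_isPrivateNeighbor_pair_of_isLeafAt hv ha hg hag
  rcases hn.eq_or_eq_or_eq a' hag'.symm with rfl | rfl | rfl
  · exact ha.eq ha'
  · exact absurd h₁ (hS.not_isPrivateNeighbor_of_isLeafAt ha')
  · exact absurd h₂ (hS.not_isPrivateNeighbor_of_isLeafAt ha')

open Classical in
theorem sum_slack_isLeafSupport_le (hS : IsExtremal G S) :
    ∑ v ∈ undominated G S, ∑ g with IsLeafSupport G S v g, slack G S g ≤
      ∑ u ∈ S, slack G S u := by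
  rw [sum_sum_filter_eq (R := IsLeafSupport G S) (Q := fun g => ∃ v, IsLeafSupport G S v g)
    (fun v g h => mem_undominated.2 h.isUndominated)
    (fun v v' g h h' => hS.eq_of_isLeafSupport h h') fun _ => Iff.rfl]
  refine Finset.sum_le_sum_of_subset_of_nonneg (fun g hg => ?_) fun u hu _ => hS.slack_nonneg hu
  obtain ⟨v, hv⟩ := (Finset.mem_filter.1 hg).2
  exact hv.mem

open Classical in
theorem three_mul_card_undominated_le (hS : IsExtremal G S) :
    3 * ((undominated G S).card : ℤ) ≤ ∑ u ∈ S, (privateCount G S u - innerDegree G S u) := by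
  have hbudget : 4 * ∑ u ∈ S, (privateCount G S u - innerDegree G S u) =
      ∑ u ∈ S, slack G S u + ∑ u ∈ S, charge G S u + ∑ u ∈ S, centerFlow G S u := by
    rw [Finset.mul_sum, ← Finset.sum_add_distrib, ← Finset.sum_add_distrib]
    refine Finset.sum_congr rfl fun u _ => ?_
    rw [slack]
    ring
  have hneed : ∑ _v ∈ undominated G S, (12 : ℤ) ≤
      ∑ v ∈ undominated G S, (demand G S v * privateDegree G S v +
        ∑ g with IsLeafSupport G S v g, slack G S g) :=
    Finset.sum_le_sum fun v hv => hS.twelve_le_demand_mul_privateDegree_add (mem_undominated.1 hv)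
  rw [Finset.sum_const, nsmul_eq_mul, Finset.sum_add_distrib] at hneed
  linarith [hS.sum_charge, hS.sum_centerFlow, hS.sum_slack_isLeafSupport_le]

open Classical in
theorem innerDegree_add_of_notMem (hS : IsExtremal G S) {t : V} (ht : t ∉ S) :
    innerDegree G S t + (if IsPrivate G S t then 1 else 0) +
      2 * (if IsUndominated G S t then 1 else 0) = 2 := by
  obtain ⟨x, hx, htx⟩ := hS.isRestrained t ht
  obtain ⟨y, z, hn⟩ := hS.exists_others htx
  have hU : IsUndominated G S t ↔ y ∉ S ∧ z ∉ S := by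
    refine ⟨fun h => ⟨h.2 y hn.adj₂, h.2 z hn.adj₃⟩, fun ⟨hy, hz⟩ => ⟨ht, fun u hu => ?_⟩⟩
    rcases hn.eq_or_eq_or_eq u hu with rfl | rfl | rfl <;> assumption
  have hP : IsPrivate G S t ↔ (y ∈ S ∧ z ∉ S) ∨ (y ∉ S ∧ z ∈ S) := by
    constructor
    · rintro ⟨u, hu⟩
      have := hn.ne₂₃
      have := hu.eq_of_adj y hn.adj₂
      have := hu.eq_of_adj z hn.adj₃
      have := hn.eq_or_eq_or_eq u hu.adj
      have := hu.center_mem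
      grind
    · rintro (⟨hy, hz⟩ | ⟨hy, hz⟩)
      · refine ⟨y, hy, ht, hn.adj₂, fun u hu huS => ?_⟩
        rcases hn.eq_or_eq_or_eq u hu with rfl | rfl | rfl <;> trivial
      · refine ⟨z, hz, ht, hn.adj₃, fun u hu huS => ?_⟩
        rcases hn.eq_or_eq_or_eq u hu with rfl | rfl | rfl <;> trivial
  rw [hn.innerDegree_eq]
  by_cases hy : y ∈ S <;> by_cases hz : z ∈ S <;> simp [hU, hP, hy, hz, hx]

theorem sum_innerDegree (hS : IsExtremal G S) : ∑ t, innerDegree G S t = 3 * (S.card : ℤ) := by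
  classical
  have hcomm : ∑ t, innerDegree G S t = ∑ u ∈ S, ∑ t with G.Adj u t, (1 : ℤ) := by
    refine Finset.sum_comm' fun t u => ?_
    simp only [Finset.mem_filter, Finset.mem_univ, true_and, G.adj_comm t u]
    tauto
  simp only [hcomm, hS.sum_adj_const]
  simp [mul_comm]

theorem sum_compl_innerDegree (hS : IsExtremal G S) [DecidableEq V] :
    ∑ t ∈ Sᶜ, innerDegree G S t + ∑ u ∈ S, privateCount G S u + 2 * (undominated G S).card =
      2 * (Fintype.card V - S.card : ℤ) := by
  classical
  have hprivate : ∑ u ∈ S, privateCount G S u = ∑ t ∈ Sᶜ, if IsPrivate G S t then 1 else 0 := by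
    simp only [privateCount, sum_sum_isPrivateNeighbor, ← Finset.sum_filter]
    congr 1
    ext t
    simp only [Finset.mem_filter, Finset.mem_univ, true_and, Finset.mem_compl, iff_and_self]
    exact fun ⟨_, h⟩ => h.notMem
  have hundominated : ((undominated G S).card : ℤ) =
      ∑ t ∈ Sᶜ, if IsUndominated G S t then 1 else 0 := by
    rw [← Finset.sum_filter, Finset.card_eq_sum_ones, Nat.cast_sum, Nat.cast_one]
    congr 1
    ext t
    simp only [mem_undominated, Finset.mem_filter, Finset.mem_compl]
    exact ⟨fun h => ⟨h.1, h⟩, And.right⟩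
  have hsum := Finset.sum_congr rfl fun t (ht : t ∈ Sᶜ) =>
    hS.innerDegree_add_of_notMem (Finset.mem_compl.1 ht)
  rw [Finset.sum_add_distrib, Finset.sum_add_distrib, ← Finset.mul_sum, ← hprivate,
    ← hundominated] at hsum
  rw [hsum, Finset.sum_const, nsmul_eq_mul, Finset.card_compl,
    Nat.cast_sub (Finset.card_le_univ S), mul_comm]

theorem five_mul_card_add_card_undominated_le (hS : IsExtremal G S) :
    5 * (S.card + (undominated G S).card) ≤ 2 * Fintype.card V := by
  classical
  have hmain := hS.three_mul_card_undominated_le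
  rw [Finset.sum_sub_distrib] at hmain
  have := hS.sum_innerDegree
  rw [← Finset.sum_add_sum_compl S] at this
  have := hS.sum_compl_innerDegree
  omega

end IsExtremal

end Discharging

section Completion

variable {V : Type*} {G : SimpleGraph V} {S : Finset V}

theorem isRestrainedDomSet_coe_iff :
    IsRestrainedDomSet G (S : Set V) ↔ IsRestrained G S ∧ ∀ v, ¬ IsUndominated G S v := by
  simp only [IsRestrainedDomSet, IsRestrained, IsUndominated, SetLike.mem_coe, not_and, not_forall,
    not_not, exists_prop, and_comm]

theorem exists_hasNeighbors_of_ncard_eq_three {v : V} (h : (G.neighborSet v).ncard = 3) :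
    ∃ x y z, HasNeighbors G v x y z := by
  obtain ⟨x, y, z, hxy, hxz, hyz, hN⟩ := Set.ncard_eq_three.1 h
  have hadj (t : V) : G.Adj v t ↔ t = x ∨ t = y ∨ t = z := by
    rw [← SimpleGraph.mem_neighborSet, hN]
    simp
  exact ⟨x, y, z, hxy, hxz, hyz, by simp [hadj], by simp [hadj], by simp [hadj],
    fun t ht => (hadj t).1 ht⟩

/-- Add `v` itself if it is leafless; otherwise add a leaf at `v`, whose only neighbour outside
`S` is `v`. -/
theorem IsRestrained.exists_insert [DecidableEq V] (hS : IsRestrained G S)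
    (hG : ∀ v x, ∃ u, G.Adj v u ∧ u ≠ x) {v : V} (hv : IsUndominated G S v) :
    ∃ a ∉ S, (a = v ∨ G.Adj v a) ∧ IsRestrained G (insert a S) := by
  have isRestrained_insert {a : V} (ha : ∀ t ∉ insert a S, G.Adj t a →
      ∃ u ∉ insert a S, G.Adj t u) : IsRestrained G (insert a S) := by
    intro t ht
    obtain ⟨u, hu, htu⟩ := hS t fun h => ht (Finset.mem_insert_of_mem h)
    rcases eq_or_ne u a with rfl | hua
    · exact ha t ht htu
    · exact ⟨u, by simp [hu, hua], htu⟩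
  by_cases hl : IsLeafless G S v
  · refine ⟨v, hv.1, Or.inl rfl, isRestrained_insert fun t ht htv => ?_⟩
    obtain ⟨z, htz, hz, hzv⟩ := hl t htv.symm fun h => ht (Finset.mem_insert_of_mem h)
    exact ⟨z, by simp [hz, hzv], htz⟩
  · obtain ⟨a, ha⟩ := exists_isLeafAt hv.1 hl
    refine ⟨a, ha.notMem, Or.inr ha.adj.symm, isRestrained_insert fun t ht hta => ?_⟩
    obtain rfl := ha.eq_of_adj t hta.symm fun h => ht (Finset.mem_insert_of_mem h)
    obtain ⟨z, htz, hza⟩ := hG t a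
    exact ⟨z, by simp [hv.2 z htz, hza], htz⟩

variable [Fintype V]

theorem card_undominated_insert_lt [DecidableEq V] {v a : V} (hv : IsUndominated G S v)
    (ha : a = v ∨ G.Adj v a) :
    (undominated G (insert a S)).card < (undominated G S).card := by
  refine Finset.card_lt_card ((Finset.ssubset_iff_of_subset fun t ht => ?_).2
    ⟨v, mem_undominated.2 hv, fun h => ?_⟩)
  · obtain ⟨htS, hdom⟩ := mem_undominated.1 ht
    exact mem_undominated.2 ⟨fun h => htS (Finset.mem_insert_of_mem h),
      fun u hu h => hdom u hu (Finset.mem_insert_of_mem h)⟩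
  · obtain ⟨hvS, hdom⟩ := mem_undominated.1 h
    rcases ha with rfl | hva
    · exact hvS (Finset.mem_insert_self a S)
    · exact hdom a hva (Finset.mem_insert_self a S)

theorem IsRestrained.restrainedDominationNumber_le (hS : IsRestrained G S)
    (hG : ∀ v x, ∃ u, G.Adj v u ∧ u ≠ x) :
    restrainedDominationNumber G ≤ S.card + (undominated G S).card := by
  classical
  induction hn : (undominated G S).card using Nat.strong_induction_on generalizing S with
  | _ n ih =>
    by_cases hU : ∃ v, IsUndominated G S v
    · obtain ⟨v, hv⟩ := hU
      obtain ⟨a, ha, hav, hSa⟩ := hS.exists_insert hG hv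
      have hlt := card_undominated_insert_lt hv hav
      have := ih _ (hn ▸ hlt) hSa rfl
      rw [Finset.card_insert_of_notMem ha] at this
      omega
    · have hdom : IsRestrainedDomSet G (S : Set V) :=
        isRestrainedDomSet_coe_iff.2 ⟨hS, not_exists.1 hU⟩
      have hle : restrainedDominationNumber G ≤ S.card :=
        Nat.sInf_le ⟨S, hdom, Set.ncard_coe_finset S⟩
      exact hle.trans (Nat.le_add_right _ _)

theorem exists_card_eq_restrainedDominationNumber (G : SimpleGraph V) :
    ∃ S : Finset V, IsRestrained G S ∧ (∀ v, ¬ IsUndominated G S v) ∧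
      S.card = restrainedDominationNumber G := by
  classical
  have hne : {n | ∃ S : Set V, IsRestrainedDomSet G S ∧ S.ncard = n}.Nonempty :=
    ⟨_, Set.univ, ⟨fun v hv => absurd (Set.mem_univ v) hv,
      fun v hv => absurd (Set.mem_univ v) hv⟩, rfl⟩
  obtain ⟨S, hS, hcard⟩ := Nat.sInf_mem hne
  rw [← Set.coe_toFinset S] at hS hcard
  obtain ⟨hrestrained, hdominating⟩ := isRestrainedDomSet_coe_iff.1 hS
  exact ⟨S.toFinset, hrestrained, hdominating, (Set.ncard_coe_finset _).symm.trans hcard⟩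

theorem five_mul_restrainedDominationNumber_le (hG : ∀ v, (G.neighborSet v).ncard = 3) :
    5 * restrainedDominationNumber G ≤ 2 * Fintype.card V := by
  have hcubic (v : V) := exists_hasNeighbors_of_ncard_eq_three (hG v)
  obtain ⟨S, hS⟩ := exists_isExtremal hcubic
  have hle := hS.isRestrained.restrainedDominationNumber_le fun v a => by
    obtain ⟨x, y, z, hn⟩ := hcubic v
    rcases eq_or_ne x a with rfl | hxa
    · exact ⟨y, hn.adj₂, hn.ne₁₂.symm⟩
    · exact ⟨x, hn.adj₁, hxa⟩
  linarith [hS.five_mul_card_add_card_undominated_le]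

end Completion

section Petersen

/-- The Petersen graph, as the Kneser graph of the `2`-subsets of a `5`-set. -/
def petersenGraph : SimpleGraph {s : Finset (Fin 5) // s.card = 2} where
  Adj s t := Disjoint s.1 t.1
  symm := ⟨fun _ _ h => h.symm⟩
  loopless := ⟨by decide +kernel⟩

instance petersenGraph.instDecidableRelAdj : DecidableRel petersenGraph.Adj :=
  fun s t => inferInstanceAs (Decidable (Disjoint s.1 t.1))

theorem card_petersenGraph : Fintype.card {s : Finset (Fin 5) // s.card = 2} = 10 := by
  decide +kernel

theorem ncard_neighborSet_petersenGraph (s : {s : Finset (Fin 5) // s.card = 2}) :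
    (petersenGraph.neighborSet s).ncard = 3 := by
  rw [Set.ncard_eq_toFinset_card']
  revert s
  decide +kernel

theorem IsRestrained.exists_isUndominated_petersenGraph
    {S : Finset {s : Finset (Fin 5) // s.card = 2}} (hS : IsRestrained petersenGraph S)
    (hcard : S.card ≤ 3) : ∃ v, IsUndominated petersenGraph S v := by
  have isolated_or_undominated : ∀ S : Finset {s : Finset (Fin 5) // s.card = 2}, S.card ≤ 3 →
      (∃ v ∉ S, ∀ u ∉ S, ¬ Disjoint v.1 u.1) ∨ ∃ v ∉ S, ∀ u, Disjoint v.1 u.1 → u ∉ S := by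
    decide +kernel
  rcases isolated_or_undominated S hcard with ⟨v, hv, hisolated⟩ | hundominated
  · obtain ⟨u, hu, hvu⟩ := hS v hv
    exact absurd hvu (hisolated u hu)
  · exact hundominated

theorem four_le_restrainedDominationNumber_petersenGraph :
    4 ≤ restrainedDominationNumber petersenGraph := by
  obtain ⟨S, hrestrained, hdominating, hcard⟩ :=
    exists_card_eq_restrainedDominationNumber petersenGraph
  by_contra! hlt
  obtain ⟨v, hv⟩ := hrestrained.exists_isUndominated_petersenGraph (by omega)
  exact hdominating v hv

end Petersen

/-- `2/5` is the least real constant `c` such that every finite cubic simple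
graph `G` satisfies `γ_r(G) ≤ c · |V(G)|`. -/
theorem isLeast_restrainedDomination_cubic_constant :
    IsLeast {c : ℝ | ∀ (V : Type) [Fintype V] (G : SimpleGraph V),
      (∀ v : V, (G.neighborSet v).ncard = 3) →
        (restrainedDominationNumber G : ℝ) ≤ c * Fintype.card V} (2 / 5) := by
  constructor
  · intro V _ G hG
    have h : (5 * restrainedDominationNumber G : ℝ) ≤ 2 * Fintype.card V := by
      exact_mod_cast five_mul_restrainedDominationNumber_le hG
    linarith
  · intro c hc
    have hle := hc _ petersenGraph ncard_neighborSet_petersenGraph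
    have hge : (4 : ℝ) ≤ restrainedDominationNumber petersenGraph := by
      exact_mod_cast four_le_restrainedDominationNumber_petersenGraph
    rw [card_petersenGraph] at hle
    norm_num at hle
    linarith
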